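/- For each m ∈ ℕ there is a constant c(m) > 0 such that for all d, n ∈ ℕ and every F ∈ 𝔉_d^s one has ρ_m(F^n, e(nF)) ≤ c(m) · n^{−1/2}. -/

import Mathlib

open MeasureTheory RealInnerProductSpace
open scoped ENNReal

noncomputable section

abbrev Euc (d : ℕ) := EuclideanSpace ℝ (Fin d)

/-- Convolution of two measures on an additive structure. -/
def mconv {α : Type*} [MeasurableSpace α] [Add α] (μ ν : Measure α) : Measure α :=
  (μ.prod ν).map (fun p => p.1 + p.2)

/-- Convolution power `μ^{*n}`, with `μ^{*0}` the Dirac measure at `0`. -/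
def convPow {α : Type*} [MeasurableSpace α] [AddMonoid α] (μ : Measure α) : ℕ → Measure α
  | 0 => Measure.dirac 0
  | n + 1 => mconv (convPow μ n) μ

/-- Convolution product of a finite family of measures. -/
def convProd {α : Type*} [MeasurableSpace α] [AddMonoid α] :
    ∀ {n : ℕ}, (Fin n → Measure α) → Measure α
  | 0, _ => Measure.dirac 0
  | n + 1, G => mconv (convProd (fun i : Fin n => G i.castSucc)) (G (Fin.last n))

/-- The compound Poisson measure `e(a·μ) = e^{-a} ∑_k a^k μ^{*k}/k!`. -/
def cpois {α : Type*} [MeasurableSpace α] [AddMonoid α] (a : ℝ) (μ : Measure α) : Measure α :=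
  Measure.sum fun k : ℕ =>
    (ENNReal.ofReal (Real.exp (-a) * a ^ k / k.factorial)) • convPow μ k

/-- A measure is symmetric if it is invariant under `x ↦ -x`. -/
def IsSymmMeasure {d : ℕ} (μ : Measure (Euc d)) : Prop :=
  μ.map (fun x => -x) = μ

/-- Characteristic function of a measure on `ℝ^d`. -/
def charFn {d : ℕ} (μ : Measure (Euc d)) (t : Euc d) : ℂ :=
  ∫ x, Complex.exp ((⟪t, x⟫ : ℂ) * Complex.I) ∂μ

/-- Characteristic function of a measure on `ℝ`. -/
def charFn1 (μ : Measure ℝ) (t : ℝ) : ℂ :=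
  ∫ x, Complex.exp (((t * x : ℝ) : ℂ) * Complex.I) ∂μ

/-- Convex polyhedra determined by the directions `t 1, …, t m`. -/
def polyhedraOn {d m : ℕ} (t : Fin m → Euc d) : Set (Set (Euc d)) :=
  {X | ∃ a b : Fin m → EReal,
    X = {x | ∀ j, a j ≤ ((⟪x, t j⟫ : ℝ) : EReal) ∧ ((⟪x, t j⟫ : ℝ) : EReal) ≤ b j}}

/-- The collection `𝔛_m` of convex polyhedra determined by `m` pairs of parallel hyperplanes. -/
def polyhedra (d m : ℕ) : Set (Set (Euc d)) :=
  {X | ∃ t : Fin m → Euc d, X ∈ polyhedraOn t}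

/-- The distance `ρ_m(G,H) = sup_{X ∈ 𝔛_m} |G{X} - H{X}|`. -/
def rhoPoly {d : ℕ} (m : ℕ) (G H : Measure (Euc d)) : ℝ :=
  ⨆ X ∈ polyhedra d m, |(G X).toReal - (H X).toReal|

/-- The Lévy concentration function `Q(μ, b) = sup_x μ[x, x+b]`. -/
def concFn (μ : Measure ℝ) (b : ℝ) : ℝ :=
  ⨆ x : ℝ, (μ (Set.Icc x (x + b))).toReal

/-- `q(H, X) = inf_{‖t‖=1} Q(𝓛(⟨ξ,t⟩), λ{⟨x,t⟩ : x ∈ X})` where `H = 𝓛(ξ)`. -/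
def qFn {d : ℕ} (H : Measure (Euc d)) (X : Set (Euc d)) : ℝ :=
  ⨅ t ∈ {t : Euc d | ‖t‖ = 1},
    concFn (H.map fun x => ⟪x, t⟫) (volume ((fun x => ⟪x, t⟫) '' X)).toReal

/-- The uniform (Kolmogorov) distance on `ℝ^d`. -/
def kolmDist {d : ℕ} (G H : Measure (Euc d)) : ℝ :=
  ⨆ x : Euc d, |(G {y | ∀ i, y i ≤ x i}).toReal - (H {y | ∀ i, y i ≤ x i}).toReal|

/-- The uniform (Kolmogorov) distance on `ℝ`. -/
def kolmDist1 (G H : Measure ℝ) : ℝ :=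
  ⨆ x : ℝ, |(G (Set.Iic x)).toReal - (H (Set.Iic x)).toReal|

end

/-!
Convolution commutes with the additive map `x ↦ (⟪x, t j⟫)_j`, under which a polyhedron is the
preimage of a box in `ℝ^m`. So the claim is about `F` on `ℝ^m`, and the dimension `d` disappears.

Write `T μ f x = ∫ f (x + z) dμ(z)`, an operator on bounded measurable functions. Then
`T (e(nF)) = T (e(F)) ^ n` with `T (e(F)) = exp (T F - 1)`, so `T F - T (e(F))` is dominated by
`(T F - 1) ^ 2`, and a telescoping sum reduces the claim to
`‖(T F - 1) ^ 2 (T V) ^ (4 r) φ‖ = O(r ^ (-3/2))` for `φ` the indicator of a box smoothed at the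
scale of the median of `F`, where `V` is `F` or `e(F)`. Smoothing costs `O(n ^ (-1/2))`, since
`V ^ n` does not concentrate at that scale.

Such decay comes from the bound
`|∫ g(z) ((T V) ^ n f)(x + z) dF(z)| ≤ ‖f‖ (∫ g² dF / (lam (n + 1))) ^ (1/2)`
for `lam • F ≤ V` and `∫ g dF = 0`. With `g` linear on a bounded symmetric set `A` it shows that
each derivative gains `n ^ (-1/2)` when measured in the covariance of `F` on `A`; by symmetry the
first order terms of a Taylor expansion vanish, so each factor `T F - 1`, restricted to `A`, gains
`n ^ (-1)`. To handle unbounded `F`, split `ℝ^m` into symmetric cells bounded by dyadic quantiles of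
the coordinates. Exchanging a cell `A` of mass `p` for the central cell `Z` is convolution with
`g = 1_A - (p / F Z) 1_Z`, of mean zero and `∫ g² dF ≤ 3 p`, so it gains `(p / n) ^ (1/2)` by the
bound above. It also gains `1 / n`: by the Taylor expansion on the box smoothed at the scale of `A`,
while the smoothing error `(p n) ^ (-1/2)` is compensated by the gain `(p / n) ^ (1/2)`. Two
exchanges, of masses `p` and `q`, thus gain `(p q) ^ (1/4) n ^ (-3/2)`, which is summable over all
pairs of cells.
-/

noncomputable section

/-! ### Bounded measurable functions and convolution operators -/

/-- The measurable functions, as a subspace of `ℓ^∞(α)`. -/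
def bddMeasSubmodule (α : Type*) [MeasurableSpace α] : Submodule ℝ (lp (fun _ : α => ℝ) ∞) where
  carrier := {f | Measurable (f : α → ℝ)}
  add_mem' hf hg := Measurable.add hf hg
  zero_mem' := measurable_const
  smul_mem' c _ hf := Measurable.const_smul hf c

/-- The space of bounded measurable real functions on `α`, with the supremum norm inherited from
`ℓ^∞(α)`. -/
def BddMeas (α : Type*) [MeasurableSpace α] : Type _ := bddMeasSubmodule α

namespace BddMeas

section
variable {α : Type*} [MeasurableSpace α]

instance : NormedAddCommGroup (BddMeas α) :=
  inferInstanceAs (NormedAddCommGroup (bddMeasSubmodule α))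

instance : NormedSpace ℝ (BddMeas α) := inferInstanceAs (NormedSpace ℝ (bddMeasSubmodule α))

instance : FunLike (BddMeas α) α ℝ where
  coe f := (f.1 : α → ℝ)
  coe_injective _ _ h := Subtype.ext (lp.ext h)

/-- The element of `BddMeas α` given by a measurable function with an explicit bound. -/
def mk' (f : α → ℝ) (hf : Measurable f) (c : ℝ) (hc : ∀ x, |f x| ≤ c) : BddMeas α :=
  ⟨⟨f, memℓp_infty ⟨c, by rintro _ ⟨x, rfl⟩; exact hc x⟩⟩, hf⟩

@[ext] lemma ext {f g : BddMeas α} (h : ∀ x, f x = g x) : f = g := DFunLike.ext f g h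

@[simp] lemma sub_apply (f g : BddMeas α) (x : α) : (f - g) x = f x - g x := rfl
@[simp] lemma smul_apply (c : ℝ) (f : BddMeas α) (x : α) : (c • f) x = c * f x := rfl

lemma measurable (f : BddMeas α) : Measurable f := f.2

lemma abs_apply_le_norm (f : BddMeas α) (x : α) : |f x| ≤ ‖f‖ :=
  lp.norm_apply_le_norm ENNReal.top_ne_zero f.1 x

/-- Evaluation at a point, as a continuous linear functional. -/
def evalCLM (x : α) : BddMeas α →L[ℝ] ℝ :=
  LinearMap.mkContinuous
    { toFun := fun f => f x
      map_add' := fun _ _ => rfl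
      map_smul' := fun _ _ => rfl }
    1 fun f => (f.abs_apply_le_norm x).trans_eq (one_mul _).symm

@[simp] lemma sum_apply {ι : Type*} (s : Finset ι) (f : ι → BddMeas α) (x : α) :
    (∑ i ∈ s, f i) x = ∑ i ∈ s, f i x :=
  map_sum (evalCLM x).toLinearMap f s

lemma abs_apply_le {f : BddMeas α} {c : ℝ} (hf : ‖f‖ ≤ c) (x : α) : |f x| ≤ c :=
  (abs_apply_le_norm f x).trans hf

lemma norm_le {f : BddMeas α} {c : ℝ} (hc : 0 ≤ c) (h : ∀ x, |f x| ≤ c) : ‖f‖ ≤ c :=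
  lp.norm_le_of_forall_le hc h

lemma norm_le_of_nonempty [Nonempty α] {f : BddMeas α} {c : ℝ} (h : ∀ x, |f x| ≤ c) : ‖f‖ ≤ c :=
  lp.norm_le_of_forall_le' c h

lemma integrable_comp {Ω : Type*} [MeasurableSpace Ω] (f : BddMeas α) (μ : Measure Ω)
    [IsFiniteMeasure μ] {φ : Ω → α} (hφ : Measurable φ) : Integrable (fun ω => f (φ ω)) μ :=
  .of_bound (f.measurable.comp hφ).aestronglyMeasurable ‖f‖
    (.of_forall fun ω => f.abs_apply_le_norm (φ ω))

lemma abs_integral_comp_le {Ω : Type*} [MeasurableSpace Ω] (f : BddMeas α) (μ : Measure Ω)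
    [IsFiniteMeasure μ] (φ : Ω → α) : |∫ ω, f (φ ω) ∂μ| ≤ ‖f‖ * μ.real Set.univ :=
  norm_integral_le_of_norm_le_const (f := fun ω => f (φ ω))
    (.of_forall fun ω => f.abs_apply_le_norm (φ ω))

/-- The indicator function of a measurable set. -/
def indicator (S : Set α) (hS : MeasurableSet S) : BddMeas α :=
  mk' (S.indicator 1) (measurable_one.indicator hS) 1 fun x => by
    by_cases h : x ∈ S <;> simp [h]

lemma indicator_apply (S : Set α) (hS : MeasurableSet S) (x : α) :
    indicator S hS x = S.indicator 1 x := rfl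

lemma norm_indicator_le (S : Set α) (hS : MeasurableSet S) : ‖indicator S hS‖ ≤ 1 :=
  norm_le zero_le_one fun x => by by_cases h : x ∈ S <;> simp [indicator_apply, h]

end

end BddMeas

section
variable {α : Type*} [MeasurableSpace α] [AddCommMonoid α] [MeasurableAdd₂ α]

/-- The operator `f ↦ (x ↦ ∫ f (x + z) dμ(z))` on bounded measurable functions. It turns
convolution of measures into composition. -/
def convOp (μ : Measure α) [IsFiniteMeasure μ] : BddMeas α →L[ℝ] BddMeas α :=
  LinearMap.mkContinuous
    { toFun := fun f => .mk' (fun x => ∫ z, f (x + z) ∂μ)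
        (StronglyMeasurable.integral_prod_right (f := fun x z => f (x + z))
          (f.measurable.comp measurable_add).stronglyMeasurable).measurable
        (‖f‖ * μ.real Set.univ) fun _ => f.abs_integral_comp_le μ _
      map_add' := fun f g => BddMeas.ext fun x =>
        integral_add (f.integrable_comp μ (measurable_const_add x))
          (g.integrable_comp μ (measurable_const_add x))
      map_smul' := fun c f => BddMeas.ext fun x => integral_const_mul c _ }
    (μ.real Set.univ) fun f => BddMeas.norm_le (by positivity) fun _ =>
      (f.abs_integral_comp_le μ _).trans_eq (mul_comm _ _)

lemma convOp_apply (μ : Measure α) [IsFiniteMeasure μ] (f : BddMeas α) (x : α) :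
    convOp μ f x = ∫ z, f (x + z) ∂μ := rfl

lemma norm_convOp_apply_le (μ : Measure α) [IsFiniteMeasure μ] (f : BddMeas α) :
    ‖convOp μ f‖ ≤ μ.real Set.univ * ‖f‖ :=
  BddMeas.norm_le (by positivity) fun _ => (f.abs_integral_comp_le μ _).trans_eq (mul_comm _ _)

lemma norm_convOp_prob_apply_le (μ : Measure α) [IsProbabilityMeasure μ] (f : BddMeas α) :
    ‖convOp μ f‖ ≤ ‖f‖ := by
  simpa using norm_convOp_apply_le μ f

lemma commute_convOp (μ ν : Measure α) [IsFiniteMeasure μ] [IsFiniteMeasure ν] :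
    Commute (convOp μ) (convOp ν) := by
  ext f x
  change ∫ z, ∫ w, f (x + z + w) ∂ν ∂μ = ∫ w, ∫ z, f (x + w + z) ∂μ ∂ν
  rw [integral_integral_swap
    (f.integrable_comp (μ.prod ν) (φ := fun p => x + p.1 + p.2) (by fun_prop))]
  simp only [add_right_comm]

instance (μ ν : Measure α) [IsProbabilityMeasure μ] [IsProbabilityMeasure ν] :
    IsProbabilityMeasure (mconv μ ν) :=
  inferInstanceAs (IsProbabilityMeasure (μ.conv ν))

instance (μ : Measure α) [IsProbabilityMeasure μ] (n : ℕ) : IsProbabilityMeasure (convPow μ n) := by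
  induction n with
  | zero => exact inferInstanceAs (IsProbabilityMeasure (Measure.dirac 0))
  | succ n ih => exact inferInstanceAs (IsProbabilityMeasure (mconv (convPow μ n) μ))

lemma convOp_dirac_zero : convOp (Measure.dirac (0 : α)) = 1 := by
  ext f x
  change ∫ z, f (x + z) ∂Measure.dirac 0 = f x
  rw [integral_dirac' (fun z => f (x + z)) _
    (f.measurable.comp (measurable_const_add x)).stronglyMeasurable, add_zero]

lemma convOp_mconv (μ ν : Measure α) [IsProbabilityMeasure μ] [IsProbabilityMeasure ν] :
    convOp (mconv μ ν) = convOp μ * convOp ν := by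
  ext f x
  change ∫ z, f (x + z) ∂μ.conv ν = ∫ z, ∫ w, f (x + z + w) ∂ν ∂μ
  rw [integral_conv (f.integrable_comp (μ.conv ν) (measurable_const_add x))]
  simp only [add_assoc]

lemma convOp_convPow (μ : Measure α) [IsProbabilityMeasure μ] (n : ℕ) :
    convOp (convPow μ n) = convOp μ ^ n := by
  induction n with
  | zero => exact convOp_dirac_zero
  | succ n ih => rw [pow_succ, ← ih, ← convOp_mconv]; rfl

lemma convOp_pow_apply (μ : Measure α) [IsProbabilityMeasure μ] (n : ℕ) (f : BddMeas α) (x : α) :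
    (convOp μ ^ n) f x = ∫ w, f (x + w) ∂convPow μ n := by
  rw [← convOp_convPow]; rfl

lemma norm_convOp_pow_apply_le (μ : Measure α) [IsProbabilityMeasure μ] (n : ℕ) (f : BddMeas α) :
    ‖(convOp μ ^ n) f‖ ≤ ‖f‖ := by
  rw [← convOp_convPow]
  exact norm_convOp_prob_apply_le _ f

end

/-! ### A moment inequality for convolution powers -/

section
variable {β : Type*} [MeasurableSpace β] [AddCommMonoid β] [MeasurableAdd₂ β]
  {μ ν : Measure β} [IsProbabilityMeasure μ] [IsProbabilityMeasure ν] {φ : β →+ ℝ}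

lemma memLp_two_mconv (hφ : Measurable φ) (hμ : MemLp φ 2 μ) (hν : MemLp φ 2 ν) :
    MemLp φ 2 (mconv μ ν) := by
  refine (memLp_map_measure_iff hφ.aestronglyMeasurable (by fun_prop)).2 ?_
  simp only [Function.comp_def, map_add]
  exact (hμ.comp_fst ν).add (hν.comp_snd μ)

lemma integral_sq_mconv_addMonoidHom (hφ : Measurable φ) (hμ : MemLp φ 2 μ) (hν : MemLp φ 2 ν)
    (h0 : ∫ x, φ x ∂ν = 0) :
    ∫ x, φ x ^ 2 ∂mconv μ ν = ∫ x, φ x ^ 2 ∂μ + ∫ x, φ x ^ 2 ∂ν := by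
  have hinner (x : β) : ∫ y, φ (x + y) ^ 2 ∂ν = φ x ^ 2 + ∫ y, φ y ^ 2 ∂ν := by
    simp only [map_add, add_sq]
    have hlin := (hν.integrable one_le_two).const_mul (2 * φ x)
    have hsq := hν.integrable_sq
    rw [integral_add (by fun_prop) hsq, integral_add (by fun_prop) hlin, integral_const_mul, h0]
    simp
  change ∫ x, φ x ^ 2 ∂μ.conv ν = _
  rw [integral_conv (memLp_two_mconv hφ hμ hν).integrable_sq]
  simp only [hinner]
  simp [integral_add hμ.integrable_sq (integrable_const _)]

lemma memLp_two_convPow (hφ : Measurable φ) (hμ : MemLp φ 2 μ) (n : ℕ) :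
    MemLp φ 2 (convPow μ n) := by
  induction n with
  | zero =>
    rw [memLp_two_iff_integrable_sq hφ.aestronglyMeasurable]
    exact integrable_dirac' (hφ.pow_const 2).stronglyMeasurable enorm_lt_top
  | succ n ih => exact memLp_two_mconv hφ ih hμ

lemma integral_sq_convPow (hφ : Measurable φ) (hμ : MemLp φ 2 μ) (h0 : ∫ x, φ x ∂μ = 0) (n : ℕ) :
    ∫ x, φ x ^ 2 ∂convPow μ n = n * ∫ x, φ x ^ 2 ∂μ := by
  induction n with
  | zero => simp [convPow, integral_dirac' _ _ (hφ.pow_const 2).stronglyMeasurable]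
  | succ n ih =>
    rw [convPow, integral_sq_mconv_addMonoidHom hφ (memLp_two_convPow hφ hμ n) hμ h0, ih]
    push_cast; ring

lemma integral_mul_mconv (hφ : Measurable φ) (hμ : MemLp φ 2 μ) (hν : MemLp φ 2 ν)
    (f : BddMeas β) :
    ∫ x, φ x * f x ∂mconv μ ν = ∫ x, φ x * convOp ν f x ∂μ + ∫ y, φ y * convOp μ f y ∂ν := by
  have hint : Integrable (fun x => φ x * f x) (mconv μ ν) :=
    ((memLp_two_mconv hφ hμ hν).integrable one_le_two).mul_bdd f.measurable.aestronglyMeasurable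
      (.of_forall f.abs_apply_le_norm)
  have hf : AEStronglyMeasurable (fun p : β × β => f (p.1 + p.2)) (μ.prod ν) :=
    (f.measurable.comp measurable_add).aestronglyMeasurable
  have hb : ∀ᵐ p : β × β ∂μ.prod ν, ‖f (p.1 + p.2)‖ ≤ ‖f‖ :=
    .of_forall fun p => f.abs_apply_le_norm _
  have h1 := ((hμ.comp_fst ν).integrable one_le_two).mul_bdd hf hb
  have h2 := ((hν.comp_snd μ).integrable one_le_two).mul_bdd hf hb
  rw [mconv, integral_map (by fun_prop) hint.1]
  simp only [map_add, add_mul]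
  rw [integral_add h1 h2, integral_prod _ h1, integral_prod_symm _ h2]
  simp only [integral_const_mul, convOp_apply, add_comm]

lemma integral_mul_convPow_succ (hφ : Measurable φ) (hμ : MemLp φ 2 μ) (n : ℕ) (f : BddMeas β) :
    ∫ x, φ x * f x ∂convPow μ (n + 1) = (n + 1) * ∫ x, φ x * (convOp μ ^ n) f x ∂μ := by
  induction n generalizing f with
  | zero =>
    have h0 : ∫ x, φ x * convOp μ f x ∂convPow μ 0 = 0 := by
      have hm := (hφ.mul (convOp μ f).measurable).stronglyMeasurable
      exact (integral_dirac' _ _ hm).trans (by simp)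
    rw [convPow, integral_mul_mconv hφ (memLp_two_convPow hφ hμ 0) hμ, h0, convOp_convPow]
    simp
  | succ n ih =>
    rw [convPow, integral_mul_mconv hφ (memLp_two_convPow hφ hμ (n + 1)) hμ, ih,
      convOp_convPow, pow_succ _ n, Nat.cast_succ]
    change _ + ∫ x, φ x * (convOp μ ^ n) (convOp μ f) x ∂μ =
      _ * ∫ x, φ x * (convOp μ ^ n) (convOp μ f) x ∂μ
    ring

lemma integral_abs_le_sqrt {Ω : Type*} [MeasurableSpace Ω] {P : Measure Ω} [IsProbabilityMeasure P]
    {X : Ω → ℝ} (hX : MemLp X 2 P) : ∫ ω, |X ω| ∂P ≤ √(∫ ω, X ω ^ 2 ∂P) := by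
  have h := ProbabilityTheory.variance_nonneg |X| P
  rw [ProbabilityTheory.variance_eq_sub hX.abs] at h
  exact Real.le_sqrt_of_sq_le (by simpa using h)

lemma abs_integral_mul_convOp_pow_le (hφ : Measurable φ) (hμ : MemLp φ 2 μ)
    (h0 : ∫ x, φ x ∂μ = 0) (n : ℕ) (f : BddMeas β) :
    |∫ x, φ x * (convOp μ ^ n) f x ∂μ| ≤ ‖f‖ * √(∫ x, φ x ^ 2 ∂μ) / √(n + 1) := by
  have hL2 := memLp_two_convPow hφ hμ (n + 1)
  have key : (n + 1) * |∫ x, φ x * (convOp μ ^ n) f x ∂μ| ≤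
      ‖f‖ * (√(n + 1) * √(∫ x, φ x ^ 2 ∂μ)) := calc
    _ = |∫ x, φ x * f x ∂convPow μ (n + 1)| := by
      rw [integral_mul_convPow_succ hφ hμ, abs_mul,
        abs_of_nonneg (a := (n + 1 : ℝ)) (by positivity)]
    _ ≤ ∫ x, ‖f‖ * |φ x| ∂convPow μ (n + 1) :=
      norm_integral_le_of_norm_le ((hL2.integrable one_le_two).abs.const_mul ‖f‖)
        (.of_forall fun x => by
          rw [Real.norm_eq_abs, abs_mul, mul_comm]
          exact mul_le_mul_of_nonneg_right (f.abs_apply_le_norm x) (abs_nonneg _))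
    _ ≤ ‖f‖ * √(∫ x, φ x ^ 2 ∂convPow μ (n + 1)) := by
      rw [integral_const_mul]
      exact mul_le_mul_of_nonneg_left (integral_abs_le_sqrt hL2) (norm_nonneg _)
    _ = _ := by
      rw [integral_sq_convPow hφ hμ h0, Real.sqrt_mul (by positivity)]
      push_cast; rfl
  have hs : √(n + 1 : ℝ) * √(n + 1) = n + 1 := Real.mul_self_sqrt (by positivity)
  rw [le_div_iff₀ (by positivity)]
  refine le_of_mul_le_mul_left ?_ (by positivity : 0 < √(n + 1 : ℝ))
  linear_combination key + hs * |∫ x, φ x * (convOp μ ^ n) f x ∂μ|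

end

section
variable {α β : Type*} [MeasurableSpace α] [MeasurableSpace β]

lemma map_convPow [AddCommMonoid α] [AddCommMonoid β] [MeasurableAdd₂ α] [MeasurableAdd₂ β]
    (L : α →+ β) (hL : Measurable L) (μ : Measure α) [IsProbabilityMeasure μ] (n : ℕ) :
    (convPow μ n).map L = convPow (μ.map L) n := by
  induction n with
  | zero => simp [convPow, Measure.map_dirac' hL]
  | succ n ih =>
    have := Measure.map_conv_addMonoidHom (μ := convPow μ n) (ν := μ) L hL
    exact this.trans (by rw [ih]; rfl)

instance [Add α] [Add β] [MeasurableAdd₂ α] [MeasurableAdd₂ β] : MeasurableAdd₂ (α × β) :=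
  ⟨(measurable_fst.fst.add measurable_snd.fst).prodMk (measurable_fst.snd.add measurable_snd.snd)⟩

end

section
variable {α : Type*} [MeasurableSpace α] [AddCommMonoid α] [MeasurableAdd₂ α]
  {V : Measure α} [IsProbabilityMeasure V] {g : α → ℝ}

/-- Under the joint law of `(z, g z)` the weight `g` becomes an additive functional. -/
lemma abs_integral_mul_convOp_pow_apply_add_le (hg : Measurable g) (hg2 : MemLp g 2 V)
    (h0 : ∫ z, g z ∂V = 0) (n : ℕ) (f : BddMeas α) (x : α) :
    |∫ z, g z * (convOp V ^ n) f (x + z) ∂V| ≤ ‖f‖ * √(∫ z, g z ^ 2 ∂V) / √(n + 1) := by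
  have hG : Measurable fun z => (z, g z) := measurable_id.prodMk hg
  set J : Measure (α × ℝ) := V.map fun z => (z, g z) with hJ
  have : IsProbabilityMeasure J := Measure.isProbabilityMeasure_map hG.aemeasurable
  have hfst : convPow V n = (convPow J n).map (AddMonoidHom.fst α ℝ) := by
    rw [map_convPow _ measurable_fst, hJ]
    exact congrArg (convPow · n) ((Measure.map_map measurable_fst hG).trans Measure.map_id).symm
  let f' : BddMeas (α × ℝ) := .mk' (fun p => f (x + p.1)) (f.measurable.comp (by fun_prop)) ‖f‖
    fun p => f.abs_apply_le_norm _
  have hf' : ‖f'‖ ≤ ‖f‖ := BddMeas.norm_le (norm_nonneg _) fun p => f.abs_apply_le_norm _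
  have hT (p : α × ℝ) : (convOp J ^ n) f' p = (convOp V ^ n) f (x + p.1) := by
    have hm : Measurable fun w => f (x + p.1 + w) := f.measurable.comp (measurable_const_add _)
    rw [convOp_pow_apply, convOp_pow_apply, hfst]
    refine Eq.trans ?_ (integral_map measurable_fst.aemeasurable hm.aestronglyMeasurable).symm
    exact integral_congr_ae (.of_forall fun q => congrArg f (add_assoc _ _ _).symm)
  have hsnd : MemLp (AddMonoidHom.snd α ℝ) 2 J :=
    (memLp_map_measure_iff measurable_snd.aestronglyMeasurable hG.aemeasurable).2 hg2
  have hint (k : α × ℝ → ℝ) (hk : Measurable k) : ∫ p, k p ∂J = ∫ z, k (z, g z) ∂V :=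
    integral_map hG.aemeasurable hk.aestronglyMeasurable
  have key := abs_integral_mul_convOp_pow_le measurable_snd hsnd
    ((hint _ measurable_snd).trans h0) n f'
  calc |∫ z, g z * (convOp V ^ n) f (x + z) ∂V|
      = |∫ p, p.2 * (convOp J ^ n) f' p ∂J| := by
        rw [hint (fun p => p.2 * _) (measurable_snd.mul (BddMeas.measurable _))]; simp only [hT]
    _ ≤ ‖f'‖ * √(∫ p, p.2 ^ 2 ∂J) / √(n + 1) := key
    _ ≤ _ := by rw [hint (fun p => p.2 ^ 2) (measurable_snd.pow_const 2)]; gcongr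

/-- Replace `g` by its product with the density of `F` relative to `V`. -/
lemma abs_integral_mul_convOp_pow_apply_add_le_of_le {F : Measure α} [IsFiniteMeasure F] {lam : ℝ}
    (hlam : 0 < lam) (hV : ENNReal.ofReal lam • F ≤ V) (hg : Measurable g) (hg2 : MemLp g 2 F)
    (h0 : ∫ z, g z ∂F = 0) (n : ℕ) (f : BddMeas α) (x : α) :
    |∫ z, g z * (convOp V ^ n) f (x + z) ∂F| ≤
      ‖f‖ * √(∫ z, g z ^ 2 ∂F) / √(lam * (n + 1)) := by
  have hFV : F ≪ V := (Measure.absolutelyContinuous_smul (by simpa)).trans hV.absolutelyContinuous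
  set ρ : α → ℝ := fun z => (F.rnDeriv V z).toReal with hρdef
  have hρ : Measurable ρ := by fun_prop
  have hρ0 (z : α) : 0 ≤ ρ z := ENNReal.toReal_nonneg
  have hρ1 : ∀ᵐ z ∂V, ρ z ≤ lam⁻¹ := by
    filter_upwards [Measure.rnDeriv_le_one_of_le hV,
      Measure.rnDeriv_smul_left_of_ne_top F V ENNReal.ofReal_ne_top] with z h1 h2
    rw [h2] at h1
    have h3 : lam * ρ z ≤ 1 := by
      simpa [ρ, hlam.le] using ENNReal.toReal_mono ENNReal.one_ne_top h1
    rwa [← one_div, le_div_iff₀' hlam]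
  have hFρ (k : α → ℝ) : ∫ z, k z ∂F = ∫ z, ρ z * k z ∂V := (integral_rnDeriv_smul hFV).symm
  have hsq : Integrable (fun z => ρ z * g z ^ 2) V :=
    (integrable_rnDeriv_smul_iff hFV).2 hg2.integrable_sq
  have hle : ∀ᵐ z ∂V, (ρ z * g z) ^ 2 ≤ lam⁻¹ * (ρ z * g z ^ 2) := by
    filter_upwards [hρ1] with z hz
    rw [mul_pow, sq (ρ z), mul_assoc]
    exact mul_le_mul_of_nonneg_right hz (mul_nonneg (hρ0 z) (sq_nonneg _))
  have hρg : Integrable (fun z => (ρ z * g z) ^ 2) V :=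
    (hsq.const_mul lam⁻¹).mono' (by fun_prop)
      (hle.mono fun z hz => by rwa [Real.norm_of_nonneg (sq_nonneg _)])
  rw [hFρ] at h0
  have key := abs_integral_mul_convOp_pow_apply_add_le (hρ.mul hg)
    ((memLp_two_iff_integrable_sq (hρ.mul hg).aestronglyMeasurable).2 hρg) h0 n f x
  calc _ = |∫ z, ρ z * g z * (convOp V ^ n) f (x + z) ∂V| := by simp only [hFρ, mul_assoc]
    _ ≤ _ := key
    _ ≤ ‖f‖ * √(lam⁻¹ * ∫ z, g z ^ 2 ∂F) / √(n + 1) := by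
      gcongr
      rw [hFρ, ← integral_const_mul]
      exact integral_mono_ae hρg (hsq.const_mul _) hle
    _ = _ := by
      rw [Real.sqrt_mul (by positivity), Real.sqrt_mul hlam.le, Real.sqrt_inv]
      field_simp

end

/-! ### Concentration of convolution powers -/

/-- The function `1_{[y, ∞)} - 1_{(-∞, -y]}`. -/
def tailSign (y z : ℝ) : ℝ := (Set.Ici y).indicator 1 z - (Set.Iic (-y)).indicator 1 z

lemma measurable_tailSign (y : ℝ) : Measurable (tailSign y) :=
  (measurable_one.indicator measurableSet_Ici).sub (measurable_one.indicator measurableSet_Iic)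

lemma tailSign_neg (y z : ℝ) : tailSign y (-z) = -tailSign y z := by
  simp only [tailSign, Set.indicator_apply, Set.mem_Ici, Set.mem_Iic, neg_le_neg_iff, le_neg,
    Pi.one_apply]
  ring

lemma tailSign_sq {y : ℝ} (hy : 0 < y) (z : ℝ) :
    tailSign y z ^ 2 = {z | y ≤ |z|}.indicator 1 z := by
  simp only [tailSign, Set.indicator_apply, Set.mem_Ici, Set.mem_Iic, Set.mem_ofPred_eq, le_abs,
    le_neg, Pi.one_apply]
  split_ifs <;> grind

lemma abs_tailSign_le_one (y z : ℝ) : |tailSign y z| ≤ 1 := by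
  simp only [tailSign, Set.indicator_apply, Pi.one_apply]
  split_ifs <;> simp

lemma sq_sub_le_neg_tailSign_mul (y : ℝ) {u : ℝ → ℝ} (hu : Antitone u) (z : ℝ) :
    tailSign y z ^ 2 * ((u (-y) - u y) / 2) - tailSign y z * ((u (-y) + u y) / 2) ≤
      -(tailSign y z * u z) := by
  have h1 (h : y ≤ z) : u z ≤ u y := hu h
  have h2 (h : z ≤ -y) : u (-y) ≤ u z := hu h
  simp only [tailSign, Set.indicator_apply, Set.mem_Ici, Set.mem_Iic, Pi.one_apply]
  split_ifs <;> grind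

lemma integral_tailSign_eq_zero (F : Measure ℝ) [F.IsNegInvariant] (y : ℝ) :
    ∫ z, tailSign y z ∂F = 0 := by
  have h := (Measure.measurePreserving_neg F).integral_comp
    (MeasurableEquiv.neg ℝ).measurableEmbedding (tailSign y)
  simp only [tailSign_neg, integral_neg] at h
  linarith

section
variable {V F : Measure ℝ} [IsProbabilityMeasure V] [IsProbabilityMeasure F] {lam y q : ℝ}

lemma convOp_pow_indicator_Iic (V : Measure ℝ) [IsProbabilityMeasure V] (n : ℕ) (b x : ℝ) :
    (convOp V ^ n) (.indicator (Set.Iic b) measurableSet_Iic) x =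
      (convPow V n).real (Set.Iic (b - x)) := by
  rw [convOp_pow_apply, ← integral_indicator_one measurableSet_Iic]
  simp only [BddMeas.indicator_apply, Set.indicator_apply, Set.mem_Iic, le_sub_iff_add_le',
    Pi.one_apply]

lemma antitone_convOp_pow_indicator_Iic (V : Measure ℝ) [IsProbabilityMeasure V] (n : ℕ) (b : ℝ) :
    Antitone ((convOp V ^ n) (.indicator (Set.Iic b) measurableSet_Iic)) := fun x x' hx => by
  rw [convOp_pow_indicator_Iic, convOp_pow_indicator_Iic]
  exact measureReal_mono (Set.Iic_subset_Iic.2 (by linarith))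

lemma measureReal_convPow_Ioc_eq (V : Measure ℝ) [IsProbabilityMeasure V] (n : ℕ) (b : ℝ)
    (hy : 0 ≤ y) : (convPow V n).real (Set.Ioc (b - y) (b + y)) =
      (convOp V ^ n) (.indicator (Set.Iic b) measurableSet_Iic) (-y) -
        (convOp V ^ n) (.indicator (Set.Iic b) measurableSet_Iic) y := by
  rw [convOp_pow_indicator_Iic, convOp_pow_indicator_Iic, sub_neg_eq_add,
    ← measureReal_sdiff (Set.Iic_subset_Iic.2 (by linarith)) measurableSet_Iic]
  congr 1
  ext w
  simp [and_comm]

lemma measureReal_convPow_Ioc_le (hlam : 0 < lam) (hV : ENNReal.ofReal lam • F ≤ V)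
    [F.IsNegInvariant] (hy : 0 < y) (hq : 0 < q) (hqF : q ≤ F.real {z | y ≤ |z|}) (n : ℕ) (b : ℝ) :
    (convPow V n).real (Set.Ioc (b - y) (b + y)) ≤ 2 / √(lam * q * (n + 1)) := by
  set Q := F.real {z | y ≤ |z|}
  have hQ0 : 0 < Q := hq.trans_le hqF
  set f : BddMeas ℝ := .indicator (Set.Iic b) measurableSet_Iic
  set u := (convOp V ^ n) f
  have hg := measurable_tailSign y
  have hg2 : MemLp (tailSign y) 2 F :=
    .of_bound hg.aestronglyMeasurable 1 (.of_forall (abs_tailSign_le_one y))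
  have hsq : ∫ z, tailSign y z ^ 2 ∂F = Q := by
    simp only [tailSign_sq hy]
    exact integral_indicator_one (measurableSet_le measurable_const measurable_norm)
  have hg0 := integral_tailSign_eq_zero (F := F) y
  have hupper : |∫ z, tailSign y z * u z ∂F| ≤ √Q / √(lam * (n + 1)) := calc
    _ ≤ ‖f‖ * √Q / √(lam * (n + 1)) := by
      simpa only [zero_add, hsq] using
        abs_integral_mul_convOp_pow_apply_add_le_of_le hlam hV hg hg2 hg0 n f 0
    _ ≤ 1 * √Q / √(lam * (n + 1)) := by gcongr; exact BddMeas.norm_indicator_le _ _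
    _ = _ := by rw [one_mul]
  have hlower : Q * ((u (-y) - u y) / 2) ≤ -∫ z, tailSign y z * u z ∂F := by
    have hi := hg2.integrable one_le_two
    have hi2 := hg2.integrable_sq.mul_const ((u (-y) - u y) / 2)
    have hiu := hi.mul_bdd u.measurable.aestronglyMeasurable (.of_forall u.abs_apply_le_norm)
    have h := integral_mono (hi2.sub (hi.mul_const _)) hiu.neg
      (sq_sub_le_neg_tailSign_mul y (antitone_convOp_pow_indicator_Iic V n b))
    simpa [integral_sub hi2 (hi.mul_const _), integral_mul_const, hg0, hsq, integral_neg] using h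
  have hmain : Q * (u (-y) - u y) / 2 ≤ √Q / √(lam * (n + 1)) := by
    linarith [(neg_le_abs _).trans hupper]
  calc (convPow V n).real (Set.Ioc (b - y) (b + y)) = u (-y) - u y :=
        measureReal_convPow_Ioc_eq V n b hy.le
    _ ≤ 2 / √(lam * Q * (n + 1)) := by
        rw [show lam * Q * (n + 1 : ℝ) = Q * (lam * (n + 1)) by ring, Real.sqrt_mul hQ0.le]
        have hsqrt : √Q * √Q = Q := Real.mul_self_sqrt hQ0.le
        rw [le_div_iff₀ (by positivity)]
        rw [le_div_iff₀ (by positivity)] at hmain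
        refine le_of_mul_le_mul_left ?_ (Real.sqrt_pos.2 hQ0)
        linear_combination 2 * hmain + (u (-y) - u y) * √(lam * (n + 1)) * hsqrt
    _ ≤ _ := by gcongr

lemma measureReal_Ioc_le_nsmul {μ : Measure ℝ} {R : ℝ}
    (h : ∀ b, μ.real (Set.Ioc (b - y) (b + y)) ≤ R) (hy : 0 < y) (c : ℝ) (k : ℕ) :
    μ.real (Set.Ioc c (c + k * (2 * y))) ≤ k * R := by
  induction k with
  | zero => simp
  | succ k ih =>
    have hsplit : Set.Ioc c (c + (k + 1 : ℕ) * (2 * y)) =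
        Set.Ioc c (c + k * (2 * y)) ∪ Set.Ioc (c + k * (2 * y)) (c + (k + 1 : ℕ) * (2 * y)) := by
      refine (Set.Ioc_union_Ioc_eq_Ioc ?_ ?_).symm <;> push_cast <;>
        nlinarith [k.cast_nonneg (α := ℝ)]
    have hlast := h (c + k * (2 * y) + y)
    rw [add_sub_cancel_right, show c + k * (2 * y) + y + y = c + (k + 1 : ℕ) * (2 * y) by
      push_cast; ring] at hlast
    rw [hsplit]
    refine (measureReal_union_le _ _).trans ((add_le_add ih hlast).trans_eq ?_)
    push_cast; ring

lemma measureReal_abs_sub_le {μ : Measure ℝ} [IsFiniteMeasure μ] {R L : ℝ}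
    (h : ∀ b, μ.real (Set.Ioc (b - y) (b + y)) ≤ R) (hy : 0 < y) (hL : 0 ≤ L) (a : ℝ) :
    μ.real {w | |w - a| ≤ L} ≤ (L / y + 2) * R := by
  have hR : 0 ≤ R := measureReal_nonneg.trans (h 0)
  have hfloor : L < (⌊L / y⌋₊ + 1) * y := (div_lt_iff₀ hy).1 (Nat.lt_floor_add_one _)
  calc μ.real {w | |w - a| ≤ L}
      ≤ μ.real (Set.Ioc (a - L - y) (a - L - y + (⌊L / y⌋₊ + 2 : ℕ) * (2 * y))) := by
        refine measureReal_mono fun w hw => ?_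
        have hw := abs_le.1 (Set.mem_ofPred_eq ▸ hw)
        refine ⟨by linarith, ?_⟩
        push_cast
        nlinarith
    _ ≤ (⌊L / y⌋₊ + 2 : ℕ) * R := measureReal_Ioc_le_nsmul h hy _ _
    _ ≤ _ := by
      push_cast
      gcongr
      exact Nat.floor_le (by positivity)

end

section
variable {α : Type*} [MeasurableSpace α] [AddCommGroup α] [MeasurableNeg α]

lemma isNegInvariant_map {β : Type*} [MeasurableSpace β] [AddCommGroup β] [MeasurableNeg β]
    (F : Measure α) [F.IsNegInvariant] {L : α →+ β} (hL : Measurable L) :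
    (F.map L).IsNegInvariant := by
  refine ⟨?_⟩
  rw [Measure.neg_def, Measure.map_map measurable_neg hL]
  conv_rhs => rw [← F.map_neg_eq_self, Measure.map_map hL measurable_neg]
  congr 1
  ext x
  simp

lemma measureReal_convPow_abs_addMonoidHom_sub_le [MeasurableAdd₂ α] {V F : Measure α}
    [IsProbabilityMeasure V] [IsProbabilityMeasure F] {lam y q L : ℝ} (hlam : 0 < lam)
    (hV : ENNReal.ofReal lam • F ≤ V) [F.IsNegInvariant] {ℓ : α →+ ℝ} (hℓ : Measurable ℓ)
    (hy : 0 < y) (hq : 0 < q) (hqF : q ≤ F.real {z | y ≤ |ℓ z|}) (n : ℕ) (hL : 0 ≤ L) (a : ℝ) :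
    (convPow V n).real {w | |ℓ w - a| ≤ L} ≤ (L / y + 2) * (2 / √(lam * q * (n + 1))) := by
  have := isNegInvariant_map F hℓ
  have := Measure.isProbabilityMeasure_map (μ := F) hℓ.aemeasurable
  have := Measure.isProbabilityMeasure_map (μ := V) hℓ.aemeasurable
  have hVℓ : ENNReal.ofReal lam • F.map ℓ ≤ V.map ℓ := by
    rw [← Measure.map_smul]
    exact Measure.map_mono hV hℓ
  have hmeas_tail : MeasurableSet {z : ℝ | y ≤ |z|} := measurableSet_le (by fun_prop) (by fun_prop)
  have hmeas_ball : MeasurableSet {w : ℝ | |w - a| ≤ L} :=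
    measurableSet_le (by fun_prop) (by fun_prop)
  have hqℓ : q ≤ (F.map ℓ).real {z | y ≤ |z|} := by
    rwa [map_measureReal_apply hℓ hmeas_tail]
  have h := measureReal_abs_sub_le
    (fun b => measureReal_convPow_Ioc_le hlam hVℓ hy hq hqℓ n b) hy hL a
  rwa [← map_convPow ℓ hℓ, map_measureReal_apply hℓ hmeas_ball] at h

end

/-! ### Smoothing indicators of boxes -/

section
variable {ι : Type*} [Fintype ι]

/-- The indicator of the box `[a, b]`. -/
def boxIndicator (a b : ι → ℝ) : BddMeas (ι → ℝ) := .indicator (Set.Icc a b) measurableSet_Icc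

lemma norm_boxIndicator_le (a b : ι → ℝ) : ‖boxIndicator a b‖ ≤ 1 := BddMeas.norm_indicator_le _ _

/-- The law of `(s i * rᵢ)ᵢ` for independent `rᵢ` with law `K`. -/
def scaledLaw (K : Measure ℝ) (s : ι → ℝ) : Measure (ι → ℝ) :=
  (Measure.pi fun _ => K).map fun r => s * r

instance (K : Measure ℝ) [IsProbabilityMeasure K] (s : ι → ℝ) :
    IsProbabilityMeasure (scaledLaw K s) :=
  Measure.isProbabilityMeasure_map (by fun_prop)

lemma convOp_scaledLaw_apply (K : Measure ℝ) [IsProbabilityMeasure K] (s : ι → ℝ)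
    (f : BddMeas (ι → ℝ)) (x : ι → ℝ) :
    convOp (scaledLaw K s) f x = ∫ r, f (x + s * r) ∂Measure.pi fun _ => K :=
  integral_map (by fun_prop) (f.measurable.comp (measurable_const_add x)).aestronglyMeasurable

/-- The points whose `i`-th coordinate may be moved across the level `c i` by adding `v`. -/
def crossing (c v : ι → ℝ) (i : ι) : Set (ι → ℝ) := {w | v i ≠ 0 ∧ |w i - c i| ≤ |v i|}

omit [Fintype ι] in
lemma measurableSet_crossing (c v : ι → ℝ) (i : ι) : MeasurableSet (crossing c v i) :=
  (MeasurableSet.const _).inter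
    (measurableSet_le ((measurable_pi_apply i).sub_const _).norm measurable_const)

omit [Fintype ι] in
lemma mem_Icc_iff_add_mem_Icc_of_notMem_crossing {a b v w : ι → ℝ}
    (ha : ∀ i, w ∉ crossing a v i) (hb : ∀ i, w ∉ crossing b v i) :
    w ∈ Set.Icc a b ↔ w + v ∈ Set.Icc a b := by
  simp only [Set.mem_Icc, Pi.le_def, ← forall_and]
  refine forall_congr' fun i => ?_
  have h1 := ha i
  have h2 := hb i
  simp only [crossing, Set.mem_ofPred_eq, Pi.add_apply] at h1 h2 ⊢
  grind

lemma abs_boxIndicator_sub_le (a b v w : ι → ℝ) :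
    |boxIndicator a b w - boxIndicator a b (w + v)| ≤
      (⋃ i, (crossing a v i ∪ crossing b v i)).indicator 1 w := by
  classical
  by_cases hw : w ∈ ⋃ i, (crossing a v i ∪ crossing b v i)
  · simp only [boxIndicator, BddMeas.indicator_apply, Set.indicator_apply _ _ w, hw]
    simp only [Set.indicator_apply]
    split_ifs <;> simp
  · simp only [Set.mem_iUnion, Set.mem_union, not_exists, not_or] at hw
    have hiff := mem_Icc_iff_add_mem_Icc_of_notMem_crossing (fun i => (hw i).1) fun i => (hw i).2
    have heq : boxIndicator a b w = boxIndicator a b (w + v) := by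
      simp only [boxIndicator, BddMeas.indicator_apply, Set.indicator_apply, hiff, Pi.one_apply]
    rw [heq, sub_self, abs_zero]
    exact Set.indicator_nonneg (fun _ _ => zero_le_one) _

lemma abs_integral_boxIndicator_sub_le (a b v x : ι → ℝ) (W : Measure (ι → ℝ))
    [IsProbabilityMeasure W] :
    |∫ w, (boxIndicator a b (x + w) - boxIndicator a b (x + w + v)) ∂W| ≤
      ∑ i, (W.real (crossing (a - x) v i) + W.real (crossing (b - x) v i)) := by
  set S := ⋃ i, (crossing (a - x) v i ∪ crossing (b - x) v i)
  have hS : MeasurableSet S :=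
    .iUnion fun i => (measurableSet_crossing _ _ i).union (measurableSet_crossing _ _ i)
  have hbound (w : ι → ℝ) :
      ‖boxIndicator a b (x + w) - boxIndicator a b (x + w + v)‖ ≤ S.indicator 1 w := by
    refine (abs_boxIndicator_sub_le a b v (x + w)).trans_eq ?_
    refine Set.indicator_eq_indicator (Iff.of_eq ?_) rfl
    simp only [S, crossing, Set.mem_iUnion, Set.mem_union, Set.mem_ofPred_eq, Pi.add_apply,
      Pi.sub_apply, sub_sub_eq_add_sub, add_comm]
  calc |∫ w, (boxIndicator a b (x + w) - boxIndicator a b (x + w + v)) ∂W|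
      ≤ ∫ w, S.indicator 1 w ∂W :=
        norm_integral_le_of_norm_le ((integrable_const 1).indicator hS) (.of_forall hbound)
    _ = W.real S := integral_indicator_one hS
    _ ≤ ∑ i, W.real (crossing (a - x) v i ∪ crossing (b - x) v i) :=
        measureReal_iUnion_fintype_le _
    _ ≤ _ := Finset.sum_le_sum fun i _ => measureReal_union_le _ _

/-- `Y` lists thresholds which the coordinates exceed in absolute value with `F`-probability at
least `q`; coordinates with `Y i = 0` are exempt. -/
def IsTailScale (F : Measure (ι → ℝ)) (q : ℝ) (Y : ι → ℝ) : Prop :=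
  ∀ i, Y i = 0 ∨ (0 < Y i ∧ q ≤ F.real {z | Y i ≤ |z i|})

section
variable {V F : Measure (ι → ℝ)} [IsProbabilityMeasure V] [IsProbabilityMeasure F]
  [F.IsNegInvariant] {lam q H : ℝ} {Y : ι → ℝ}

omit [Fintype ι] in
lemma measureReal_convPow_crossing_le (hlam : 0 < lam) (hV : ENNReal.ofReal lam • F ≤ V)
    (hq : 0 < q) (hH : 0 ≤ H) (hY : IsTailScale F q Y) (n : ℕ) (c r : ι → ℝ) (i : ι) :
    (convPow V n).real (crossing c (H • Y * r) i) ≤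
      (H * |r i| + 2) * (2 / √(lam * q * (n + 1))) := by
  rcases hY i with h0 | ⟨hpos, hq_le⟩
  · have : crossing c (H • Y * r) i = ∅ := by ext; simp [crossing, h0]
    rw [this, measureReal_empty]
    positivity
  · calc (convPow V n).real (crossing c (H • Y * r) i)
        ≤ (convPow V n).real {w | |w i - c i| ≤ |(H • Y * r) i|} :=
          measureReal_mono fun w hw => hw.2
      _ ≤ (|(H • Y * r) i| / Y i + 2) * (2 / √(lam * q * (n + 1))) :=
          measureReal_convPow_abs_addMonoidHom_sub_le (ℓ := Pi.evalAddMonoidHom _ i) hlam hV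
            (measurable_pi_apply i) hpos hq hq_le n (abs_nonneg _) _
      _ = _ := by
          congr 2
          simp only [Pi.mul_apply, Pi.smul_apply, smul_eq_mul, abs_mul, abs_of_nonneg hH,
            abs_of_pos hpos]
          field_simp

omit [IsProbabilityMeasure F] [F.IsNegInvariant] in
lemma convOp_pow_sub_convOp_scaledLaw_apply (K : Measure ℝ) [IsProbabilityMeasure K] (s : ι → ℝ)
    (n : ℕ) (f : BddMeas (ι → ℝ)) (x : ι → ℝ) :
    (convOp V ^ n) (f - convOp (scaledLaw K s) f) x =
      ∫ r, ∫ w, (f (x + w) - f (x + w + s * r)) ∂convPow V n ∂Measure.pi fun _ => K := by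
  have hint : Integrable (fun p : (ι → ℝ) × (ι → ℝ) => f (x + p.1) - f (x + p.1 + s * p.2))
      ((convPow V n).prod (Measure.pi fun _ => K)) :=
    (f.integrable_comp _ (φ := fun p : (ι → ℝ) × (ι → ℝ) => x + p.1) (by fun_prop)).sub
      (f.integrable_comp _ (φ := fun p : (ι → ℝ) × (ι → ℝ) => x + p.1 + s * p.2) (by fun_prop))
  rw [convOp_pow_apply, ← integral_integral_swap hint]
  refine integral_congr_ae (.of_forall fun w => ?_)
  simp only
  rw [integral_sub (integrable_const _)
    (f.integrable_comp _ (φ := fun r : ι → ℝ => x + w + s * r) (by fun_prop))]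
  simp [convOp_scaledLaw_apply]

lemma integral_abs_eval_pi (K : Measure ℝ) [IsProbabilityMeasure K] (i : ι) :
    ∫ r : ι → ℝ, |r i| ∂Measure.pi (fun _ => K) = ∫ r, |r| ∂K := by
  rw [← integral_map (φ := fun r : ι → ℝ => r i) (f := fun r : ℝ => |r|)
    (measurable_pi_apply i).aemeasurable (by fun_prop),
    (measurePreserving_eval (fun _ : ι => K) i).map_eq]

lemma norm_convOp_pow_boxIndicator_sub_le (hlam : 0 < lam) (hV : ENNReal.ofReal lam • F ≤ V)
    (hq : 0 < q) (hH : 0 ≤ H) (hY : IsTailScale F q Y) {K : Measure ℝ} [IsProbabilityMeasure K]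
    (hK : Integrable (fun r => |r|) K) (n : ℕ) (a b : ι → ℝ) :
    ‖(convOp V ^ n) (boxIndicator a b - convOp (scaledLaw K (H • Y)) (boxIndicator a b))‖ ≤
      Fintype.card ι * (4 * (H * ∫ r, |r| ∂K + 2)) / √(lam * q * (n + 1)) := by
  set P := Measure.pi fun _ : ι => K
  set R := 1 / √(lam * q * (n + 1)) with hR
  have hint (i : ι) : Integrable (fun r : ι → ℝ => |r i|) P :=
    (measurePreserving_eval (fun _ : ι => K) i).integrable_comp_of_integrable hK
  have hterm (i : ι) : Integrable (fun r : ι → ℝ => 4 * (H * |r i| + 2) * R) P :=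
    ((((hint i).const_mul H).add (integrable_const _)).const_mul 4).mul_const R
  have hfiber (x r : ι → ℝ) :
      ‖∫ w, (boxIndicator a b (x + w) - boxIndicator a b (x + w + H • Y * r)) ∂convPow V n‖ ≤
        ∑ i, 4 * (H * |r i| + 2) * R := by
    refine (abs_integral_boxIndicator_sub_le a b _ x _).trans (Finset.sum_le_sum fun i _ => ?_)
    calc _ ≤ (H * |r i| + 2) * (2 / √(lam * q * (n + 1))) +
          (H * |r i| + 2) * (2 / √(lam * q * (n + 1))) :=
          add_le_add (measureReal_convPow_crossing_le hlam hV hq hH hY n _ r i)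
            (measureReal_convPow_crossing_le hlam hV hq hH hY n _ r i)
      _ = _ := by rw [hR]; ring
  refine BddMeas.norm_le_of_nonempty fun x => ?_
  rw [convOp_pow_sub_convOp_scaledLaw_apply]
  calc |∫ r, ∫ w, _ ∂convPow V n ∂P| ≤ ∫ r : ι → ℝ, ∑ i, 4 * (H * |r i| + 2) * R ∂P :=
        norm_integral_le_of_norm_le (integrable_finsetSum _ fun i _ => hterm i)
          (.of_forall (hfiber x))
    _ = ∑ i : ι, 4 * (H * ∫ r, |r| ∂K + 2) * R := by
        rw [integral_finsetSum _ fun i _ => hterm i]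
        refine Finset.sum_congr rfl fun i _ => ?_
        rw [integral_mul_const, integral_const_mul,
          integral_add ((hint i).const_mul H) (integrable_const _), integral_const_mul,
          integral_abs_eval_pi, integral_const, probReal_univ, one_smul]
    _ = _ := by
        rw [Finset.sum_const, Finset.card_univ, nsmul_eq_mul, hR]
        ring

end

end

/-! ### Jets of smooth functions -/

section
variable {ι : Type*} [Fintype ι] [DecidableEq ι]

/-- A family of bounded functions on `ℝ^ι` indexed by multi-indices, meant to consist of a smooth
function and all its partial derivatives, suitably rescaled. -/
abbrev Jet (ι : Type*) := (ι → ℕ) → BddMeas (ι → ℝ)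

/-- The formal derivative of a jet in the direction `w`. -/
def dirDeriv : (ι → ℝ) →ₗ[ℝ] Jet ι →ₗ[ℝ] Jet ι :=
  LinearMap.mk₂ ℝ (fun w u β => ∑ j, w j • u (β + Pi.single j 1))
    (fun _ _ _ => by simp only [Pi.add_apply, add_smul, Finset.sum_add_distrib]; rfl)
    (fun _ _ _ => by ext1; simp only [Pi.smul_apply, smul_assoc, Finset.smul_sum])
    (fun _ _ _ => by simp only [Pi.add_apply, smul_add, Finset.sum_add_distrib]; rfl)
    (fun c w u => by ext1; simp only [Pi.smul_apply, Finset.smul_sum, smul_comm c])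

lemma dirDeriv_apply (w : ι → ℝ) (u : Jet ι) (β : ι → ℕ) :
    dirDeriv w u β = ∑ j, w j • u (β + Pi.single j 1) := rfl

lemma dirDeriv_apply_apply (w : ι → ℝ) (u : Jet ι) (β : ι → ℕ) (x : ι → ℝ) :
    dirDeriv w u β x = ∑ j, w j * u (β + Pi.single j 1) x := by
  simp [dirDeriv_apply]

lemma dirDeriv_comp (L : BddMeas (ι → ℝ) →L[ℝ] BddMeas (ι → ℝ)) (w : ι → ℝ) (u : Jet ι) :
    dirDeriv w (fun β => L (u β)) = fun β => L (dirDeriv w u β) := by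
  ext1 β
  simp only [dirDeriv_apply, map_sum, map_smul]

lemma norm_dirDeriv_le {u : Jet ι} {M : ℝ} (hu : ∀ β, ‖u β‖ ≤ M) (w : ι → ℝ) (β : ι → ℕ) :
    ‖dirDeriv w u β‖ ≤ (∑ j, |w j|) * M := by
  rw [Finset.sum_mul]
  refine norm_sum_le_of_le _ fun j _ => ?_
  rw [norm_smul]
  exact mul_le_mul_of_nonneg_left (hu _) (abs_nonneg _)

/-- The jets `u` such that `u (β + eⱼ) = s j • ∂ⱼ (u β)`. If `s j = 0`, no smoothness in the `j`-th
variable is required. -/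
def jets (s : ι → ℝ) : Submodule ℝ (Jet ι) where
  carrier := {u | ∀ (β : ι → ℕ) (x v : ι → ℝ), (∀ j, s j = 0 → v j = 0) → ∀ t : ℝ,
    HasDerivAt (fun t : ℝ => u β (x + t • v)) (dirDeriv (v / s) u β (x + t • v)) t}
  add_mem' hu hw β x v hv t := by
    rw [map_add (dirDeriv (v / s))]
    exact (hu β x v hv t).add (hw β x v hv t)
  zero_mem' β x v _ t := by
    rw [map_zero (dirDeriv (v / s))]
    exact hasDerivAt_const t 0
  smul_mem' c u hu β x v hv t := by
    rw [map_smul (dirDeriv (v / s))]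
    exact (hu β x v hv t).const_mul c

variable {s : ι → ℝ} {u : Jet ι}

lemma shift_mem_jets (hu : u ∈ jets s) (γ : ι → ℕ) : (fun β => u (β + γ)) ∈ jets s := by
  intro β x v hv t
  simpa only [dirDeriv_apply, add_right_comm] using hu (β + γ) x v hv t

lemma dirDeriv_mem_jets (hu : u ∈ jets s) (w : ι → ℝ) : dirDeriv w u ∈ jets s := by
  have h : dirDeriv w u = ∑ j, w j • fun β => u (β + Pi.single j 1) := by
    ext1 β
    simp [dirDeriv_apply]
  rw [h]
  exact Submodule.sum_mem _ fun j _ => Submodule.smul_mem _ _ (shift_mem_jets hu _)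

lemma convOp_mem_jets (hu : u ∈ jets s) (μ : Measure (ι → ℝ)) [IsFiniteMeasure μ] :
    (fun β => convOp μ (u β)) ∈ jets s := by
  intro β x v hv t
  have hmeas (f : BddMeas (ι → ℝ)) (y : ι → ℝ) :
      AEStronglyMeasurable (fun z => f (y + z)) μ :=
    (f.measurable.comp (measurable_const_add y)).aestronglyMeasurable
  have key := hasDerivAt_integral_of_dominated_loc_of_deriv_le (μ := μ) (x₀ := t)
    (F := fun (t : ℝ) z => u β (x + t • v + z))
    (F' := fun (t : ℝ) z => dirDeriv (v / s) u β (x + t • v + z))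
    (bound := fun _ => ‖dirDeriv (v / s) u β‖) Filter.univ_mem (.of_forall fun _ => hmeas _ _)
    ((u β).integrable_comp μ (measurable_const_add _)) (hmeas _ _)
    (.of_forall fun z t _ => BddMeas.abs_apply_le_norm _ _) (integrable_const _)
    (.of_forall fun z t _ => by simpa only [add_right_comm] using hu β (x + z) v hv t)
  rw [dirDeriv_comp]
  exact key.2

lemma convOp_pow_mem_jets (hu : u ∈ jets s) (V : Measure (ι → ℝ)) [IsProbabilityMeasure V] (n : ℕ) :
    (fun β => (convOp V ^ n) (u β)) ∈ jets s := by
  simp only [← convOp_convPow]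
  exact convOp_mem_jets hu _

end

section

lemma abs_sub_le_of_abs_deriv_le {φ φ' : ℝ → ℝ} (h : ∀ t, HasDerivAt φ (φ' t) t) {ρ : ℝ}
    (hρ : ∀ t, |t| ≤ 1 → |φ' t| ≤ ρ) {t : ℝ} (ht : |t| ≤ 1) : |φ t - φ 0| ≤ ρ := by
  have h0 : 0 ≤ ρ := (abs_nonneg _).trans (hρ 0 (by simp))
  have hle := (convex_Icc (-1 : ℝ) 1).norm_image_sub_le_of_norm_hasDerivWithin_le
    (fun x _ => (h x).hasDerivWithinAt) (fun x hx => hρ x (abs_le.2 hx))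
    ⟨by norm_num, zero_le_one⟩ (abs_le.1 ht)
  rw [sub_zero] at hle
  exact hle.trans (mul_le_of_le_one_right h0 ht)

variable {φ φ' φ'' : ℝ → ℝ} (h : ∀ t, HasDerivAt φ (φ' t) t) (h' : ∀ t, HasDerivAt φ' (φ'' t) t)
  {ρ : ℝ} (hρ : ∀ t, |t| ≤ 1 → |φ'' t| ≤ ρ)
include h h' hρ

lemma abs_sub_sub_mul_deriv_le {t : ℝ} (ht : |t| ≤ 1) : |φ t - φ 0 - t * φ' 0| ≤ ρ := by
  have hlin (t : ℝ) : HasDerivAt (fun t => φ t - t * φ' 0) (φ' t - φ' 0) t := by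
    simpa using (h t).fun_sub ((hasDerivAt_id t).mul_const (φ' 0))
  simpa [sub_right_comm] using
    abs_sub_le_of_abs_deriv_le hlin (fun t ht => abs_sub_le_of_abs_deriv_le h' hρ ht) ht

lemma abs_odd_taylor_le : |φ 1 - φ (-1) - 2 * φ' 0| ≤ 2 * ρ := by
  have h1 := abs_le.1 (abs_sub_sub_mul_deriv_le h h' hρ (t := 1) (by simp))
  have h2 := abs_le.1 (abs_sub_sub_mul_deriv_le h h' hρ (t := -1) (by simp))
  exact abs_le.2 ⟨by linarith, by linarith⟩

lemma abs_even_taylor_le : |φ 1 + φ (-1) - 2 * φ 0| ≤ 2 * ρ := by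
  have h1 := abs_le.1 (abs_sub_sub_mul_deriv_le h h' hρ (t := 1) (by simp))
  have h2 := abs_le.1 (abs_sub_sub_mul_deriv_le h h' hρ (t := -1) (by simp))
  exact abs_le.2 ⟨by linarith, by linarith⟩

end

section
variable {ι : Type*} [Fintype ι] [DecidableEq ι] {s : ι → ℝ} {u : Jet ι} (hu : u ∈ jets s)
  {v : ι → ℝ} (hv : ∀ j, s j = 0 → v j = 0) {β : ι → ℕ} {x : ι → ℝ} {ρ : ℝ}
  (hρ : ∀ y, |dirDeriv (v / s) (dirDeriv (v / s) u) β y| ≤ ρ)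
include hu hv hρ

lemma abs_jet_odd_taylor_le :
    |u β (x + v) - u β (x - v) - 2 * dirDeriv (v / s) u β x| ≤ 2 * ρ := by
  simpa [sub_eq_add_neg] using abs_odd_taylor_le (hu β x v hv)
    (dirDeriv_mem_jets hu _ β x v hv) fun t _ => hρ (x + t • v)

lemma abs_jet_even_taylor_le : |u β (x + v) + u β (x - v) - 2 * u β x| ≤ 2 * ρ := by
  simpa [sub_eq_add_neg] using abs_even_taylor_le (hu β x v hv)
    (dirDeriv_mem_jets hu _ β x v hv) fun t _ => hρ (x + t • v)

end

/-! ### Orthogonal expansion of a symmetric measure with bounded support -/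

section

lemma exists_orthonormal_expansion {ι E : Type*} [Fintype ι] [NormedAddCommGroup E]
    [InnerProductSpace ℝ E] (e : ι → E) :
    ∃ r ≤ Fintype.card ι, ∃ b : Fin r → ι → ℝ, ∃ ψ : Fin r → E, Orthonormal ℝ ψ ∧
      (∀ i, ψ i = ∑ j, b i j • e j) ∧ ∀ j, e j = ∑ i, ⟪ψ i, e j⟫ • ψ i := by
  let W := Submodule.span ℝ (Set.range e)
  have : FiniteDimensional ℝ W := FiniteDimensional.span_of_finite ℝ (Set.finite_range e)
  let B := stdOrthonormalBasis ℝ W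
  have hB (i) : ∃ b : ι → ℝ, ∑ j, b j • e j = B i :=
    Submodule.mem_span_range_iff_exists_fun ℝ |>.1 (B i).2
  choose b hb using hB
  refine ⟨Module.finrank ℝ W, finrank_range_le_card e, b, fun i => B i, ?_, fun i => (hb i).symm,
    fun j => ?_⟩
  · exact B.orthonormal.comp_linearIsometry W.subtypeₗᵢ
  · have hj : e j ∈ W := Submodule.subset_span ⟨j, rfl⟩
    simpa using congrArg Subtype.val (B.sum_repr' ⟨e j, hj⟩).symm

variable {ι κ : Type*} [Fintype ι] [Fintype κ]

/-- An expansion `z / s = ∑ᵢ ψᵢ(z) aᵢ`, valid for `ν`-almost all `z`, into normalised linear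
functionals `ψᵢ` in `L²(ν)` with coefficients `aᵢ = ∫ ψᵢ(z) z / s dν`. It plays the role of
diagonalising the covariance matrix of `z / s`, without reference to degenerate directions. -/
structure IsOrthoExpansion (ν : Measure (ι → ℝ)) (s : ι → ℝ) (ψ : κ → (ι → ℝ) →L[ℝ] ℝ)
    (a : κ → ι → ℝ) : Prop where
  memLp : ∀ i, MemLp (ψ i) 2 ν
  integral_sq : ∀ i, ∫ z, ψ i z ^ 2 ∂ν = 1
  integral_mul_div : ∀ i j, ∫ z, ψ i z * (z j / s j) ∂ν = a i j
  div_eq_sum : ∀ᵐ z ∂ν, z / s = ∑ i, ψ i z • a i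

lemma exists_isOrthoExpansion {ν : Measure (ι → ℝ)} {s : ι → ℝ}
    (hν : ∀ j, MemLp (fun z => z j / s j) 2 ν) :
    ∃ r ≤ Fintype.card ι, ∃ (ψ : Fin r → (ι → ℝ) →L[ℝ] ℝ) (a : Fin r → ι → ℝ),
      IsOrthoExpansion ν s ψ a := by
  obtain ⟨r, hr, b, Ψ, hΨ, hΨb, hexp⟩ := exists_orthonormal_expansion fun j => (hν j).toLp
  let ψ (i : Fin r) : (ι → ℝ) →L[ℝ] ℝ := ∑ j, (b i j / s j) • ContinuousLinearMap.proj j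
  have hψ (i : Fin r) : Ψ i =ᵐ[ν] ψ i := by
    rw [hΨb]
    refine (Lp.coeFn_finsetSum _ _).trans ?_
    have hj : ∀ᵐ z ∂ν, ∀ j, (b i j • (hν j).toLp : Lp ℝ 2 ν) z = b i j * (z j / s j) :=
      ae_all_iff.2 fun j => by
        filter_upwards [Lp.coeFn_smul (b i j) (hν j).toLp, (hν j).coeFn_toLp] with z h1 h2
        rw [h1, Pi.smul_apply, h2, smul_eq_mul]
    filter_upwards [hj] with z hz
    simp [ψ, hz, div_mul_eq_mul_div, mul_div_assoc]
  have hinner (i : Fin r) (j : ι) : ⟪Ψ i, (hν j).toLp⟫ = ∫ z, ψ i z * (z j / s j) ∂ν := by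
    rw [L2.inner_def]
    refine integral_congr_ae ?_
    filter_upwards [hψ i, (hν j).coeFn_toLp] with z h1 h2
    simp [h1, h2, mul_comm]
  refine ⟨r, hr, ψ, fun i j => ⟪Ψ i, (hν j).toLp⟫, ⟨fun i => (memLp_congr_ae (hψ i)).1 (Lp.memLp _),
    fun i => ?_, fun i j => (hinner i j).symm, ?_⟩⟩
  · rw [← one_pow 2, ← hΨ.1 i, ← real_inner_self_eq_norm_sq, L2.inner_def]
    refine integral_congr_ae ?_
    filter_upwards [hψ i] with z hz
    rw [hz, real_inner_self_eq_norm_sq, Real.norm_eq_abs, sq_abs]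
  · have hj : ∀ᵐ z ∂ν, ∀ j, z j / s j = ∑ i, ⟪Ψ i, (hν j).toLp⟫ * Ψ i z :=
      ae_all_iff.2 fun j => by
        filter_upwards [(hν j).coeFn_toLp, (hexp j ▸ Lp.coeFn_finsetSum _ _ : _ =ᵐ[ν] _),
          ae_all_iff.2 fun i => Lp.coeFn_smul ⟪Ψ i, (hν j).toLp⟫ (Ψ i)] with z h1 h2 h3
        rw [← h1, h2]
        simp [h3]
    filter_upwards [hj, ae_all_iff.2 hψ] with z h1 h2
    ext j
    simp [h1, h2, mul_comm]

end

section
variable {ι κ : Type*} [Fintype κ] {ν : Measure (ι → ℝ)} {s : ι → ℝ} {h : ℝ}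

lemma abs_div_le_of_abs_le_mul (hh : 0 ≤ h) {z : ι → ℝ} (hz : ∀ j, |z j| ≤ h * s j) (j : ι) :
    |z j / s j| ≤ h := by
  rw [abs_div]
  exact div_le_of_le_mul₀ (abs_nonneg _) hh
    ((hz j).trans (mul_le_mul_of_nonneg_left (le_abs_self _) hh))

lemma memLp_div_of_abs_le_mul [IsFiniteMeasure ν] (hh : 0 ≤ h)
    (hsupp : ∀ᵐ z ∂ν, ∀ j, |z j| ≤ h * s j) (j : ι) : MemLp (fun z => z j / s j) 2 ν :=
  .of_bound ((measurable_pi_apply j).div_const _).aestronglyMeasurable h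
    (hsupp.mono fun _ hz => abs_div_le_of_abs_le_mul hh hz j)

lemma integral_eq_zero_of_isNegInvariant [ν.IsNegInvariant] (L : (ι → ℝ) →L[ℝ] ℝ) :
    ∫ z, L z ∂ν = 0 := by
  have h := integral_neg_eq_self L ν
  simp only [map_neg, integral_neg] at h
  linarith

lemma integral_sum_le_card {f : κ → (ι → ℝ) → ℝ} (hf : ∀ k, Integrable (f k) ν)
    (hle : ∀ k, ∫ z, f k z ∂ν ≤ 1) : ∫ z, ∑ k, f k z ∂ν ≤ Fintype.card κ := by
  rw [integral_finsetSum _ fun k _ => hf k]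
  simpa using Finset.sum_le_card_nsmul Finset.univ _ 1 fun k _ => hle k

namespace IsOrthoExpansion
variable {ψ : κ → (ι → ℝ) →L[ℝ] ℝ} {a : κ → ι → ℝ} (hψ : IsOrthoExpansion ν s ψ a)
include hψ

lemma integrable_abs_mul_abs (i k : κ) : Integrable (fun z => |ψ i z| * |ψ k z|) ν :=
  (hψ.memLp i).norm.integrable_mul (hψ.memLp k).norm

lemma integral_abs_mul_abs_le_one (i k : κ) : ∫ z, |ψ i z| * |ψ k z| ∂ν ≤ 1 := by
  have hsq (i : κ) : Integrable (fun z => ψ i z ^ 2 / 2) ν := (hψ.memLp i).integrable_sq.div_const 2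
  calc ∫ z, |ψ i z| * |ψ k z| ∂ν ≤ ∫ z, (ψ i z ^ 2 / 2 + ψ k z ^ 2 / 2) ∂ν := by
        refine integral_mono (hψ.integrable_abs_mul_abs i k) ((hsq i).add (hsq k)) fun z => ?_
        dsimp only
        rw [← sq_abs (ψ i z), ← sq_abs (ψ k z)]
        linarith [two_mul_le_add_sq |ψ i z| |ψ k z|]
    _ = 1 := by
        rw [integral_add (hsq i) (hsq k), integral_div, integral_div, hψ.integral_sq,
          hψ.integral_sq]
        norm_num

end IsOrthoExpansion

variable [Fintype ι] [DecidableEq ι]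

lemma norm_dirDeriv_sum_le {a : κ → ι → ℝ} {u : Jet ι} {N : ℝ}
    (hN : ∀ k β, ‖dirDeriv (a k) u β‖ ≤ N) (c : κ → ℝ) (β : ι → ℕ) :
    ‖dirDeriv (∑ k, c k • a k) u β‖ ≤ (∑ k, |c k|) * N := by
  rw [map_sum, LinearMap.sum_apply, Finset.sum_apply, Finset.sum_mul]
  refine norm_sum_le_of_le _ fun k _ => ?_
  rw [map_smul, LinearMap.smul_apply, Pi.smul_apply, norm_smul]
  exact mul_le_mul_of_nonneg_left (hN k β) (abs_nonneg _)

namespace IsOrthoExpansion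
variable {ψ : κ → (ι → ℝ) →L[ℝ] ℝ} {a : κ → ι → ℝ} (hψ : IsOrthoExpansion ν s ψ a)
include hψ

variable {U : Jet ι} {N : ℝ}

lemma integrable_mul_dirDeriv_div [IsFiniteMeasure ν] (hh : 0 ≤ h)
    (hsupp : ∀ᵐ z ∂ν, ∀ j, |z j| ≤ h * s j) (i : κ) (β : ι → ℕ) (x : ι → ℝ) :
    Integrable (fun z => ψ i z * dirDeriv (z / s) U β x) ν := by
  simp only [dirDeriv_apply_apply, Finset.mul_sum, ← mul_assoc, Pi.div_apply]
  exact integrable_finsetSum _ fun j _ =>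
    ((hψ.memLp i).integrable_mul (memLp_div_of_abs_le_mul hh hsupp j)).mul_const _

lemma integral_mul_dirDeriv_div [IsFiniteMeasure ν] (hh : 0 ≤ h)
    (hsupp : ∀ᵐ z ∂ν, ∀ j, |z j| ≤ h * s j) (i : κ) (β : ι → ℕ) (x : ι → ℝ) :
    ∫ z, ψ i z * dirDeriv (z / s) U β x ∂ν = dirDeriv (a i) U β x := by
  have hint (j : ι) : Integrable (fun z => ψ i z * (z j / s j) * U (β + Pi.single j 1) x) ν :=
    ((hψ.memLp i).integrable_mul (memLp_div_of_abs_le_mul hh hsupp j)).mul_const _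
  simp only [dirDeriv_apply_apply, Finset.mul_sum, ← mul_assoc, Pi.div_apply]
  rw [integral_finsetSum _ fun j _ => hint j]
  simp only [integral_mul_const, hψ.integral_mul_div]

omit hψ in
lemma abs_odd_remainder_le (hh : 0 ≤ h) (hU : U ∈ jets s)
    (hN : ∀ k β, ‖dirDeriv (a k) U β‖ ≤ N) {z : ι → ℝ} (hz : ∀ j, |z j| ≤ h * s j)
    (hexp : z / s = ∑ k, ψ k z • a k) (β : ι → ℕ) (x : ι → ℝ) :
    |U β (x + z) - U β (x - z) - 2 * dirDeriv (z / s) U β x| ≤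
      2 * (Fintype.card ι * h * ((∑ k, |ψ k z|) * N)) := by
  have hD (β) : ‖dirDeriv (z / s) U β‖ ≤ (∑ k, |ψ k z|) * N :=
    hexp ▸ norm_dirDeriv_sum_le hN _ β
  have hsum : ∑ j, |(z / s) j| ≤ Fintype.card ι * h := by
    simpa using Finset.sum_le_card_nsmul Finset.univ _ h
      fun j _ => abs_div_le_of_abs_le_mul hh hz j
  exact abs_jet_odd_taylor_le hU (fun j hj => by simpa [hj] using hz j) fun y =>
    (BddMeas.abs_apply_le_norm _ _).trans ((norm_dirDeriv_le hD _ _).trans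
      (mul_le_mul_of_nonneg_right hsum ((norm_nonneg _).trans (hD β))))

omit hψ in
lemma abs_even_remainder_le (hU : U ∈ jets s)
    (hN : ∀ i k β, ‖dirDeriv (a i) (dirDeriv (a k) U) β‖ ≤ N) {z : ι → ℝ}
    (hz : ∀ j, |z j| ≤ h * s j) (hexp : z / s = ∑ k, ψ k z • a k) (β : ι → ℕ) (x : ι → ℝ) :
    |U β (x + z) + U β (x - z) - 2 * U β x| ≤
      2 * ((∑ i, |ψ i z|) * ((∑ k, |ψ k z|) * N)) := by
  have hD (i β) : ‖dirDeriv (a i) (dirDeriv (z / s) U) β‖ ≤ (∑ k, |ψ k z|) * N := by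
    simp only [hexp, map_sum, map_smul, LinearMap.sum_apply, LinearMap.smul_apply,
      Finset.sum_apply, Pi.smul_apply, Finset.sum_mul]
    refine norm_sum_le_of_le _ fun k _ => ?_
    rw [norm_smul]
    exact mul_le_mul_of_nonneg_left (hN i k β) (abs_nonneg _)
  refine abs_jet_even_taylor_le hU (fun j hj => by simpa [hj] using hz j) fun y =>
    (BddMeas.abs_apply_le_norm _ _).trans ?_
  nth_rw 1 [hexp]
  exact norm_dirDeriv_sum_le hD _ β

/-- The even part of `U β (x + z)` does not contribute, and the odd part is linear up to a second
order term. -/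
lemma abs_integral_mul_sub_dirDeriv_le [IsFiniteMeasure ν] [ν.IsNegInvariant] (hh : 0 ≤ h)
    (hsupp : ∀ᵐ z ∂ν, ∀ j, |z j| ≤ h * s j) (hU : U ∈ jets s)
    (hN : ∀ k β, ‖dirDeriv (a k) U β‖ ≤ N) (i : κ) (β : ι → ℕ) (x : ι → ℝ) :
    |∫ z, ψ i z * U β (x + z) ∂ν - dirDeriv (a i) U β x| ≤
      Fintype.card κ * Fintype.card ι * h * N := by
  have hN0 : 0 ≤ N := (norm_nonneg _).trans (hN i 0)
  have hint {φ : (ι → ℝ) → ι → ℝ} (hφ : Measurable φ) :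
      Integrable (fun z => ψ i z * U β (φ z)) ν :=
    ((hψ.memLp i).integrable one_le_two).mul_bdd
      ((U β).measurable.comp hφ).aestronglyMeasurable
      (.of_forall fun z => (U β).abs_apply_le_norm _)
  have hodd : ∫ z, ψ i z * U β (x - z) ∂ν = -∫ z, ψ i z * U β (x + z) ∂ν := by
    rw [← integral_neg_eq_self, ← integral_neg]
    simp
  have hsplit : ∫ z, ψ i z * (U β (x + z) - U β (x - z) - 2 * dirDeriv (z / s) U β x) ∂ν =
      2 * (∫ z, ψ i z * U β (x + z) ∂ν - dirDeriv (a i) U β x) := by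
    have h1 := hint (measurable_const_add x)
    have h2 := hint (measurable_const_sub x)
    simp only [mul_sub, mul_left_comm _ (2 : ℝ)]
    rw [integral_sub (by exact h1.sub h2)
      ((hψ.integrable_mul_dirDeriv_div hh hsupp i β x).const_mul 2), integral_sub h1 h2, hodd,
      integral_const_mul, hψ.integral_mul_dirDeriv_div hh hsupp]
    ring
  have hbound : ∀ᵐ z ∂ν,
      ‖ψ i z * (U β (x + z) - U β (x - z) - 2 * dirDeriv (z / s) U β x)‖ ≤
        2 * (Fintype.card ι * h * N) * ∑ k, |ψ i z| * |ψ k z| := by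
    filter_upwards [hsupp, hψ.div_eq_sum] with z hz hexp
    rw [norm_mul, ← Finset.mul_sum]
    exact (mul_le_mul_of_nonneg_left (abs_odd_remainder_le hh hU hN hz hexp β x)
      (abs_nonneg _)).trans_eq (by ring)
  have hint' := hψ.integrable_abs_mul_abs i
  have key := norm_integral_le_of_norm_le ((integrable_finsetSum _ fun k _ => hint' k).const_mul _)
    hbound
  rw [hsplit, integral_const_mul, norm_mul, Real.norm_two, Real.norm_eq_abs] at key
  have hle := integral_sum_le_card hint' (hψ.integral_abs_mul_abs_le_one i)
  have := mul_le_mul_of_nonneg_left hle (show 0 ≤ Fintype.card ι * h * N by positivity)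
  linarith

/-- The odd part of `U β (x + z)` vanishes after integration against the symmetric measure `ν`. -/
lemma norm_convOp_sub_le [IsFiniteMeasure ν] [ν.IsNegInvariant]
    (hsupp : ∀ᵐ z ∂ν, ∀ j, |z j| ≤ h * s j) (hU : U ∈ jets s) (hN0 : 0 ≤ N)
    (hN : ∀ i k β, ‖dirDeriv (a i) (dirDeriv (a k) U) β‖ ≤ N) (β : ι → ℕ) :
    ‖convOp ν (U β) - ν.real Set.univ • U β‖ ≤ Fintype.card κ ^ 2 * N := by
  refine BddMeas.norm_le_of_nonempty fun x => ?_
  have heven : ∫ z, U β (x - z) ∂ν = ∫ z, U β (x + z) ∂ν := by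
    rw [← integral_neg_eq_self]
    simp
  have hsplit : ∫ z, (U β (x + z) + U β (x - z) - 2 * U β x) ∂ν =
      2 * (convOp ν (U β) - ν.real Set.univ • U β) x := by
    have h1 := (U β).integrable_comp ν (measurable_const_add x)
    have h2 := (U β).integrable_comp ν (measurable_const_sub x)
    rw [integral_sub (by exact h1.add h2) (integrable_const _), integral_add h1 h2, heven]
    simp only [integral_const, smul_eq_mul, BddMeas.sub_apply, BddMeas.smul_apply, convOp_apply]
    ring
  have hbound : ∀ᵐ z ∂ν, ‖U β (x + z) + U β (x - z) - 2 * U β x‖ ≤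
      2 * N * ∑ p : κ × κ, |ψ p.1 z| * |ψ p.2 z| := by
    filter_upwards [hsupp, hψ.div_eq_sum] with z hz hexp
    refine (abs_even_remainder_le hU hN hz hexp β x).trans_eq ?_
    rw [← mul_assoc (∑ i, _), Finset.sum_mul_sum, Fintype.sum_prod_type]
    ring
  have hint' (p : κ × κ) := hψ.integrable_abs_mul_abs p.1 p.2
  have key := norm_integral_le_of_norm_le ((integrable_finsetSum _ fun p _ => hint' p).const_mul _)
    hbound
  rw [hsplit, integral_const_mul, norm_mul, Real.norm_two, Real.norm_eq_abs] at key
  have hle := integral_sum_le_card hint' fun p => hψ.integral_abs_mul_abs_le_one p.1 p.2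
  rw [Fintype.card_prod, Nat.cast_mul, ← sq] at hle
  linarith [mul_le_mul_of_nonneg_left hle hN0]

variable {V : Measure (ι → ℝ)} [IsProbabilityMeasure V] {lam : ℝ} {u : Jet ι} {M : ℝ}

lemma norm_dirDeriv_convOp_pow_le_add [IsFiniteMeasure ν] [ν.IsNegInvariant] (hh : 0 ≤ h)
    (hsupp : ∀ᵐ z ∂ν, ∀ j, |z j| ≤ h * s j) (hlam : 0 < lam) (hV : ENNReal.ofReal lam • ν ≤ V)
    (hu : u ∈ jets s) (hM : ∀ β, ‖u β‖ ≤ M) (n : ℕ)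
    (hN : ∀ k β, ‖dirDeriv (a k) (fun β => (convOp V ^ n) (u β)) β‖ ≤ N) (i : κ) (β : ι → ℕ) :
    ‖dirDeriv (a i) (fun β => (convOp V ^ n) (u β)) β‖ ≤
      M / √(lam * (n + 1)) + Fintype.card κ * Fintype.card ι * h * N := by
  refine BddMeas.norm_le_of_nonempty fun x => ?_
  have hmecke := abs_integral_mul_convOp_pow_apply_add_le_of_le hlam hV (ψ i).continuous.measurable
    (hψ.memLp i) (integral_eq_zero_of_isNegInvariant (ψ i)) n (u β) x
  rw [hψ.integral_sq, Real.sqrt_one, mul_one] at hmecke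
  have htaylor := hψ.abs_integral_mul_sub_dirDeriv_le hh hsupp (convOp_pow_mem_jets hu V n) hN i β x
  have hM' : ‖u β‖ / √(lam * (n + 1)) ≤ M / √(lam * (n + 1)) := by gcongr; exact hM β
  rw [abs_sub_comm] at htaylor
  linarith [abs_sub_abs_le_abs_sub (dirDeriv (a i) (fun β => (convOp V ^ n) (u β)) β x)
    (∫ z, ψ i z * (convOp V ^ n) (u β) (x + z) ∂ν)]

/-- Bootstrapping: if `N` is the supremum of the left-hand sides, the preceding bound reads
`N ≤ M / √(lam * (n + 1)) + N / 2`. -/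
lemma norm_dirDeriv_convOp_pow_le [IsFiniteMeasure ν] [ν.IsNegInvariant] (hh : 0 ≤ h)
    (hκ : Fintype.card κ * Fintype.card ι * h ≤ 1 / 2)
    (hsupp : ∀ᵐ z ∂ν, ∀ j, |z j| ≤ h * s j) (hlam : 0 < lam) (hV : ENNReal.ofReal lam • ν ≤ V)
    (hu : u ∈ jets s) (hM : ∀ β, ‖u β‖ ≤ M) (n : ℕ) (i : κ) (β : ι → ℕ) :
    ‖dirDeriv (a i) (fun β => (convOp V ^ n) (u β)) β‖ ≤ 2 * M / √(lam * (n + 1)) := by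
  have hM0 : 0 ≤ M := (norm_nonneg _).trans (hM 0)
  let g (p : κ × (ι → ℕ)) : ℝ := ‖dirDeriv (a p.1) (fun β => (convOp V ^ n) (u β)) p.2‖
  have hbdd : BddAbove (Set.range g) := by
    refine ⟨∑ i, (∑ j, |a i j|) * M, Set.forall_mem_range.2 fun p => ?_⟩
    exact (norm_dirDeriv_le (fun β => (norm_convOp_pow_apply_le V n _).trans (hM β)) _ _).trans
      (Finset.single_le_sum (f := fun i => (∑ j, |a i j|) * M) (fun i _ => by positivity)
        (Finset.mem_univ p.1))
  have : Nonempty (κ × (ι → ℕ)) := ⟨(i, β)⟩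
  have hle : ⨆ p, g p ≤ M / √(lam * (n + 1)) + 1 / 2 * ⨆ p, g p := by
    refine ciSup_le fun p => (hψ.norm_dirDeriv_convOp_pow_le_add hh hsupp hlam hV hu hM n
      (fun k β => le_ciSup hbdd (k, β)) p.1 p.2).trans ?_
    gcongr
    exact Real.iSup_nonneg fun p => norm_nonneg _
  have := le_ciSup hbdd (i, β)
  rw [mul_div_assoc]
  change g (i, β) ≤ _
  linarith

end IsOrthoExpansion

/-- Two gradient bounds, each consuming `n` of the `2 * n` factors `V`, control the second
derivatives and hence the second order Taylor remainder. -/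
lemma norm_convOp_sub_smul_convOp_pow_le [IsFiniteMeasure ν] [ν.IsNegInvariant]
    {V : Measure (ι → ℝ)} [IsProbabilityMeasure V] {lam : ℝ} {u : Jet ι} {M : ℝ}
    (hh : 0 ≤ h) (hι : Fintype.card ι ^ 2 * h ≤ 1 / 2)
    (hsupp : ∀ᵐ z ∂ν, ∀ j, |z j| ≤ h * s j) (hlam : 0 < lam) (hV : ENNReal.ofReal lam • ν ≤ V)
    (hu : u ∈ jets s) (hM : ∀ β, ‖u β‖ ≤ M) (n : ℕ) (β : ι → ℕ) :
    ‖convOp ν ((convOp V ^ (2 * n)) (u β)) - ν.real Set.univ • (convOp V ^ (2 * n)) (u β)‖ ≤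
      4 * Fintype.card ι ^ 2 * M / (lam * (n + 1)) := by
  have hM0 : 0 ≤ M := (norm_nonneg _).trans (hM 0)
  obtain ⟨r, hr, ψ, a, hψ⟩ := exists_isOrthoExpansion fun j => memLp_div_of_abs_le_mul hh hsupp j
  have hr' : (r : ℝ) ≤ Fintype.card ι := mod_cast hr
  have hκ : (Fintype.card (Fin r) : ℝ) * Fintype.card ι * h ≤ 1 / 2 := by
    rw [Fintype.card_fin]
    refine le_trans ?_ hι
    rw [sq]
    gcongr
  have hgrad (k : Fin r) := hψ.norm_dirDeriv_convOp_pow_le hh hκ hsupp hlam hV hu hM n k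
  have hhess (i k : Fin r) (β : ι → ℕ) :
      ‖dirDeriv (a i) (dirDeriv (a k) fun β => (convOp V ^ (2 * n)) (u β)) β‖ ≤
        4 * M / (lam * (n + 1)) := by
    have h2 := hψ.norm_dirDeriv_convOp_pow_le hh hκ hsupp hlam hV
      (dirDeriv_mem_jets (convOp_pow_mem_jets hu V n) (a k)) (hgrad k) n i β
    rw [← dirDeriv_comp] at h2
    convert! h2 using 1
    · simp only [two_mul, pow_add, mul_apply_eq_comp]
    · have : 0 ≤ lam * (n + 1) := by positivity
      rw [mul_div_assoc', div_div, Real.mul_self_sqrt this]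
      ring
  refine (hψ.norm_convOp_sub_le hsupp (convOp_pow_mem_jets hu V (2 * n)) (by positivity) hhess
    β).trans ?_
  calc (Fintype.card (Fin r) : ℝ) ^ 2 * (4 * M / (lam * (n + 1)))
      ≤ Fintype.card ι ^ 2 * (4 * M / (lam * (n + 1))) := by rw [Fintype.card_fin]; gcongr
    _ = _ := by ring

end

/-! ### A band-limited smoothing kernel -/

section
variable {A : Type*} [NormedRing A] [NormedAlgebra ℝ A] {f g : ℝ → A} {B C r s : ℝ}

/-- Functions with derivatives bounded by `C * r ^ k`, such as bounded functions with spectrum in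
`[-r, r]`. -/
structure HasExponentialType (C r : ℝ) (f : ℝ → A) : Prop where
  contDiff : ContDiff ℝ (⊤ : ℕ∞) f
  norm_iteratedFDeriv_le : ∀ k x, ‖iteratedFDeriv ℝ k f x‖ ≤ C * r ^ k

namespace HasExponentialType

lemma contDiff_nat (hf : HasExponentialType C r f) (k : ℕ) : ContDiff ℝ k f :=
  hf.contDiff.of_le (by exact_mod_cast le_top)

lemma norm_iteratedDeriv_le (hf : HasExponentialType C r f) (k : ℕ) (x : ℝ) :
    ‖iteratedDeriv k f x‖ ≤ C * r ^ k := by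
  simpa only [norm_iteratedFDeriv_eq_norm_iteratedDeriv] using hf.norm_iteratedFDeriv_le k x

lemma mul (hf : HasExponentialType B r f) (hg : HasExponentialType C s g) :
    HasExponentialType (B * C) (r + s) fun x => f x * g x where
  contDiff := hf.contDiff.mul hg.contDiff
  norm_iteratedFDeriv_le k x := by
    refine (norm_iteratedFDeriv_mul_le (hf.contDiff_nat k) (hg.contDiff_nat k) x le_rfl).trans ?_
    rw [add_pow, Finset.mul_sum]
    refine Finset.sum_le_sum fun i _ => ?_
    calc (k.choose i : ℝ) * ‖iteratedFDeriv ℝ i f x‖ * ‖iteratedFDeriv ℝ (k - i) g x‖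
        ≤ k.choose i * (B * r ^ i) * (C * s ^ (k - i)) := by
          have hB := (norm_nonneg _).trans (hf.norm_iteratedFDeriv_le i x)
          gcongr
          exacts [hf.norm_iteratedFDeriv_le i x, hg.norm_iteratedFDeriv_le (k - i) x]
      _ = B * C * (r ^ i * s ^ (k - i) * k.choose i) := by ring

lemma const_smul (hf : HasExponentialType C r f) (c : ℝ) :
    HasExponentialType (|c| * C) r fun x => c • f x where
  contDiff := hf.contDiff.const_smul c
  norm_iteratedFDeriv_le k x := by
    rw [iteratedFDeriv_const_smul_apply' (hf.contDiff_nat k).contDiffAt, norm_smul, mul_assoc]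
    exact mul_le_mul_of_nonneg_left (hf.norm_iteratedFDeriv_le k x) (norm_nonneg c)

lemma comp_mul_left (hf : HasExponentialType C r f) (c : ℝ) :
    HasExponentialType C (|c| * r) fun x => f (c * x) where
  contDiff := hf.contDiff.comp (contDiff_const.mul contDiff_id)
  norm_iteratedFDeriv_le k x := by
    rw [norm_iteratedFDeriv_eq_norm_iteratedDeriv,
      iteratedDeriv_comp_const_smul (hf.contDiff_nat k), norm_smul, norm_pow, mul_pow,
      mul_left_comm]
    exact mul_le_mul_of_nonneg_left (hf.norm_iteratedDeriv_le k _) (by positivity)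

lemma re {f : ℝ → ℂ} (hf : HasExponentialType C r f) :
    HasExponentialType C r fun x => (f x).re where
  contDiff := Complex.reCLM.contDiff.comp hf.contDiff
  norm_iteratedFDeriv_le k x := by
    have h := Complex.reCLM.norm_iteratedFDeriv_comp_left (hf.contDiff_nat k).contDiffAt le_rfl
      (x := x)
    rw [Complex.reCLM_norm, one_mul] at h
    exact h.trans (hf.norm_iteratedFDeriv_le k x)

end HasExponentialType

end

lemma hasExponentialType_charFun {μ : Measure ℝ} [IsFiniteMeasure μ] {r : ℝ}
    (h : ∀ᵐ x ∂μ, |x| ≤ r) : HasExponentialType (μ.real Set.univ) r (charFun μ) where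
  contDiff := contDiff_charFun' fun k => .of_bound (by fun_prop) r h
  norm_iteratedFDeriv_le k t := by
    rw [norm_iteratedFDeriv_eq_norm_iteratedDeriv,
      iteratedDeriv_charFun (.of_bound (by fun_prop) r h), norm_mul, norm_pow, Complex.norm_I,
      one_pow, one_mul, mul_comm]
    refine norm_integral_le_of_norm_le_const ?_
    filter_upwards [h] with x hx
    have hexp : ‖Complex.exp (t * x * Complex.I)‖ = 1 := by
      exact_mod_cast Complex.norm_exp_ofReal_mul_I (t * x)
    rw [norm_mul, hexp, mul_one, norm_pow, Complex.norm_real]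
    exact pow_le_pow_left₀ (abs_nonneg x) hx k

lemma charFun_restrict_Ioc_neg_one_one (t : ℝ) :
    charFun (volume.restrict (Set.Ioc (-1) 1)) t = 2 * Real.sinc t := by
  rw [charFun_apply_real, ← intervalIntegral.integral_of_le (by norm_num)]
  rcases eq_or_ne t 0 with rfl | ht
  · norm_num
  have h := intervalIntegral.integral_comp_mul_left
    (fun u : ℝ => Complex.exp (u * Complex.I)) ht (a := -1) (b := 1)
  simp only [Complex.ofReal_mul, mul_neg, mul_one, integral_exp_mul_I_eq_sinc] at h
  rw [h, Complex.real_smul, ← mul_assoc, mul_left_comm, Complex.ofReal_inv,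
    inv_mul_cancel₀ (Complex.ofReal_ne_zero.2 ht), mul_one]

lemma hasExponentialType_sinc : HasExponentialType 1 1 Real.sinc := by
  have h : HasExponentialType 2 1 (charFun (volume.restrict (Set.Ioc (-1 : ℝ) 1))) := by
    have hsupp : ∀ᵐ x ∂volume.restrict (Set.Ioc (-1 : ℝ) 1), |x| ≤ 1 := by
      filter_upwards [ae_restrict_mem measurableSet_Ioc] with x hx
      exact abs_le.2 ⟨hx.1.le, hx.2⟩
    convert! hasExponentialType_charFun hsupp using 1
    norm_num
  convert! h.re.const_smul 2⁻¹ using 1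
  · norm_num
  · funext t
    rw [charFun_restrict_Ioc_neg_one_one, ← Complex.ofReal_ofNat, ← Complex.ofReal_mul,
      Complex.ofReal_re, smul_eq_mul, inv_mul_cancel_left₀ two_ne_zero]

lemma abs_mul_sinc_le_one (x : ℝ) : |x * Real.sinc x| ≤ 1 := by
  rcases eq_or_ne x 0 with rfl | hx
  · simp
  · rw [Real.sinc_of_ne_zero hx, mul_div_cancel₀ _ hx]
    exact Real.abs_sin_le_one x

lemma sinc_pow_four_mul_le (x : ℝ) :
    Real.sinc (1 / 4 * x) ^ 4 * (1 + |x|) ≤ 85 * (1 + x ^ 2)⁻¹ := by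
  have h0 := Real.abs_sinc_le_one (1 / 4 * x)
  have h1 := abs_mul_sinc_le_one (1 / 4 * x)
  rw [← div_eq_mul_inv, le_div_iff₀ (by positivity), ← (by decide : Even 4).pow_abs, ← sq_abs x]
  rw [abs_mul, abs_mul, abs_of_pos (by norm_num : (0 : ℝ) < 1 / 4)] at h1
  set a := |Real.sinc (1 / 4 * x)|
  have ha : 0 ≤ a := abs_nonneg _
  have hlin : a * (1 + |x|) ≤ 5 := by linarith
  have hquad : a ^ 2 * (1 + |x| ^ 2) ≤ 17 := by
    have h2 := pow_le_one₀ (n := 2) (by positivity) h1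
    have h3 := pow_le_one₀ (n := 2) ha h0
    linarith
  calc a ^ 4 * (1 + |x|) * (1 + |x| ^ 2)
      = a * ((a * (1 + |x|)) * (a ^ 2 * (1 + |x| ^ 2))) := by ring
    _ ≤ 1 * (5 * 17) := by gcongr
    _ = 85 := by norm_num

/-- A probability density on `ℝ` with finite first moment, all of whose derivatives obey the same
bound. It is used to smooth the indicator function of an interval. -/
structure SmoothingKernel where
  density : ℝ → ℝ
  bound : ℝ
  density_nonneg : ∀ x, 0 ≤ density x
  hasExponentialType : HasExponentialType bound 1 density
  integrable_density_mul : Integrable fun x => density x * (1 + |x|)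
  integral_density : ∫ x, density x = 1

/-- The smoothing kernel with density proportional to `sinc (x / 4) ^ 4`, the characteristic
function of a measure on `[-1, 1]`. -/
def sincKernel : SmoothingKernel :=
  let φ (x : ℝ) : ℝ := Real.sinc (1 / 4 * x) ^ 4
  have hφ : HasExponentialType 1 1 φ := by
    have h := hasExponentialType_sinc.comp_mul_left (1 / 4)
    convert! (h.mul h).mul (h.mul h) using 1
    · norm_num
    · norm_num [abs_of_pos]
    · funext x
      ring
  have hcont : Continuous φ := hφ.contDiff.continuous
  have hnonneg (x : ℝ) : 0 ≤ φ x := (by decide : Even 4).pow_nonneg _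
  have hint' : Integrable fun x => φ x * (1 + |x|) := by
    refine (integrable_inv_one_add_sq.const_mul 85).mono' (by fun_prop) (.of_forall fun x => ?_)
    rw [Real.norm_of_nonneg (mul_nonneg (hnonneg x) (by positivity))]
    exact sinc_pow_four_mul_le x
  have hint : Integrable φ := by
    refine hint'.mono' hcont.aestronglyMeasurable (.of_forall fun x => ?_)
    rw [Real.norm_of_nonneg (hnonneg x)]
    exact le_mul_of_one_le_right (hnonneg x) (by simp)
  have hpos : 0 < ∫ x, φ x := by
    refine integral_pos_of_integrable_nonneg_nonzero hcont hint hnonneg (x := 0) ?_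
    simp [φ]
  { density := fun x => (∫ y, φ y)⁻¹ • φ x
    bound := |(∫ y, φ y)⁻¹| * 1
    density_nonneg := fun x => mul_nonneg (inv_nonneg.2 hpos.le) (hnonneg x)
    hasExponentialType := hφ.const_smul _
    integrable_density_mul := by
      simp only [smul_mul_assoc]
      exact hint'.smul (∫ y, φ y)⁻¹
    integral_density := by rw [integral_smul, smul_eq_mul, inv_mul_cancel₀ hpos.ne'] }

namespace SmoothingKernel
variable (K : SmoothingKernel)

/-- The probability measure with density `K.density`. -/
def law : Measure ℝ := volume.withDensity fun x => ENNReal.ofReal (K.density x)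

lemma continuous_density : Continuous K.density := K.hasExponentialType.contDiff.continuous

lemma measurable_ofReal_density : Measurable fun x => ENNReal.ofReal (K.density x) :=
  K.continuous_density.measurable.ennreal_ofReal

lemma integrable_density : Integrable K.density := by
  refine K.integrable_density_mul.mono' K.continuous_density.aestronglyMeasurable
    (.of_forall fun x => ?_)
  rw [Real.norm_of_nonneg (K.density_nonneg x)]
  exact le_mul_of_one_le_right (K.density_nonneg x) (by simp)

lemma law_real_eq_setIntegral {S : Set ℝ} (hS : MeasurableSet S) :
    K.law.real S = ∫ x in S, K.density x := by
  rw [law, measureReal_def, withDensity_apply _ hS,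
    ← ofReal_integral_eq_lintegral_ofReal K.integrable_density.integrableOn
      (.of_forall K.density_nonneg),
    ENNReal.toReal_ofReal (integral_nonneg K.density_nonneg)]

instance : IsProbabilityMeasure K.law := by
  refine ⟨?_⟩
  rw [law, withDensity_apply _ .univ, Measure.restrict_univ,
    ← ofReal_integral_eq_lintegral_ofReal K.integrable_density (.of_forall K.density_nonneg),
    K.integral_density, ENNReal.ofReal_one]

lemma integrable_abs_law : Integrable (fun r => |r|) K.law := by
  rw [law, integrable_withDensity_iff K.measurable_ofReal_density
    (.of_forall fun _ => ENNReal.ofReal_lt_top)]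
  refine (K.integrable_density_mul.sub K.integrable_density).congr (.of_forall fun x => ?_)
  simp only [Pi.sub_apply, ENNReal.toReal_ofReal (K.density_nonneg x)]
  ring

lemma bound_nonneg : 0 ≤ K.bound := by
  simpa using (norm_nonneg _).trans (K.hasExponentialType.norm_iteratedDeriv_le 0 0)

lemma abs_iteratedDeriv_density_le (k : ℕ) (x : ℝ) : |iteratedDeriv k K.density x| ≤ K.bound := by
  simpa using K.hasExponentialType.norm_iteratedDeriv_le k x

lemma hasDerivAt_iteratedDeriv_density (k : ℕ) (x : ℝ) :
    HasDerivAt (iteratedDeriv k K.density) (iteratedDeriv (k + 1) K.density x) x := by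
  rw [iteratedDeriv_succ]
  exact ((K.hasExponentialType.contDiff_nat (k + 1)).differentiable_iteratedDeriv k
    (by exact_mod_cast k.lt_succ_self) x).hasDerivAt

/-- The function `t ↦ K.law {r | t + s * r ∈ [a, b]}`, a smoothed indicator of `[a, b]`, and its
derivatives rescaled by powers of `s`. For `s = 0` only the zeroth function is nonzero. -/
def smoothIndicator (a b s : ℝ) : ℕ → ℝ → ℝ
  | 0, t => K.law.real {r | t + s * r ∈ Set.Icc a b}
  | k + 1, t => (-1) ^ (k + 1) *
      (iteratedDeriv k K.density ((b - t) / s) - iteratedDeriv k K.density ((a - t) / s))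

lemma abs_smoothIndicator_le (a b s : ℝ) (k : ℕ) (t : ℝ) :
    |K.smoothIndicator a b s k t| ≤ 1 + 2 * K.bound := by
  have hK := K.bound_nonneg
  cases k with
  | zero =>
    rw [smoothIndicator, abs_of_nonneg measureReal_nonneg]
    exact measureReal_le_one.trans (by linarith)
  | succ k =>
    rw [smoothIndicator, abs_mul, abs_neg_one_pow, one_mul]
    linarith [abs_sub (iteratedDeriv k K.density ((b - t) / s))
      (iteratedDeriv k K.density ((a - t) / s)), K.abs_iteratedDeriv_density_le k ((b - t) / s),
      K.abs_iteratedDeriv_density_le k ((a - t) / s)]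

lemma measurable_smoothIndicator (a b s : ℝ) (k : ℕ) : Measurable (K.smoothIndicator a b s k) := by
  cases k with
  | zero =>
    have hS : MeasurableSet {p : ℝ × ℝ | p.1 + s * p.2 ∈ Set.Icc a b} :=
      measurableSet_Icc.preimage (by fun_prop)
    exact (measurable_measure_prodMk_left (ν := K.law) hS).ennreal_toReal
  | succ k =>
    have h : Continuous (iteratedDeriv k K.density) :=
      continuous_iff_continuousAt.2 fun x => (K.hasDerivAt_iteratedDeriv_density k x).continuousAt
    unfold smoothIndicator
    fun_prop

lemma smoothIndicator_zero_eq_intervalIntegral {a b s : ℝ} (hab : a ≤ b) (hs : 0 < s) (t : ℝ) :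
    K.smoothIndicator a b s 0 t = ∫ x in (a - t) / s..(b - t) / s, K.density x := by
  have hset : {r | t + s * r ∈ Set.Icc a b} = Set.Icc ((a - t) / s) ((b - t) / s) := by
    ext r
    simp only [Set.mem_ofPred_eq, Set.mem_Icc, div_le_iff₀ hs, le_div_iff₀ hs, mul_comm r,
      sub_le_iff_le_add', le_sub_iff_add_le']
  rw [smoothIndicator, hset, K.law_real_eq_setIntegral measurableSet_Icc,
    integral_Icc_eq_integral_Ioc, intervalIntegral.integral_of_le (by gcongr)]

lemma hasDerivAt_smoothIndicator {a b s : ℝ} (hab : a ≤ b) (hs : 0 < s) (k : ℕ) (t : ℝ) :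
    HasDerivAt (K.smoothIndicator a b s k) (K.smoothIndicator a b s (k + 1) t / s) t := by
  have hlin (c : ℝ) : HasDerivAt (fun t => (c - t) / s) (-1 / s) t :=
    ((hasDerivAt_id t).const_sub c).div_const s
  cases k with
  | zero =>
    have hsplit : K.smoothIndicator a b s 0 = fun t => (∫ x in (0 : ℝ)..(b - t) / s, K.density x) -
        ∫ x in (0 : ℝ)..(a - t) / s, K.density x := by
      funext t
      rw [K.smoothIndicator_zero_eq_intervalIntegral hab hs,
        intervalIntegral.integral_interval_sub_left] <;>
      exact K.continuous_density.intervalIntegrable _ _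
    have hprim (c : ℝ) : HasDerivAt (fun t => ∫ x in (0 : ℝ)..(c - t) / s, K.density x)
        (K.density ((c - t) / s) * (-1 / s)) t :=
      (K.continuous_density.integral_hasStrictDerivAt 0 ((c - t) / s)).hasDerivAt.comp
        (h₂ := fun u => ∫ x in (0 : ℝ)..u, K.density x) t (hlin c)
    rw [hsplit]
    refine ((hprim b).sub (hprim a)).congr_deriv ?_
    simp only [smoothIndicator, iteratedDeriv_zero]
    ring
  | succ k =>
    have hcomp (c : ℝ) := (K.hasDerivAt_iteratedDeriv_density k ((c - t) / s)).comp t (hlin c)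
    refine (((hcomp b).sub (hcomp a)).const_mul ((-1) ^ (k + 1))).congr_deriv ?_
    simp only [smoothIndicator]
    ring

variable {ι : Type*} [Fintype ι]

lemma abs_prod_smoothIndicator_le (a b s : ι → ℝ) (β : ι → ℕ) (x : ι → ℝ) :
    |∏ l, K.smoothIndicator (a l) (b l) (s l) (β l) (x l)| ≤
      (1 + 2 * K.bound) ^ Fintype.card ι := by
  rw [Finset.abs_prod]
  exact (Finset.prod_le_prod (fun _ _ => abs_nonneg _)
    fun l _ => K.abs_smoothIndicator_le _ _ _ _ _).trans_eq (by simp)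

/-- The jet of the convolution of the indicator of the box `[a, b]` with `scaledLaw K.law s`. -/
def boxJet (a b s : ι → ℝ) : Jet ι := fun β =>
  .mk' (fun x => ∏ l, K.smoothIndicator (a l) (b l) (s l) (β l) (x l))
    (Finset.measurable_fun_prod _ fun l _ =>
      (K.measurable_smoothIndicator _ _ _ _).comp (measurable_pi_apply l))
    ((1 + 2 * K.bound) ^ Fintype.card ι) (K.abs_prod_smoothIndicator_le a b s β)

lemma boxJet_apply (a b s : ι → ℝ) (β : ι → ℕ) (x : ι → ℝ) :
    K.boxJet a b s β x = ∏ l, K.smoothIndicator (a l) (b l) (s l) (β l) (x l) := rfl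

lemma norm_boxJet_le (a b s : ι → ℝ) (β : ι → ℕ) :
    ‖K.boxJet a b s β‖ ≤ (1 + 2 * K.bound) ^ Fintype.card ι := by
  have hK := K.bound_nonneg
  exact BddMeas.norm_le (by positivity) (K.abs_prod_smoothIndicator_le a b s β)

lemma boxJet_zero (a b s : ι → ℝ) :
    K.boxJet a b s 0 = convOp (scaledLaw K.law s) (boxIndicator a b) := by
  ext x
  have hprod (r : ι → ℝ) : boxIndicator a b (x + s * r) =
      ∏ l, {r | x l + s l * r ∈ Set.Icc (a l) (b l)}.indicator 1 (r l) := by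
    classical
    simp only [boxIndicator, BddMeas.indicator_apply, Set.indicator_apply, Pi.one_apply]
    rw [Finset.prod_ite_zero]
    simp [← Set.pi_univ_Icc]
  simp only [convOp_scaledLaw_apply, hprod, boxJet_apply]
  rw [integral_fintype_prod_eq_prod
    (f := fun l r => {r | x l + s l * r ∈ Set.Icc (a l) (b l)}.indicator (1 : ℝ → ℝ) r)]
  refine Finset.prod_congr rfl fun l _ => ?_
  have hS : MeasurableSet {r | x l + s l * r ∈ Set.Icc (a l) (b l)} :=
    measurableSet_Icc.preimage (by fun_prop)
  rw [integral_indicator_one hS]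
  rfl

variable [DecidableEq ι]

lemma boxJet_mem_jets {a b s : ι → ℝ} (hab : a ≤ b) (hs : 0 ≤ s) : K.boxJet a b s ∈ jets s := by
  intro β x v hv t
  simp only [boxJet_apply]
  have hfactor : ∀ l ∈ Finset.univ, HasDerivAt
      (fun t : ℝ => K.smoothIndicator (a l) (b l) (s l) (β l) ((x + t • v) l))
      (v l / s l * K.smoothIndicator (a l) (b l) (s l) (β l + 1) ((x + t • v) l)) t := by
    intro l _
    simp only [Pi.add_apply, Pi.smul_apply, smul_eq_mul]
    rcases (hs l).eq_or_lt with h0 | hpos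
    · simpa [hv l h0.symm] using hasDerivAt_const t _
    · have hlin : HasDerivAt (fun t : ℝ => x l + t * v l) (v l) t := by
        simpa using ((hasDerivAt_id t).mul_const (v l)).const_add (x l)
      exact ((K.hasDerivAt_smoothIndicator (hab l) hpos (β l) _).comp t hlin).congr_deriv (by ring)
  refine (HasDerivAt.fun_finsetProd hfactor).congr_deriv ?_
  rw [dirDeriv_apply_apply]
  refine Finset.sum_congr rfl fun j _ => ?_
  have hrest : ∏ l ∈ Finset.univ.erase j, K.smoothIndicator (a l) (b l) (s l)
        ((β + Pi.single j 1 : ι → ℕ) l) ((x + t • v) l) =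
      ∏ l ∈ Finset.univ.erase j, K.smoothIndicator (a l) (b l) (s l) (β l) ((x + t • v) l) :=
    Finset.prod_congr rfl fun l hl => by simp [Finset.ne_of_mem_erase hl]
  rw [boxJet_apply, ← Finset.mul_prod_erase _ _ (Finset.mem_univ j), hrest]
  simp only [Pi.add_apply β, Pi.single_eq_same, Pi.div_apply, smul_eq_mul]
  ring

end SmoothingKernel

/-! ### Quantiles -/

section
open ProbabilityTheory

/-- The smallest number whose distribution function is at least `p`. It is meaningful only for
`0 < p < 1`. -/
def quantile (ν : Measure ℝ) (p : ℝ) : ℝ := sInf {y | p ≤ cdf ν y}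

variable {ν : Measure ℝ} {p q : ℝ}

lemma quantile_le_iff (hp : 0 < p) (hp1 : p < 1) {y : ℝ} : quantile ν p ≤ y ↔ p ≤ cdf ν y := by
  have hne : {y | p ≤ cdf ν y}.Nonempty :=
    ((tendsto_cdf_atTop ν).eventually_const_le hp1).exists
  have hbdd : BddBelow {y | p ≤ cdf ν y} := by
    obtain ⟨x, hx⟩ := ((tendsto_cdf_atBot ν).eventually_lt_const hp).exists
    exact ⟨x, fun y hy => le_of_lt ((monotone_cdf ν).reflect_lt (hx.trans_le hy))⟩
  refine ⟨fun h => ?_, fun h => csInf_le hbdd h⟩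
  have hlt : ∀ w > y, p ≤ cdf ν w := fun w hw => by
    obtain ⟨v, hv, hvw⟩ := exists_lt_of_csInf_lt hne (h.trans_lt hw)
    exact hv.trans (monotone_cdf ν hvw.le)
  have hright : Filter.Tendsto (cdf ν) (nhdsWithin y (Set.Ioi y)) (nhds (cdf ν y)) :=
    ((cdf ν).right_continuous y).mono_left (nhdsWithin_mono _ Set.Ioi_subset_Ici_self)
  exact ge_of_tendsto hright (Filter.eventually_of_mem self_mem_nhdsWithin hlt)

lemma quantile_mono (hp : 0 < p) (hpq : p ≤ q) (hq : q < 1) : quantile ν p ≤ quantile ν q :=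
  (quantile_le_iff hp (hpq.trans_lt hq)).2
    (hpq.trans ((quantile_le_iff (hp.trans_le hpq) hq).1 le_rfl))

variable [IsProbabilityMeasure ν]

lemma measureReal_Ioi_quantile_le (hp : 0 < p) (hp1 : p < 1) :
    ν.real (Set.Ioi (quantile ν p)) ≤ 1 - p := by
  rw [← Set.compl_Iic, probReal_compl_eq_one_sub measurableSet_Iic, ← cdf_eq_real]
  linarith [(quantile_le_iff hp hp1).1 (le_refl (quantile ν p))]

lemma le_measureReal_Ici_quantile (hp : 0 < p) (hp1 : p < 1) :
    1 - p ≤ ν.real (Set.Ici (quantile ν p)) := by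
  have hlim : Function.leftLim (cdf ν) (quantile ν p) ≤ p :=
    le_of_tendsto ((monotone_cdf ν).tendsto_leftLim _) (Filter.eventually_of_mem
      self_mem_nhdsWithin fun y hy => (not_le.1 (mt (quantile_le_iff hp hp1).2 (not_le.2 hy))).le)
  rw [measureReal_def, ← measure_cdf ν, (cdf ν).measure_Ici (tendsto_cdf_atTop ν), measure_cdf,
    ENNReal.toReal_ofReal (by linarith)]
  linarith

lemma quantile_nonneg (hp : 0 < p) (hp1 : p < 1) (hν : ∀ᵐ y ∂ν, 0 ≤ y) : 0 ≤ quantile ν p := by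
  by_contra! hneg
  have hcdf : cdf ν (quantile ν p) = 0 := by
    rw [cdf_eq_real, measureReal_def, measure_eq_zero_iff_ae_notMem.2, ENNReal.toReal_zero]
    filter_upwards [hν] with y hy hle
    exact absurd (hy.trans hle) (not_le.2 hneg)
  exact absurd ((quantile_le_iff hp hp1).1 le_rfl) (by rw [hcdf]; exact not_le.2 hp)

end

/-! ### The partition into cells -/

section

/-- The number of the thresholds `y 0, …, y (N - 1)` which lie strictly below `t`. -/
def levelCount (y : ℕ → ℝ) (N : ℕ) (t : ℝ) : Fin (N + 1) :=
  ⟨{i ∈ Finset.range N | y i < t}.card,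
    Nat.lt_succ_of_le ((Finset.card_filter_le _ _).trans_eq (Finset.card_range N))⟩

lemma levelCount_le_iff {y : ℕ → ℝ} (hy : Monotone y) {N i : ℕ} (hi : i < N) {t : ℝ} :
    (levelCount y N t : ℕ) ≤ i ↔ t ≤ y i := by
  constructor
  · contrapose!
    intro hlt
    have hsub : Finset.range (i + 1) ⊆ {j ∈ Finset.range N | y j < t} := fun j hj => by
      rw [Finset.mem_range] at hj
      exact Finset.mem_filter.2 ⟨Finset.mem_range.2 (by lia), (hy (by lia)).trans_lt hlt⟩
    simpa [levelCount] using Finset.card_le_card hsub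
  · intro hle
    have hsub : {j ∈ Finset.range N | y j < t} ⊆ Finset.range i := fun j hj => by
      rw [Finset.mem_range]
      exact hy.reflect_lt ((Finset.mem_filter.1 hj).2.trans_le hle)
    simpa [levelCount] using Finset.card_le_card hsub

lemma measurable_levelCount {y : ℕ → ℝ} (hy : Monotone y) (N : ℕ) :
    Measurable (levelCount y N) := by
  refine measurable_of_Iic fun k => ?_
  rcases lt_or_ge (k : ℕ) N with hk | hk
  · convert! measurableSet_Iic (a := y k)
    ext t
    exact levelCount_le_iff hy hk
  · convert! MeasurableSet.univ
    exact Set.eq_univ_of_forall fun t => (Nat.lt_succ_iff.1 (levelCount y N t).is_lt).trans hk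

end

section
variable {ι : Type*} [Fintype ι] (F : Measure (ι → ℝ))

/-- The tail probability `2⁻ⁱ / (2 |ι|)`. -/
def cellTail (ι : Type*) [Fintype ι] (i : ℕ) : ℝ := (1 / 2) ^ i / (2 * Fintype.card ι)

/-- The threshold which the absolute value of the `l`-th coordinate exceeds with probability
`cellTail ι i`. -/
def cellThreshold (l : ι) (i : ℕ) : ℝ := quantile (F.map fun z => |z l|) (1 - cellTail ι i)

/-- The set of points whose `l`-th coordinate exceeds exactly `f l` of the first `N` thresholds in
absolute value, for each `l`. -/
def cell (N : ℕ) (f : ι → Fin (N + 1)) : Set (ι → ℝ) :=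
  {z | ∀ l, levelCount (cellThreshold F l) N |z l| = f l}

/-- The vector of thresholds bounding the coordinates of the points of `cell F N f`. -/
def cellScale {N : ℕ} (f : ι → Fin (N + 1)) : ι → ℝ := fun l => cellThreshold F l (f l)

variable {F} {N : ℕ} {f : ι → Fin (N + 1)}

lemma neg_mem_cell {z : ι → ℝ} : -z ∈ cell F N f ↔ z ∈ cell F N f := by
  simp [cell]

lemma pairwise_disjoint_cell : Pairwise (Function.onFun Disjoint (cell F N)) := fun _ _ hfg =>
  Set.disjoint_left.2 fun _ hf hg => hfg (funext fun l => (hf l).symm.trans (hg l))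

lemma iUnion_cell : ⋃ f, cell F N f = Set.univ :=
  Set.eq_univ_of_forall fun _ => Set.mem_iUnion.2 ⟨_, fun _ => rfl⟩

variable [Nonempty ι]

lemma cellTail_pos (i : ℕ) : 0 < cellTail ι i := by
  have := Fintype.card_pos (α := ι)
  unfold cellTail
  positivity

lemma cellTail_anti : Antitone (cellTail ι) := fun i j hij => by
  unfold cellTail
  gcongr ?_ / _
  exact pow_le_pow_of_le_one (by norm_num) (by norm_num) hij

lemma cellTail_le (i : ℕ) : cellTail ι i ≤ (1 / 2) ^ i / 2 := by
  have hι : (1 : ℝ) ≤ Fintype.card ι := by exact_mod_cast Fintype.card_pos (α := ι)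
  unfold cellTail
  gcongr
  linarith

lemma one_sub_cellTail_pos (i : ℕ) : 0 < 1 - cellTail ι i := by
  have := pow_le_one₀ (n := i) (by norm_num) (by norm_num : (1 / 2 : ℝ) ≤ 1)
  linarith [cellTail_le (ι := ι) i]

lemma one_sub_cellTail_lt_one (i : ℕ) : 1 - cellTail ι i < 1 := by
  linarith [cellTail_pos (ι := ι) i]

lemma cellThreshold_mono (l : ι) : Monotone (cellThreshold F l) := fun _ j hij =>
  quantile_mono (one_sub_cellTail_pos _) (sub_le_sub_left (cellTail_anti hij) 1)
    (one_sub_cellTail_lt_one j)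

lemma measurableSet_cell : MeasurableSet (cell F N f) := by
  unfold cell
  rw [Set.ofPred_forall]
  exact MeasurableSet.iInter fun l => (measurable_levelCount (cellThreshold_mono l) N).comp
    (measurable_pi_apply l).norm (measurableSet_singleton _)

lemma abs_le_cellScale {z : ι → ℝ} (hz : z ∈ cell F N f) (hf : ∀ l, (f l : ℕ) < N) (l : ι) :
    |z l| ≤ cellScale F f l :=
  (levelCount_le_iff (cellThreshold_mono l) (hf l)).1 (by rw [hz l])

lemma abs_le_cellScale_of_mem_cell_zero {z : ι → ℝ} (hz : z ∈ cell F N 0)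
    (hf : ∀ l, (f l : ℕ) < N) (l : ι) : |z l| ≤ cellScale F f l :=
  (levelCount_le_iff (cellThreshold_mono l) (hf l)).1 (by simp [hz l])

variable [IsProbabilityMeasure F]

omit [Fintype ι] [Nonempty ι] in
lemma isProbabilityMeasure_map_abs_eval (l : ι) : IsProbabilityMeasure (F.map fun z => |z l|) :=
  Measure.isProbabilityMeasure_map (measurable_pi_apply l).abs.aemeasurable

lemma measureReal_cellThreshold_lt_le (l : ι) (i : ℕ) :
    F.real {z | cellThreshold F l i < |z l|} ≤ cellTail ι i := by
  have := isProbabilityMeasure_map_abs_eval (F := F) l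
  have h := measureReal_Ioi_quantile_le (ν := F.map fun z => |z l|)
    (one_sub_cellTail_pos (ι := ι) i) (one_sub_cellTail_lt_one i)
  rwa [map_measureReal_apply (measurable_pi_apply l).abs measurableSet_Ioi, sub_sub_cancel] at h

lemma le_measureReal_cellThreshold_le (l : ι) (i : ℕ) :
    cellTail ι i ≤ F.real {z | cellThreshold F l i ≤ |z l|} := by
  have := isProbabilityMeasure_map_abs_eval (F := F) l
  have h := le_measureReal_Ici_quantile (ν := F.map fun z => |z l|)
    (one_sub_cellTail_pos (ι := ι) i) (one_sub_cellTail_lt_one i)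
  rwa [map_measureReal_apply (measurable_pi_apply l).abs measurableSet_Ici, sub_sub_cancel] at h

lemma cellScale_nonneg : 0 ≤ cellScale F f := fun l => by
  have := isProbabilityMeasure_map_abs_eval (F := F) l
  refine quantile_nonneg (one_sub_cellTail_pos _) (one_sub_cellTail_lt_one _) ?_
  exact (ae_map_iff (measurable_pi_apply l).abs.aemeasurable measurableSet_Ici).2
    (.of_forall fun z => abs_nonneg _)

lemma measureReal_cell_le (l : ι) : F.real (cell F N f) ≤ 2 * (1 / 2) ^ (f l : ℕ) := by
  rcases hk : (f l : ℕ) with _ | k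
  · exact measureReal_le_one.trans (by norm_num)
  have hsub : cell F N f ⊆ {z | cellThreshold F l k < |z l|} := fun z hz => by
    have hkN : k < N := by have := (f l).is_lt; lia
    refine not_le.1 (mt (levelCount_le_iff (cellThreshold_mono l) hkN).2 ?_)
    rw [hz l]
    lia
  calc F.real (cell F N f) ≤ cellTail ι k :=
        (measureReal_mono hsub).trans (measureReal_cellThreshold_lt_le l k)
    _ ≤ (1 / 2) ^ k / 2 := cellTail_le k
    _ ≤ 2 * (1 / 2) ^ (k + 1) := by
        rw [pow_succ]
        linarith [show (0 : ℝ) ≤ (1 / 2) ^ k by positivity]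

lemma half_le_measureReal_cell_zero (hN : 0 < N) : 1 / 2 ≤ F.real (cell F N 0) := by
  have hsub : (cell F N 0)ᶜ ⊆ ⋃ l, {z | cellThreshold F l 0 < |z l|} := by
    intro z hz
    obtain ⟨l, hl⟩ := not_forall.1 hz
    refine Set.mem_iUnion.2 ⟨l, not_le.1 (mt (levelCount_le_iff (cellThreshold_mono l) hN).2 ?_)⟩
    exact fun h => hl (Fin.ext (Nat.le_zero.1 h))
  have hcompl : F.real (cell F N 0)ᶜ ≤ ∑ _l : ι, cellTail ι 0 :=
    (measureReal_mono hsub).trans ((measureReal_iUnion_fintype_le _).trans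
      (Finset.sum_le_sum fun l _ => measureReal_cellThreshold_lt_le l 0))
  have hsum : ∑ _l : ι, cellTail ι 0 = 1 / 2 := by
    rw [Finset.sum_const, Finset.card_univ, nsmul_eq_mul, cellTail]
    field_simp
  rw [probReal_compl_eq_one_sub measurableSet_cell] at hcompl
  linarith

lemma isTailScale_cellScale :
    IsTailScale F (F.real (cell F N f) / (4 * Fintype.card ι)) (cellScale F f) := by
  intro l
  refine (cellScale_nonneg l).eq_or_lt'.imp_right fun hpos => ⟨hpos, ?_⟩
  refine le_trans ?_ (le_measureReal_cellThreshold_le l (f l))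
  calc F.real (cell F N f) / (4 * Fintype.card ι)
      ≤ 2 * (1 / 2) ^ (f l : ℕ) / (4 * Fintype.card ι) := by gcongr; exact measureReal_cell_le l
    _ = cellTail ι (f l) := by
        rw [cellTail]
        ring

end

section
variable {ι : Type*} [Fintype ι]

/-- The bound for `∑ f, p f ^ (1 / 4)` when `p f ≤ 2 * 2 ^ (-f l)` for all multi-indices `f` and
all `l`. -/
def quarticRootSum (ι : Type*) [Fintype ι] : ℝ :=
  2 * (1 - (1 / 2 : ℝ) ^ (1 / (4 * Fintype.card ι : ℝ)))⁻¹ ^ Fintype.card ι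

variable [Nonempty ι]

lemma half_rpow_lt_one : (1 / 2 : ℝ) ^ (1 / (4 * Fintype.card ι : ℝ)) < 1 := by
  have := Fintype.card_pos (α := ι)
  exact Real.rpow_lt_one (by norm_num) (by norm_num) (by positivity)

lemma half_rpow_pow : ((1 / 2 : ℝ) ^ (1 / (4 * Fintype.card ι : ℝ))) ^ (4 * Fintype.card ι) =
    1 / 2 := by
  have hcast : (4 * Fintype.card ι : ℝ) = (4 * Fintype.card ι : ℕ) := by push_cast; rfl
  rw [hcast, one_div (Nat.cast _)]
  exact Real.rpow_inv_natCast_pow (by norm_num) (by positivity)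

lemma quarticRootSum_pos : 0 < quarticRootSum ι :=
  mul_pos two_pos (pow_pos (inv_pos.2 (sub_pos.2 half_rpow_lt_one)) _)

lemma sqrt_sqrt_le_prod {p : ℝ} {f : ι → ℕ} (hp : 0 ≤ p) (hf : ∀ l, p ≤ 2 * (1 / 2) ^ f l) :
    √√p ≤ 2 * ∏ l, ((1 / 2 : ℝ) ^ (1 / (4 * Fintype.card ι : ℝ))) ^ f l := by
  set r := (1 / 2 : ℝ) ^ (1 / (4 * Fintype.card ι : ℝ))
  set m := Fintype.card ι
  have : 0 ≤ r := by positivity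
  have hr (k : ℕ) : (r ^ k) ^ (4 * m) = (1 / 2) ^ k := by rw [pow_right_comm, half_rpow_pow]
  refine (pow_le_pow_iff_left₀ (by positivity) (by positivity)
    (show 4 * m ≠ 0 by positivity)).1 ?_
  calc (√√p) ^ (4 * m) = ∏ _l : ι, p := by
        rw [Finset.prod_const, Finset.card_univ, pow_mul, show 4 = 2 * 2 from rfl, pow_mul,
          Real.sq_sqrt (Real.sqrt_nonneg p), Real.sq_sqrt hp]
    _ ≤ ∏ l : ι, 2 * (1 / 2) ^ f l := Finset.prod_le_prod (fun _ _ => hp) fun l _ => hf l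
    _ = 2 ^ m * (∏ l, r ^ f l) ^ (4 * m) := by
        rw [Finset.prod_mul_distrib, Finset.prod_const, Finset.card_univ, ← Finset.prod_pow]
        simp only [hr, m]
    _ ≤ 2 ^ (4 * m) * (∏ l, r ^ f l) ^ (4 * m) := by
        gcongr
        exacts [one_le_two, by lia]
    _ = (2 * ∏ l, r ^ f l) ^ (4 * m) := (mul_pow _ _ _).symm

lemma sum_sqrt_sqrt_le [DecidableEq ι] {N : ℕ} {p : (ι → Fin (N + 1)) → ℝ} (hp : ∀ f, 0 ≤ p f)
    (hf : ∀ f l, p f ≤ 2 * (1 / 2) ^ (f l : ℕ)) : ∑ f, √√(p f) ≤ quarticRootSum ι := by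
  set r := (1 / 2 : ℝ) ^ (1 / (4 * Fintype.card ι : ℝ))
  have hr0 : 0 ≤ r := by positivity
  have hr1 : r < 1 := half_rpow_lt_one
  have hgeom : ∑ k : Fin (N + 1), r ^ (k : ℕ) ≤ (1 - r)⁻¹ := by
    rw [Fin.sum_univ_eq_sum_range (fun k => r ^ k), ← tsum_geometric_of_lt_one hr0 hr1]
    exact (summable_geometric_of_lt_one hr0 hr1).sum_le_tsum _ fun _ _ => by positivity
  calc ∑ f, √√(p f) ≤ ∑ f : ι → Fin (N + 1), 2 * ∏ l, r ^ (f l : ℕ) :=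
        Finset.sum_le_sum fun f _ => sqrt_sqrt_le_prod (hp f) (hf f)
    _ = 2 * ∏ _l : ι, ∑ k : Fin (N + 1), r ^ (k : ℕ) := by
        rw [← Finset.mul_sum, Finset.prod_univ_sum, Fintype.piFinset_univ]
    _ ≤ quarticRootSum ι := by
        rw [Finset.prod_const, Finset.card_univ, quarticRootSum]
        have h0 : 0 ≤ ∑ k : Fin (N + 1), r ^ (k : ℕ) := Finset.sum_nonneg fun _ _ => by positivity
        gcongr

end

/-! ### Moving mass to a core set -/

section
variable {α : Type*} [MeasurableSpace α]

/-- The density with respect to `F` of a signed measure of total mass zero, which agrees with `F` on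
`A` and compensates for it by a multiple of the restriction of `F` to `Z`. -/
def exchangeWeight (F : Measure α) (A Z : Set α) (z : α) : ℝ :=
  A.indicator 1 z - F.real A / F.real Z * Z.indicator 1 z

variable {F : Measure α} {A Z : Set α}

lemma measureReal_div_le_two [IsProbabilityMeasure F] (hZ : 1 / 2 ≤ F.real Z) :
    F.real A / F.real Z ≤ 2 := by
  rw [div_le_iff₀ (by linarith)]
  linarith [measureReal_le_one (μ := F) (s := A)]

variable (hA : MeasurableSet A) (hZm : MeasurableSet Z)
include hA hZm

lemma measurable_exchangeWeight : Measurable (exchangeWeight F A Z) :=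
  (measurable_one.indicator hA).sub ((measurable_one.indicator hZm).const_mul _)

variable [IsFiniteMeasure F]

lemma memLp_two_exchangeWeight : MemLp (exchangeWeight F A Z) 2 F :=
  (memLp_indicator_const 2 hA 1 (Or.inr (measure_ne_top F A))).sub
    ((memLp_indicator_const 2 hZm 1 (Or.inr (measure_ne_top F Z))).const_mul _)

lemma integral_exchangeWeight (hZ : 0 < F.real Z) : ∫ z, exchangeWeight F A Z z ∂F = 0 := by
  have hint {S : Set α} (hS : MeasurableSet S) : Integrable (S.indicator (1 : α → ℝ)) F :=
    (integrable_const (1 : ℝ)).indicator hS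
  simp only [exchangeWeight]
  rw [integral_sub (hint hA) ((hint hZm).const_mul _), integral_const_mul,
    integral_indicator_one hA, integral_indicator_one hZm, div_mul_cancel₀ _ hZ.ne', sub_self]

omit [IsFiniteMeasure F] in
lemma integral_exchangeWeight_sq_le [IsProbabilityMeasure F] (hZ : 1 / 2 ≤ F.real Z) :
    ∫ z, exchangeWeight F A Z z ^ 2 ∂F ≤ 3 * F.real A := by
  have hint {S : Set α} (hS : MeasurableSet S) : Integrable (S.indicator (1 : α → ℝ)) F :=
    (integrable_const (1 : ℝ)).indicator hS
  set c := F.real A / F.real Z with hc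
  have hc0 : 0 ≤ c := by positivity
  have hc2 : c ≤ 2 := measureReal_div_le_two hZ
  have hcZ : c * F.real Z = F.real A := div_mul_cancel₀ _ (by linarith)
  have hpt (z : α) :
      exchangeWeight F A Z z ^ 2 ≤ A.indicator 1 z + c ^ 2 * Z.indicator 1 z := by
    by_cases hzA : z ∈ A <;> by_cases hzZ : z ∈ Z <;>
      simp [exchangeWeight, hzA, hzZ, ← hc]
    nlinarith
  calc ∫ z, exchangeWeight F A Z z ^ 2 ∂F
      ≤ ∫ z, (A.indicator 1 z + c ^ 2 * Z.indicator 1 z) ∂F :=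
        integral_mono (memLp_two_exchangeWeight hA hZm).integrable_sq
          ((hint hA).add ((hint hZm).const_mul _)) hpt
    _ = F.real A + c * (c * F.real Z) := by
        rw [integral_add (hint hA) ((hint hZm).const_mul _), integral_const_mul,
          integral_indicator_one hA, integral_indicator_one hZm]
        ring
    _ ≤ 3 * F.real A := by
        rw [hcZ]
        nlinarith [measureReal_nonneg (μ := F) (s := A)]

end

section
variable {α : Type*} [MeasurableSpace α] [AddCommMonoid α] [MeasurableAdd₂ α]

/-- The operator of the signed measure with density `exchangeWeight F A Z` with respect to `F`. -/
def exchangeOp (F : Measure α) [IsFiniteMeasure F] (A Z : Set α) : BddMeas α →L[ℝ] BddMeas α :=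
  convOp (F.restrict A) - (F.real A / F.real Z) • convOp (F.restrict Z)

/-- The operator of `F` conditioned on `Z`, minus the identity. -/
def coreOp (F : Measure α) [IsFiniteMeasure F] (Z : Set α) : BddMeas α →L[ℝ] BddMeas α :=
  (1 / F.real Z) • convOp (F.restrict Z) - 1

section
variable {F : Measure α} [IsFiniteMeasure F] {A Z : Set α}

lemma commute_exchangeOp_right {P : BddMeas α →L[ℝ] BddMeas α}
    (hP : ∀ (μ : Measure α) [IsFiniteMeasure μ], Commute P (convOp μ)) :
    Commute P (exchangeOp F A Z) :=
  (hP _).sub_right ((hP _).smul_right _)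

lemma commute_exchangeOp_convOp (μ : Measure α) [IsFiniteMeasure μ] :
    Commute (exchangeOp F A Z) (convOp μ) :=
  (commute_exchangeOp_right fun ν _ => commute_convOp μ ν).symm

lemma commute_coreOp_convOp (μ : Measure α) [IsFiniteMeasure μ] :
    Commute (coreOp F Z) (convOp μ) :=
  ((commute_convOp _ _).smul_left _).sub_left (Commute.one_left _)

lemma apply_convOp_pow_four_mul_of_commute {V : Measure α} [IsFiniteMeasure V]
    {P : BddMeas α →L[ℝ] BddMeas α} (hP : Commute P (convOp V)) (n : ℕ) (f : BddMeas α) :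
    P ((convOp V ^ (4 * n)) f) = (convOp V ^ (2 * n)) (P ((convOp V ^ (2 * n)) f)) := by
  rw [show 4 * n = 2 * n + 2 * n by lia, pow_add, mul_apply_eq_comp]
  exact DFunLike.congr_fun (hP.pow_right (2 * n)).eq _

lemma exchangeOp_apply (f : BddMeas α) (x : α) : exchangeOp F A Z f x =
    ∫ z in A, f (x + z) ∂F - F.real A / F.real Z * ∫ z in Z, f (x + z) ∂F := rfl

lemma norm_convOp_restrict_apply_le (f : BddMeas α) :
    ‖convOp (F.restrict A) f‖ ≤ F.real A * ‖f‖ := by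
  simpa using norm_convOp_apply_le (F.restrict A) f

lemma norm_exchangeOp_apply_le (hZ : 0 < F.real Z) (f : BddMeas α) :
    ‖exchangeOp F A Z f‖ ≤ 2 * F.real A * ‖f‖ :=
  calc ‖exchangeOp F A Z f‖ ≤ ‖convOp (F.restrict A) f‖ +
        ‖(F.real A / F.real Z) • convOp (F.restrict Z) f‖ := norm_sub_le _ _
    _ ≤ F.real A * ‖f‖ + F.real A / F.real Z * (F.real Z * ‖f‖) := by
        rw [norm_smul, Real.norm_of_nonneg (by positivity)]
        gcongr <;> exact norm_convOp_restrict_apply_le f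
    _ = 2 * F.real A * ‖f‖ := by
        field_simp
        ring

lemma exchangeOp_apply_eq_integral (hA : MeasurableSet A) (hZm : MeasurableSet Z) (f : BddMeas α)
    (x : α) : exchangeOp F A Z f x = ∫ z, exchangeWeight F A Z z * f (x + z) ∂F := by
  have hf : Integrable (fun z => f (x + z)) F := f.integrable_comp F (measurable_const_add x)
  rw [exchangeOp_apply, ← integral_indicator hA, ← integral_indicator hZm, ← integral_const_mul,
    ← integral_sub (hf.indicator hA) ((hf.indicator hZm).const_mul _)]
  refine integral_congr_ae (.of_forall fun z => ?_)
  by_cases hzA : z ∈ A <;> by_cases hzZ : z ∈ Z <;> simp [exchangeWeight, hzA, hzZ, sub_mul]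

end

section
variable {F : Measure α} [IsProbabilityMeasure F] {A Z : Set α}
  {V : Measure α} [IsProbabilityMeasure V] {lam : ℝ} (hA : MeasurableSet A)
  (hZm : MeasurableSet Z) (hZ : 1 / 2 ≤ F.real Z) (hlam : 0 < lam)
  (hV : ENNReal.ofReal lam • F ≤ V) (n : ℕ) (f : BddMeas α)
include hA hZm hZ hlam hV

lemma norm_exchangeOp_convOp_pow_apply_le : ‖exchangeOp F A Z ((convOp V ^ n) f)‖ ≤
    ‖f‖ * √(3 * F.real A) / √(lam * (n + 1)) := by
  refine BddMeas.norm_le_of_nonempty fun x => ?_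
  rw [exchangeOp_apply_eq_integral hA hZm]
  refine (abs_integral_mul_convOp_pow_apply_add_le_of_le hlam hV (measurable_exchangeWeight hA hZm)
    (memLp_two_exchangeWeight hA hZm) (integral_exchangeWeight hA hZm (by linarith)) n f x).trans ?_
  gcongr
  exact integral_exchangeWeight_sq_le hA hZm hZ

lemma norm_exchangeOp_convOp_pow_two_mul_apply_le :
    ‖exchangeOp F A Z ((convOp V ^ (2 * n)) f)‖ ≤
      ‖f‖ * √(3 * F.real A) / √(lam * (n + 1)) := by
  rw [two_mul, pow_add, mul_apply_eq_comp]
  refine (norm_exchangeOp_convOp_pow_apply_le hA hZm hZ hlam hV n _).trans ?_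
  gcongr
  exact norm_convOp_pow_apply_le V n f

lemma norm_exchangeOp_commute_apply_le {P : BddMeas α →L[ℝ] BddMeas α}
    (hP : Commute P (convOp V)) : ‖exchangeOp F A Z (P ((convOp V ^ (4 * n)) f))‖ ≤
      ‖P ((convOp V ^ (2 * n)) f)‖ * √(3 * F.real A) / √(lam * (n + 1)) := by
  rw [apply_convOp_pow_four_mul_of_commute hP]
  exact norm_exchangeOp_convOp_pow_two_mul_apply_le hA hZm hZ hlam hV n _

end

lemma convOp_sub_one_eq_coreOp_add_sum {κ : Type*} [Fintype κ] {F : Measure α}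
    [IsProbabilityMeasure F] {A : κ → Set α} (hA : ∀ i, MeasurableSet (A i))
    (hdisj : Pairwise (Function.onFun Disjoint A)) (hU : ⋃ i, A i = Set.univ) (Z : Set α) :
    convOp F - 1 = coreOp F Z + ∑ i, exchangeOp F (A i) Z := by
  have hsum : convOp F = ∑ i, convOp (F.restrict (A i)) := by
    ext f x
    rw [sum_apply, BddMeas.sum_apply]
    simp only [convOp_apply]
    rw [← integral_iUnion_fintype hA hdisj fun i =>
      (f.integrable_comp F (measurable_const_add x)).integrableOn, hU, Measure.restrict_univ]
  have hmass : ∑ i, F.real (A i) = 1 := by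
    rw [← probReal_univ (μ := F), ← hU, measureReal_iUnion_fintype hdisj hA]
  simp only [coreOp, exchangeOp]
  rw [Finset.sum_sub_distrib, ← Finset.sum_smul, ← Finset.sum_div, hmass, ← hsum]
  abel

end

/-! ### Second differences -/

section
variable {ι : Type*} [Fintype ι]

/-- The ratio between the scale of smoothing and the size of the steps which makes the Taylor
expansion of the smoothed boxes effective. -/
def smoothingRatio (ι : Type*) [Fintype ι] : ℝ := 2 * Fintype.card ι ^ 2

/-- The indicator of the box `[a, b]`, smoothed at the scale `smoothingRatio ι • Y`. -/
def SmoothingKernel.smoothedBox (K : SmoothingKernel) (Y a b : ι → ℝ) : BddMeas (ι → ℝ) :=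
  convOp (scaledLaw K.law (smoothingRatio ι • Y)) (boxIndicator a b)

/-- A measurable symmetric set whose points are bounded coordinatewise by `Y`. -/
structure IsSymmWithin (A : Set (ι → ℝ)) (Y : ι → ℝ) : Prop where
  measurableSet : MeasurableSet A
  neg_mem_iff : ∀ z, -z ∈ A ↔ z ∈ A
  abs_le : ∀ z ∈ A, ∀ l, |z l| ≤ Y l

lemma smoothingRatio_nonneg : 0 ≤ smoothingRatio ι := by
  unfold smoothingRatio
  positivity

omit [Fintype ι] in
lemma IsSymmWithin.isNegInvariant_restrict {A : Set (ι → ℝ)} {Y : ι → ℝ} (hA : IsSymmWithin A Y)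
    (F : Measure (ι → ℝ)) [F.IsNegInvariant] : (F.restrict A).IsNegInvariant := by
  have hpre : (fun z => -z) ⁻¹' A = A := Set.ext hA.neg_mem_iff
  have h := Measure.restrict_map (μ := F) measurable_neg hA.measurableSet
  rw [Measure.map_neg_eq_self, hpre] at h
  exact ⟨h.symm⟩

lemma isSymmWithin_cell [Nonempty ι] {F : Measure (ι → ℝ)} {N : ℕ} {f : ι → Fin (N + 1)}
    (hf : ∀ l, (f l : ℕ) < N) : IsSymmWithin (cell F N f) (cellScale F f) :=
  ⟨measurableSet_cell, fun _ => neg_mem_cell, fun _ hz => abs_le_cellScale hz hf⟩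

lemma isSymmWithin_cell_zero [Nonempty ι] {F : Measure (ι → ℝ)} {N : ℕ} {f : ι → Fin (N + 1)}
    (hf : ∀ l, (f l : ℕ) < N) : IsSymmWithin (cell F N 0) (cellScale F f) :=
  ⟨measurableSet_cell, fun _ => neg_mem_cell, fun _ hz => abs_le_cellScale_of_mem_cell_zero hz hf⟩

section
variable [DecidableEq ι] {F V : Measure (ι → ℝ)} [IsProbabilityMeasure F] [IsProbabilityMeasure V]
  [F.IsNegInvariant] {lam M : ℝ} {A Z : Set (ι → ℝ)} {Y : ι → ℝ} {u : Jet ι}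
  (hlam : 0 < lam) (hV : ENNReal.ofReal lam • F ≤ V)
include hlam hV

lemma norm_convOp_restrict_sub_smul_le (hA : IsSymmWithin A Y)
    (hu : u ∈ jets (smoothingRatio ι • Y)) (hM : ∀ β, ‖u β‖ ≤ M) (n : ℕ) (β : ι → ℕ) :
    ‖convOp (F.restrict A) ((convOp V ^ (2 * n)) (u β)) -
      F.real A • (convOp V ^ (2 * n)) (u β)‖ ≤ 4 * Fintype.card ι ^ 2 * M / (lam * (n + 1)) := by
  have hinv := hA.isNegInvariant_restrict F
  have hV' : ENNReal.ofReal lam • F.restrict A ≤ V :=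
    (smul_mono_right _ Measure.restrict_le_self).trans hV
  have hι : (Fintype.card ι : ℝ) ^ 2 * (smoothingRatio ι)⁻¹ ≤ 1 / 2 := by
    rw [smoothingRatio, mul_inv, mul_left_comm, one_div]
    exact mul_le_of_le_one_right (by norm_num) mul_inv_le_one
  have hsupp : ∀ᵐ z ∂F.restrict A, ∀ j,
      |z j| ≤ (smoothingRatio ι)⁻¹ * (smoothingRatio ι • Y) j := by
    filter_upwards [ae_restrict_mem hA.measurableSet] with z hz j
    have hpos : 0 < smoothingRatio ι := by
      have := Fintype.card_pos_iff.2 ⟨j⟩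
      unfold smoothingRatio
      positivity
    rw [Pi.smul_apply, smul_eq_mul, inv_mul_cancel_left₀ hpos.ne']
    exact hA.abs_le z hz j
  simpa using norm_convOp_sub_smul_convOp_pow_le (inv_nonneg.2 smoothingRatio_nonneg) hι hsupp hlam
    hV' hu hM n β

lemma norm_coreOp_jet_le (hZ : 1 / 2 ≤ F.real Z) (hZY : IsSymmWithin Z Y)
    (hu : u ∈ jets (smoothingRatio ι • Y)) (hM : ∀ β, ‖u β‖ ≤ M) (n : ℕ) (β : ι → ℕ) :
    ‖coreOp F Z ((convOp V ^ (2 * n)) (u β))‖ ≤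
      8 * Fintype.card ι ^ 2 * M / (lam * (n + 1)) := by
  have hZ0 : 0 < F.real Z := by linarith
  have hinv : 1 / F.real Z ≤ 2 := by rw [div_le_iff₀ hZ0]; linarith
  have hcore (g : BddMeas (ι → ℝ)) :
      coreOp F Z g = (1 / F.real Z) • (convOp (F.restrict Z) g - F.real Z • g) := by
    rw [smul_sub, smul_smul, one_div_mul_cancel hZ0.ne', one_smul]
    rfl
  rw [hcore, norm_smul, Real.norm_of_nonneg (by positivity)]
  calc _ ≤ 2 * (4 * Fintype.card ι ^ 2 * M / (lam * (n + 1))) := by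
        gcongr
        exact norm_convOp_restrict_sub_smul_le hlam hV hZY hu hM n β
    _ = _ := by ring

lemma norm_coreOp_coreOp_jet_le (hZ : 1 / 2 ≤ F.real Z) (hZY : IsSymmWithin Z Y)
    (hu : u ∈ jets (smoothingRatio ι • Y)) (hM : ∀ β, ‖u β‖ ≤ M) (n : ℕ) (β : ι → ℕ) :
    ‖coreOp F Z (coreOp F Z ((convOp V ^ (4 * n)) (u β)))‖ ≤
      8 * Fintype.card ι ^ 2 * (8 * Fintype.card ι ^ 2 * M / (lam * (n + 1))) /
        (lam * (n + 1)) := by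
  have hVu := convOp_pow_mem_jets hu V (2 * n)
  set w : Jet ι := fun β => coreOp F Z ((convOp V ^ (2 * n)) (u β))
  have hjet : w ∈ jets (smoothingRatio ι • Y) :=
    Submodule.sub_mem _ (Submodule.smul_mem _ _ (convOp_mem_jets hVu (F.restrict Z))) hVu
  rw [apply_convOp_pow_four_mul_of_commute (commute_coreOp_convOp V)]
  exact norm_coreOp_jet_le hlam hV hZ hZY hjet (norm_coreOp_jet_le hlam hV hZ hZY hu hM n) n β

lemma norm_exchangeOp_jet_le (hZ : 1 / 2 ≤ F.real Z) (hAY : IsSymmWithin A Y)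
    (hZY : IsSymmWithin Z Y) (hu : u ∈ jets (smoothingRatio ι • Y)) (hM : ∀ β, ‖u β‖ ≤ M) (n : ℕ)
    (β : ι → ℕ) : ‖exchangeOp F A Z ((convOp V ^ (2 * n)) (u β))‖ ≤
      12 * Fintype.card ι ^ 2 * M / (lam * (n + 1)) := by
  have hZ0 : 0 < F.real Z := by linarith
  have hexch (g : BddMeas (ι → ℝ)) : exchangeOp F A Z g =
      (convOp (F.restrict A) g - F.real A • g) -
        (F.real A / F.real Z) • (convOp (F.restrict Z) g - F.real Z • g) := by
    rw [smul_sub, smul_smul, div_mul_cancel₀ _ hZ0.ne', sub_sub_sub_cancel_right]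
    rfl
  rw [hexch]
  refine (norm_sub_le _ _).trans ?_
  rw [norm_smul, Real.norm_of_nonneg (by positivity)]
  calc _ ≤ 4 * Fintype.card ι ^ 2 * M / (lam * (n + 1)) +
        2 * (4 * Fintype.card ι ^ 2 * M / (lam * (n + 1))) := by
        gcongr
        · exact norm_convOp_restrict_sub_smul_le hlam hV hAY hu hM n β
        · exact measureReal_div_le_two hZ
        · exact norm_convOp_restrict_sub_smul_le hlam hV hZY hu hM n β
    _ = _ := by ring

end

section
variable {F V : Measure (ι → ℝ)} [IsProbabilityMeasure F] [IsProbabilityMeasure V]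
  [F.IsNegInvariant] {lam : ℝ} {A Z : Set (ι → ℝ)} {Y : ι → ℝ}
  (hlam : 0 < lam) (hV : ENNReal.ofReal lam • F ≤ V) (K : SmoothingKernel)
include hlam hV

lemma norm_exchangeOp_boxIndicator_sub_smoothedBox_le [Nonempty ι] (hA : MeasurableSet A)
    (hZm : MeasurableSet Z) (hZ : 1 / 2 ≤ F.real Z) (hp : 0 < F.real A)
    (hY : IsTailScale F (F.real A / (4 * Fintype.card ι)) Y) (n : ℕ) (a b : ι → ℝ) :
    ‖exchangeOp F A Z ((convOp V ^ (2 * n)) (boxIndicator a b - K.smoothedBox Y a b))‖ ≤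
      Fintype.card ι * (4 * (smoothingRatio ι * ∫ r, |r| ∂K.law + 2)) * √(12 * Fintype.card ι) /
        (lam * (n + 1)) := by
  set c := Fintype.card ι * (4 * (smoothingRatio ι * ∫ r, |r| ∂K.law + 2))
  set L := lam * (n + 1)
  have hL : 0 < L := by positivity
  have hsqrt : √(3 * F.real A) / √(lam * (F.real A / (4 * Fintype.card ι)) * (n + 1)) =
      √(12 * Fintype.card ι) / √L := by
    rw [← Real.sqrt_div' _ (by positivity), ← Real.sqrt_div' _ hL.le]
    congr 1
    field_simp
    ring
  rw [two_mul, pow_add, mul_apply_eq_comp]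
  calc _ ≤ ‖(convOp V ^ n) (boxIndicator a b - K.smoothedBox Y a b)‖ * √(3 * F.real A) / √L :=
        norm_exchangeOp_convOp_pow_apply_le hA hZm hZ hlam hV n _
    _ ≤ c / √(lam * (F.real A / (4 * Fintype.card ι)) * (n + 1)) * √(3 * F.real A) / √L := by
        gcongr
        exact norm_convOp_pow_boxIndicator_sub_le hlam hV (by positivity) smoothingRatio_nonneg hY
          K.integrable_abs_law n a b
    _ = c * (√(3 * F.real A) / √(lam * (F.real A / (4 * Fintype.card ι)) * (n + 1))) / √L := by
        ring
    _ = c * √(12 * Fintype.card ι) / (√L * √L) := by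
        rw [hsqrt]
        field_simp
    _ = _ := by rw [Real.mul_self_sqrt hL.le]

end

end

lemma norm_add_sum_apply_add_sum_apply_le {E κ : Type*} [NormedAddCommGroup E] [NormedSpace ℝ E]
    [Fintype κ] {Q : E →L[ℝ] E} {T : κ → E →L[ℝ] E} {w : κ → ℝ} {a b c S : ℝ} {u : E}
    (hcomm : ∀ i, Commute Q (T i)) (hQ : ‖Q (Q u)‖ ≤ a) (hT : ∀ i, ‖T i (Q u)‖ ≤ b * w i)
    (hTT : ∀ i j, ‖T i (T j u)‖ ≤ c * (w i * w j)) (hb : 0 ≤ b) (hc : 0 ≤ c)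
    (hw : ∀ i, 0 ≤ w i) (hS : ∑ i, w i ≤ S) :
    ‖(Q + ∑ i, T i) ((Q + ∑ i, T i) u)‖ ≤ a + 2 * (b * S) + c * S ^ 2 := by
  have hS0 : 0 ≤ ∑ i, w i := Finset.sum_nonneg fun i _ => hw i
  have hexpand : (Q + ∑ i, T i) ((Q + ∑ i, T i) u) =
      Q (Q u) + (2 : ℝ) • ∑ i, T i (Q u) + ∑ i, ∑ j, T i (T j u) := by
    have hQT (i : κ) : Q (T i u) = T i (Q u) := DFunLike.congr_fun (hcomm i).eq u
    simp only [add_apply, sum_apply, map_add, map_sum, hQT, two_smul, Finset.sum_add_distrib]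
    rw [Finset.sum_comm (f := fun i j => T i (T j u))]
    abel
  have hsum : ‖∑ i, T i (Q u)‖ ≤ b * S :=
    calc _ ≤ ∑ i, b * w i := norm_sum_le_of_le _ fun i _ => hT i
      _ ≤ b * S := by rw [← Finset.mul_sum]; gcongr
  have hsum₂ : ‖∑ i, ∑ j, T i (T j u)‖ ≤ c * S ^ 2 :=
    calc _ ≤ ∑ i, ∑ j, c * (w i * w j) :=
          norm_sum_le_of_le _ fun i _ => norm_sum_le_of_le _ fun j _ => hTT i j
      _ = c * (∑ i, w i) ^ 2 := by simp only [← Finset.mul_sum, sq, Finset.sum_mul_sum]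
      _ ≤ c * S ^ 2 := by gcongr
  rw [hexpand]
  refine (norm_add₃_le).trans ?_
  rw [norm_smul, Real.norm_of_nonneg zero_le_two]
  gcongr

section
variable {ι : Type*} [Fintype ι]

/-- The constant in the estimates of `exchangeOp` on indicators of boxes and on smoothed boxes. -/
def SmoothingKernel.exchangeConst (K : SmoothingKernel) (ι : Type*) [Fintype ι] : ℝ :=
  Fintype.card ι * (4 * (smoothingRatio ι * ∫ r, |r| ∂K.law + 2)) * √(12 * Fintype.card ι) +
    12 * Fintype.card ι ^ 2 * (1 + 2 * K.bound) ^ Fintype.card ι + 4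

lemma SmoothingKernel.four_le_exchangeConst (K : SmoothingKernel) : 4 ≤ K.exchangeConst ι := by
  have := K.bound_nonneg
  have : 0 ≤ ∫ r, |r| ∂K.law := integral_nonneg fun r => abs_nonneg r
  have := smoothingRatio_nonneg (ι := ι)
  exact le_add_of_nonneg_left (by positivity)

/-- The constant in the estimate of the second difference of a smoothed box. -/
def SmoothingKernel.secondDiffConst (K : SmoothingKernel) (ι : Type*) [Fintype ι] (lam : ℝ) : ℝ :=
  64 * Fintype.card ι ^ 4 * (1 + 2 * K.bound) ^ Fintype.card ι / √lam +
    2 * (8 * Fintype.card ι ^ 2 * (1 + 2 * K.bound) ^ Fintype.card ι * √3 * quarticRootSum ι) +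
    K.exchangeConst ι * √3 * quarticRootSum ι ^ 2

lemma SmoothingKernel.secondDiffConst_nonneg [Nonempty ι] (K : SmoothingKernel) (lam : ℝ) :
    0 ≤ K.secondDiffConst ι lam := by
  have := K.bound_nonneg
  have := quarticRootSum_pos (ι := ι)
  have := K.four_le_exchangeConst (ι := ι)
  rw [SmoothingKernel.secondDiffConst]
  positivity

variable [Nonempty ι] {F V : Measure (ι → ℝ)} [IsProbabilityMeasure F]
  [IsProbabilityMeasure V] [F.IsNegInvariant] {lam : ℝ} {A Z : Set (ι → ℝ)} {Y : ι → ℝ}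
  (hlam : 0 < lam) (hV : ENNReal.ofReal lam • F ≤ V) (K : SmoothingKernel)
include hlam hV

lemma norm_exchangeOp_boxIndicator_le_of_isSymmWithin (hZ : 1 / 2 ≤ F.real Z)
    (hAY : IsSymmWithin A Y) (hZY : IsSymmWithin Z Y) (hY0 : 0 ≤ Y)
    (hY : IsTailScale F (F.real A / (4 * Fintype.card ι)) Y) (n : ℕ) {a b : ι → ℝ} (hab : a ≤ b) :
    ‖exchangeOp F A Z ((convOp V ^ (2 * n)) (boxIndicator a b))‖ ≤
      K.exchangeConst ι / (lam * (n + 1)) := by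
  classical
  rcases eq_or_lt_of_le (measureReal_nonneg (μ := F) (s := A)) with hp | hp
  · refine (norm_exchangeOp_apply_le (by linarith) _).trans ?_
    have := K.four_le_exchangeConst (ι := ι)
    rw [← hp, mul_zero, zero_mul]
    positivity
  · have hjet := norm_exchangeOp_jet_le hlam hV hZ hAY hZY
      (K.boxJet_mem_jets hab (smul_nonneg smoothingRatio_nonneg hY0)) (K.norm_boxJet_le a b _) n 0
    rw [K.boxJet_zero] at hjet
    have hbox := norm_exchangeOp_boxIndicator_sub_smoothedBox_le hlam hV K hAY.measurableSet
      hZY.measurableSet hZ hp hY n a b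
    rw [map_sub, map_sub] at hbox
    calc _ ≤ _ := norm_le_norm_sub_add _ _
      _ ≤ _ := add_le_add hbox hjet
      _ = (K.exchangeConst ι - 4) / (lam * (n + 1)) := by
          rw [← add_div, SmoothingKernel.exchangeConst, add_sub_cancel_right]
      _ ≤ _ := by gcongr; linarith

lemma norm_exchangeOp_cell_boxIndicator_le (n : ℕ) (f : ι → Fin (n + 2)) {a b : ι → ℝ}
    (hab : a ≤ b) : ‖exchangeOp F (cell F (n + 1) f) (cell F (n + 1) 0)
      ((convOp V ^ (2 * n)) (boxIndicator a b))‖ ≤ K.exchangeConst ι / (lam * (n + 1)) := by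
  have hZ : 1 / 2 ≤ F.real (cell F (n + 1) 0) := half_le_measureReal_cell_zero n.succ_pos
  by_cases hf : ∀ l, (f l : ℕ) < n + 1
  · exact norm_exchangeOp_boxIndicator_le_of_isSymmWithin hlam hV K hZ (isSymmWithin_cell hf)
      (isSymmWithin_cell_zero hf) cellScale_nonneg isTailScale_cellScale n hab
  · push Not at hf
    obtain ⟨l, hl⟩ := hf
    have hl' : (f l : ℕ) = n + 1 := by lia
    have hlam1 : lam ≤ 1 := ENNReal.ofReal_le_one.1 (by simpa using hV Set.univ)
    have hpow : (1 / 2 : ℝ) ^ (n + 1) ≤ 1 / (n + 1) := by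
      rw [one_div_pow]
      gcongr
      exact_mod_cast (n + 1).lt_two_pow_self.le
    calc _ ≤ 2 * F.real (cell F (n + 1) f) * ‖(convOp V ^ (2 * n)) (boxIndicator a b)‖ :=
          norm_exchangeOp_apply_le (by linarith) _
      _ ≤ 2 * (2 * (1 / 2) ^ (n + 1)) * 1 := by
          gcongr
          · exact (measureReal_cell_le l).trans_eq (by rw [hl'])
          · exact (norm_convOp_pow_apply_le V _ _).trans (norm_boxIndicator_le a b)
      _ ≤ 2 * (2 * (1 / (n + 1))) * 1 := by gcongr
      _ = 4 / (1 * (n + 1)) := by ring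
      _ ≤ _ := by
          have hconst := K.four_le_exchangeConst (ι := ι)
          gcongr

lemma norm_exchangeOp_cell_smoothedBox_le (n : ℕ) (f : ι → Fin (n + 2)) (Y : ι → ℝ) {a b : ι → ℝ}
    (hab : a ≤ b) : ‖exchangeOp F (cell F (n + 1) f) (cell F (n + 1) 0)
      ((convOp V ^ (2 * n)) (K.smoothedBox Y a b))‖ ≤ K.exchangeConst ι / (lam * (n + 1)) := by
  set S := scaledLaw K.law (smoothingRatio ι • Y)
  set T := exchangeOp F (cell F (n + 1) f) (cell F (n + 1) 0)
  have hcomm : T ((convOp V ^ (2 * n)) (convOp S (boxIndicator a b))) =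
      convOp S (T ((convOp V ^ (2 * n)) (boxIndicator a b))) :=
    DFunLike.congr_fun ((commute_exchangeOp_convOp S).mul_left
      ((commute_convOp V S).pow_left (2 * n))).eq (boxIndicator a b)
  rw [SmoothingKernel.smoothedBox, hcomm]
  exact (norm_convOp_prob_apply_le _ _).trans
    (norm_exchangeOp_cell_boxIndicator_le hlam hV K n f hab)

lemma norm_exchangeOp_exchangeOp_cell_smoothedBox_le (n : ℕ) (f g : ι → Fin (n + 2)) (Y : ι → ℝ)
    {a b : ι → ℝ} (hab : a ≤ b) :
    ‖exchangeOp F (cell F (n + 1) f) (cell F (n + 1) 0)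
      (exchangeOp F (cell F (n + 1) g) (cell F (n + 1) 0)
        ((convOp V ^ (4 * n)) (K.smoothedBox Y a b)))‖ ≤
      K.exchangeConst ι * √3 / (lam * (n + 1) * √(lam * (n + 1))) *
        (√√(F.real (cell F (n + 1) f)) * √√(F.real (cell F (n + 1) g))) := by
  set Z := cell F (n + 1) 0
  set p := fun f : ι → Fin (n + 2) => F.real (cell F (n + 1) f)
  set L := lam * (n + 1)
  set c := K.exchangeConst ι * √3 / (L * √L) with hc
  set T := fun f : ι → Fin (n + 2) => exchangeOp F (cell F (n + 1) f) Z
  set u := (convOp V ^ (4 * n)) (K.smoothedBox Y a b)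
  have hconst := K.four_le_exchangeConst (ι := ι)
  have hZ : 1 / 2 ≤ F.real Z := half_le_measureReal_cell_zero n.succ_pos
  have hcomm : Commute (T f) (T g) :=
    commute_exchangeOp_right fun μ _ => commute_exchangeOp_convOp μ
  have hone (f g : ι → Fin (n + 2)) : ‖T f (T g u)‖ ≤ c * √(p f) :=
    calc ‖T f (T g u)‖ ≤ ‖T g ((convOp V ^ (2 * n)) (K.smoothedBox Y a b))‖ *
          √(3 * p f) / √L := norm_exchangeOp_commute_apply_le measurableSet_cell
            measurableSet_cell hZ hlam hV n _ (commute_exchangeOp_convOp V)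
      _ ≤ K.exchangeConst ι / L * √(3 * p f) / √L := by
          gcongr
          exact norm_exchangeOp_cell_smoothedBox_le hlam hV K n g Y hab
      _ = c * √(p f) := by
          rw [Real.sqrt_mul zero_le_three, hc]
          field_simp
  have hmin : ‖T f (T g u)‖ ≤ c * min √(p f) √(p g) := by
    rw [mul_min_of_nonneg _ _ (by positivity)]
    refine le_min (hone f g) ?_
    rw [show T f (T g u) = T g (T f u) from DFunLike.congr_fun hcomm.eq u]
    exact hone g f
  refine hmin.trans ?_
  gcongr
  rw [← Real.sqrt_mul (Real.sqrt_nonneg _)]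
  refine Real.le_sqrt_of_sq_le ?_
  rw [sq]
  gcongr
  exacts [min_le_left _ _, min_le_right _ _]

lemma norm_coreOp_cell_smoothedBox_le (n : ℕ) {a b : ι → ℝ} (hab : a ≤ b) :
    ‖coreOp F (cell F (n + 1) 0) ((convOp V ^ (2 * n))
      (K.smoothedBox (cellScale F (0 : ι → Fin (n + 2))) a b))‖ ≤
      8 * Fintype.card ι ^ 2 * (1 + 2 * K.bound) ^ Fintype.card ι / (lam * (n + 1)) := by
  classical
  rw [SmoothingKernel.smoothedBox, ← K.boxJet_zero]
  exact norm_coreOp_jet_le hlam hV (half_le_measureReal_cell_zero n.succ_pos)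
    (isSymmWithin_cell fun _ => n.succ_pos)
    (K.boxJet_mem_jets hab (smul_nonneg smoothingRatio_nonneg cellScale_nonneg))
    (K.norm_boxJet_le a b _) n 0

lemma norm_coreOp_coreOp_cell_smoothedBox_le (n : ℕ) {a b : ι → ℝ} (hab : a ≤ b) :
    ‖coreOp F (cell F (n + 1) 0) (coreOp F (cell F (n + 1) 0) ((convOp V ^ (4 * n))
      (K.smoothedBox (cellScale F (0 : ι → Fin (n + 2))) a b)))‖ ≤
      8 * Fintype.card ι ^ 2 * (8 * Fintype.card ι ^ 2 * (1 + 2 * K.bound) ^ Fintype.card ι /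
        (lam * (n + 1))) / (lam * (n + 1)) := by
  classical
  rw [SmoothingKernel.smoothedBox, ← K.boxJet_zero]
  exact norm_coreOp_coreOp_jet_le hlam hV (half_le_measureReal_cell_zero n.succ_pos)
    (isSymmWithin_cell fun _ => n.succ_pos)
    (K.boxJet_mem_jets hab (smul_nonneg smoothingRatio_nonneg cellScale_nonneg))
    (K.norm_boxJet_le a b _) n 0

lemma norm_exchangeOp_coreOp_cell_smoothedBox_le (n : ℕ) (f : ι → Fin (n + 2)) {a b : ι → ℝ}
    (hab : a ≤ b) :
    ‖exchangeOp F (cell F (n + 1) f) (cell F (n + 1) 0) (coreOp F (cell F (n + 1) 0)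
      ((convOp V ^ (4 * n)) (K.smoothedBox (cellScale F (0 : ι → Fin (n + 2))) a b)))‖ ≤
      8 * Fintype.card ι ^ 2 * (1 + 2 * K.bound) ^ Fintype.card ι * √3 /
        (lam * (n + 1) * √(lam * (n + 1))) * √√(F.real (cell F (n + 1) f)) := by
  set φ := K.smoothedBox (cellScale F (0 : ι → Fin (n + 2))) a b
  set p := F.real (cell F (n + 1) f)
  set L := lam * (n + 1)
  have hM : 0 ≤ (1 + 2 * K.bound) ^ Fintype.card ι := pow_nonneg (by linarith [K.bound_nonneg]) _
  calc _ ≤ ‖coreOp F (cell F (n + 1) 0) ((convOp V ^ (2 * n)) φ)‖ * √(3 * p) / √L :=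
        norm_exchangeOp_commute_apply_le measurableSet_cell measurableSet_cell
          (half_le_measureReal_cell_zero n.succ_pos) hlam hV n _ (commute_coreOp_convOp V)
    _ ≤ 8 * Fintype.card ι ^ 2 * (1 + 2 * K.bound) ^ Fintype.card ι / L * (√3 * √√p) / √L := by
        rw [Real.sqrt_mul zero_le_three]
        gcongr
        · exact norm_coreOp_cell_smoothedBox_le hlam hV K n hab
        · exact Real.le_sqrt_of_sq_le (pow_le_of_le_one measureReal_nonneg measureReal_le_one
            two_ne_zero)
    _ = _ := by field_simp

lemma norm_convOp_sub_one_sq_smoothedBox_le (n : ℕ) {a b : ι → ℝ} (hab : a ≤ b) :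
    ‖(convOp F - 1) ((convOp F - 1) ((convOp V ^ (4 * n))
      (K.smoothedBox (cellScale F (0 : ι → Fin (n + 2))) a b)))‖ ≤
      K.secondDiffConst ι lam / (lam * (n + 1) * √(lam * (n + 1))) := by
  classical
  have hM : 0 ≤ (1 + 2 * K.bound) ^ Fintype.card ι := pow_nonneg (by linarith [K.bound_nonneg]) _
  have hconst := K.four_le_exchangeConst (ι := ι)
  rw [convOp_sub_one_eq_coreOp_add_sum (fun f => measurableSet_cell) pairwise_disjoint_cell
    iUnion_cell (cell F (n + 1) 0)]
  refine (norm_add_sum_apply_add_sum_apply_le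
    (fun f => commute_exchangeOp_right fun μ _ => commute_coreOp_convOp μ)
    (norm_coreOp_coreOp_cell_smoothedBox_le hlam hV K n hab)
    (fun f => norm_exchangeOp_coreOp_cell_smoothedBox_le hlam hV K n f hab)
    (fun f g => norm_exchangeOp_exchangeOp_cell_smoothedBox_le hlam hV K n f g _ hab)
    (by positivity) (by positivity) (fun f => Real.sqrt_nonneg _)
    (sum_sqrt_sqrt_le (fun f => measureReal_nonneg) fun f l => measureReal_cell_le l)).trans ?_
  set L := lam * (n + 1)
  set M := (1 + 2 * K.bound) ^ Fintype.card ι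
  have hL : 0 < L := by positivity
  have hsqrtL : √lam ≤ √L := Real.sqrt_le_sqrt (le_mul_of_one_le_right hlam.le (by simp))
  have hLL : √lam * (L * √L) ≤ L * L :=
    calc √lam * (L * √L) ≤ √L * (L * √L) := by gcongr
      _ = L * (√L * √L) := by ring
      _ = L * L := by rw [Real.mul_self_sqrt hL.le]
  have hfirst : 8 * Fintype.card ι ^ 2 * (8 * Fintype.card ι ^ 2 * M / L) / L ≤
      64 * Fintype.card ι ^ 4 * M / √lam / (L * √L) :=
    calc _ = 64 * Fintype.card ι ^ 4 * M / (L * L) := by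
          field_simp
          ring
      _ ≤ 64 * Fintype.card ι ^ 4 * M / (√lam * (L * √L)) := by gcongr
      _ = _ := (div_div _ _ _).symm
  refine (add_le_add_left (add_le_add_left hfirst _) _).trans_eq ?_
  rw [SmoothingKernel.secondDiffConst]
  ring

end

/-! ### Compound Poisson laws -/

section
variable {E : Type*} [NormedAddCommGroup E] [NormedSpace ℝ E]

lemma norm_pow_apply_le (A : E →L[ℝ] E) (k : ℕ) (f : E) : ‖(A ^ k) f‖ ≤ ‖A‖ ^ k * ‖f‖ := by
  rcases k.eq_zero_or_pos with rfl | hk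
  · simp
  · exact ((A ^ k).le_opNorm f).trans (by gcongr; exact norm_pow_le' A hk)

variable [CompleteSpace E]

lemma hasSum_exp_apply (A : E →L[ℝ] E) (f : E) :
    HasSum (fun k : ℕ => (k.factorial : ℝ)⁻¹ • (A ^ k) f) (NormedSpace.exp A f) := by
  have hexp := NormedSpace.exp_series_hasSum_exp' (𝕂 := ℝ) A
  simpa using hexp.mapL (ContinuousLinearMap.apply ℝ E f)

lemma norm_exp_apply_sub_sub_le (A : E →L[ℝ] E) (f : E) :
    ‖NormedSpace.exp A f - f - A f‖ ≤ Real.exp ‖A‖ * ‖A (A f)‖ := by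
  have hremainder : HasSum (fun k : ℕ => ((k + 2).factorial : ℝ)⁻¹ • (A ^ k) (A (A f)))
      (NormedSpace.exp A f - f - A f) := by
    have htail := (hasSum_nat_add_iff' 2).2 (hasSum_exp_apply A f)
    simpa [Finset.sum_range_succ, sub_sub, pow_succ] using htail
  have hbound : HasSum (fun k : ℕ => ‖A‖ ^ k / k.factorial * ‖A (A f)‖)
      (Real.exp ‖A‖ * ‖A (A f)‖) := by
    rw [Real.exp_eq_exp_ℝ]
    exact (NormedSpace.expSeries_div_hasSum_exp ‖A‖).mul_right _
  rw [← hremainder.tsum_eq]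
  refine tsum_of_norm_bounded hbound fun k => ?_
  rw [norm_smul, norm_inv, Real.norm_natCast, div_mul_eq_mul_div, inv_mul_eq_div]
  gcongr
  · exact norm_pow_apply_le A k _
  · omega

lemma exp_smul_sub_one (a : ℝ) (T : E →L[ℝ] E) :
    NormedSpace.exp (a • (T - 1)) = Real.exp (-a) • NormedSpace.exp (a • T) := by
  let _ : NormedAlgebra ℚ (E →L[ℝ] E) := NormedAlgebra.restrictScalars ℚ ℝ _
  have hsplit : a • (T - 1) = algebraMap ℝ (E →L[ℝ] E) (-a) + a • T := by
    rw [Algebra.algebraMap_eq_smul_one]; module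
  rw [hsplit, NormedSpace.exp_add_of_commute (Algebra.commute_algebraMap_left _ _),
    ← NormedSpace.algebraMap_exp_comm, ← Real.exp_eq_exp_ℝ, Algebra.algebraMap_eq_smul_one,
    smul_one_mul]

end

section
variable {α : Type*} [MeasurableSpace α]

instance : CompleteSpace (BddMeas α) := by
  have hclosed : IsClosed (bddMeasSubmodule α : Set (lp (fun _ : α => ℝ) ∞)) := by
    refine IsSeqClosed.isClosed fun f g hf hfg => ?_
    exact measurable_of_tendsto_metrizable hf
      ((lp.uniformContinuous_coe.continuous.tendsto g).comp hfg)
  exact hclosed.completeSpace_coe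

lemma map_cpois {β : Type*} [MeasurableSpace β] [AddCommMonoid α] [AddCommMonoid β]
    [MeasurableAdd₂ α] [MeasurableAdd₂ β] (L : α →+ β) (hL : Measurable L) (a : ℝ) (μ : Measure α)
    [IsProbabilityMeasure μ] : (cpois a μ).map L = cpois a (μ.map L) := by
  simp only [cpois, Measure.map_sum hL.aemeasurable, Measure.map_smul, map_convPow L hL]

variable [AddCommMonoid α] [MeasurableAdd₂ α]

lemma isProbabilityMeasure_cpois {a : ℝ} (ha : 0 ≤ a) (μ : Measure α) [IsProbabilityMeasure μ] :
    IsProbabilityMeasure (cpois a μ) := by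
  have hweights := ProbabilityTheory.hasSum_one_poissonMeasure ⟨a, ha⟩
  constructor
  rw [cpois, Measure.sum_apply _ .univ]
  simp only [Measure.smul_apply, measure_univ, smul_eq_mul, mul_one]
  rw [← ENNReal.ofReal_tsum_of_nonneg (fun k => by positivity)]
  · exact (congrArg ENNReal.ofReal hweights.tsum_eq).trans ENNReal.ofReal_one
  · exact hweights.summable

instance (n : ℕ) (μ : Measure α) [IsProbabilityMeasure μ] : IsProbabilityMeasure (cpois n μ) :=
  isProbabilityMeasure_cpois n.cast_nonneg μ

instance (μ : Measure α) [IsProbabilityMeasure μ] : IsProbabilityMeasure (cpois 1 μ) :=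
  isProbabilityMeasure_cpois zero_le_one μ

lemma exp_neg_one_smul_le_cpois_one (μ : Measure α) [SFinite μ] :
    ENNReal.ofReal (Real.exp (-1)) • μ ≤ cpois 1 μ := by
  have hpow : convPow μ 1 = μ := Measure.dirac_zero_conv μ
  have hterm := Measure.le_sum (fun k : ℕ =>
    ENNReal.ofReal (Real.exp (-1) * 1 ^ k / k.factorial) • convPow μ k) 1
  simpa [hpow, cpois] using hterm

lemma convOp_cpois {a : ℝ} (ha : 0 ≤ a) (μ : Measure α) [IsProbabilityMeasure μ]
    [IsFiniteMeasure (cpois a μ)] :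
    convOp (cpois a μ) = NormedSpace.exp (a • (convOp μ - 1)) := by
  ext f x
  have hpoisson := hasSum_integral_measure (f.integrable_comp (cpois a μ) (measurable_const_add x))
  have hexp : HasSum (fun k : ℕ => Real.exp (-a) * ((k.factorial : ℝ)⁻¹ * ((a • convOp μ) ^ k) f x))
      (Real.exp (-a) * NormedSpace.exp (a • convOp μ) f x) :=
    ((BddMeas.evalCLM x).hasSum (hasSum_exp_apply (a • convOp μ) f)).mul_left (Real.exp (-a))
  rw [exp_smul_sub_one]
  refine hpoisson.unique (hexp.congr_fun fun k => ?_)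
  rw [integral_smul_measure, ENNReal.toReal_ofReal (by positivity), ← convOp_pow_apply, smul_pow]
  change _ * (convOp μ ^ k) f x = _ * (_ * (a ^ k * (convOp μ ^ k) f x))
  ring

lemma convOp_cpois_natCast (n : ℕ) (μ : Measure α) [IsProbabilityMeasure μ] :
    convOp (cpois n μ) = convOp (cpois 1 μ) ^ n := by
  let _ : NormedAlgebra ℚ (BddMeas α →L[ℝ] BddMeas α) := NormedAlgebra.restrictScalars ℚ ℝ _
  rw [convOp_cpois n.cast_nonneg, convOp_cpois zero_le_one, one_smul, Nat.cast_smul_eq_nsmul,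
    NormedSpace.exp_nsmul]

lemma norm_convOp_le_one (μ : Measure α) [IsProbabilityMeasure μ] : ‖convOp μ‖ ≤ 1 :=
  (convOp μ).opNorm_le_bound zero_le_one fun f =>
    (norm_convOp_prob_apply_le μ f).trans_eq (one_mul _).symm

lemma norm_convOp_sub_convOp_cpois_one_apply_le (μ : Measure α) [IsProbabilityMeasure μ]
    (f : BddMeas α) :
    ‖(convOp μ - convOp (cpois 1 μ)) f‖ ≤
      Real.exp 2 * ‖(convOp μ - 1) ((convOp μ - 1) f)‖ := by
  have hexp : convOp (cpois 1 μ) = NormedSpace.exp (convOp μ - 1) := by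
    rw [convOp_cpois zero_le_one, one_smul]
  have hnorm : ‖convOp μ - 1‖ ≤ 2 := calc
    _ ≤ ‖convOp μ‖ + ‖(1 : BddMeas α →L[ℝ] BddMeas α)‖ := norm_sub_le _ _
    _ ≤ 1 + 1 := add_le_add (norm_convOp_le_one μ) ContinuousLinearMap.norm_id_le
    _ = 2 := one_add_one_eq_two
  calc _ = ‖NormedSpace.exp (convOp μ - 1) f - f - (convOp μ - 1) f‖ := by
        rw [hexp, ← norm_neg]
        congr 1
        change -(convOp μ f - _) = _ - f - (convOp μ f - f)
        abel
    _ ≤ Real.exp ‖convOp μ - 1‖ * ‖(convOp μ - 1) ((convOp μ - 1) f)‖ :=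
      norm_exp_apply_sub_sub_le _ f
    _ ≤ _ := by gcongr

end

/-! ### Comparison on boxes -/

lemma norm_pow_apply_sub_pow_apply_le {E : Type*} [NormedAddCommGroup E] [NormedSpace ℝ E]
    {P Q : E →L[ℝ] E} (hPQ : Commute P Q) (f : E) {n : ℕ} {c : ℝ}
    (h : ∀ i j, i + j + 1 = n → ‖(P ^ i) ((Q ^ j) ((P - Q) f))‖ ≤ c) :
    ‖(P ^ n) f - (Q ^ n) f‖ ≤ n * c := by
  have htelescope : (P ^ n) f - (Q ^ n) f =
      ∑ i ∈ Finset.range n, (P ^ i) ((Q ^ (n - 1 - i)) ((P - Q) f)) := by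
    have := DFunLike.congr_fun (hPQ.geom_sum₂_mul n) f
    simpa [sum_apply] using this.symm
  rw [htelescope]
  refine (norm_sum_le_of_le _ fun i hi => h i (n - 1 - i) ?_).trans_eq (by simp)
  have := Finset.mem_range.1 hi
  omega

lemma ofReal_smul_le_self {α : Type*} [MeasurableSpace α] (μ : Measure α) {c : ℝ} (hc : c ≤ 1) :
    ENNReal.ofReal c • μ ≤ μ :=
  Measure.le_iff.2 fun _ _ => mul_le_of_le_one_left zero_le (ENNReal.ofReal_le_one.2 hc)

lemma norm_convOp_pow_convOp_pow_apply_le {α : Type*} [MeasurableSpace α] [AddCommMonoid α]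
    [MeasurableAdd₂ α] (μ ν : Measure α) [IsProbabilityMeasure μ] [IsProbabilityMeasure ν]
    {i k : ℕ} (hki : k ≤ i) (j : ℕ) (f : BddMeas α) :
    ‖(convOp μ ^ i) ((convOp ν ^ j) f)‖ ≤ ‖(convOp μ ^ k) f‖ := by
  obtain ⟨l, rfl⟩ := Nat.exists_eq_add_of_le' hki
  have hcomm := DFunLike.congr_fun ((commute_convOp μ ν).pow_pow k j).eq f
  simp only [mul_apply_eq_comp] at hcomm
  rw [pow_add, mul_apply_eq_comp, hcomm]
  exact (norm_convOp_pow_apply_le μ l _).trans (norm_convOp_pow_apply_le ν j _)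

lemma mul_div_mul_sqrt_le {lam S : ℝ} (hlam : 0 < lam) (hS : 0 ≤ S) {r n : ℕ} (hn : 0 < n)
    (hr : n ≤ 8 * (r + 1)) :
    n * (S / (lam * (r + 1) * √(lam * (r + 1)))) ≤ S * (8 / lam * √(8 / lam)) / √n := by
  have hrn : (n : ℝ) / 8 ≤ r + 1 := by
    rw [div_le_iff₀' (by norm_num)]
    exact_mod_cast hr
  calc n * (S / (lam * (r + 1) * √(lam * (r + 1))))
      ≤ n * (S / (lam * (n / 8) * √(lam * (n / 8)))) := by gcongr
    _ = _ := by
      rw [Real.sqrt_div (by norm_num), Real.sqrt_mul hlam.le, Real.sqrt_div n.cast_nonneg]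
      field_simp

section
variable {ι : Type*} [Fintype ι]

lemma convOp_boxIndicator_apply_zero (μ : Measure (ι → ℝ)) [IsFiniteMeasure μ] (a b : ι → ℝ) :
    convOp μ (boxIndicator a b) 0 = μ.real (Set.Icc a b) := by
  rw [convOp_apply, ← integral_indicator_one measurableSet_Icc]
  simp only [zero_add]
  rfl

variable [Nonempty ι] {F : Measure (ι → ℝ)} [IsProbabilityMeasure F]
  [F.IsNegInvariant] {lam : ℝ} (hlam : 0 < lam) (K : SmoothingKernel)
include hlam

lemma norm_convOp_pow_boxIndicator_sub_smoothedBox_le {V : Measure (ι → ℝ)}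
    [IsProbabilityMeasure V] (hV : ENNReal.ofReal lam • F ≤ V) {N : ℕ} (hN : 0 < N) {n : ℕ}
    (hn : 0 < n) (a b : ι → ℝ) :
    ‖(convOp V ^ n) (boxIndicator a b - K.smoothedBox (cellScale F (0 : ι → Fin (N + 1))) a b)‖ ≤
      Fintype.card ι * (4 * (smoothingRatio ι * ∫ r, |r| ∂K.law + 2)) *
        √(8 * Fintype.card ι / lam) / √n := by
  set c := Fintype.card ι * (4 * (smoothingRatio ι * ∫ r, |r| ∂K.law + 2))
  set q := F.real (cell F N (0 : ι → Fin (N + 1))) / (4 * Fintype.card ι)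
  have : (0 : ℝ) < Fintype.card ι := Nat.cast_pos.2 Fintype.card_pos
  have hc0 : 0 ≤ c := by
    have : 0 ≤ ∫ r, |r| ∂K.law := integral_nonneg fun r => abs_nonneg r
    have := smoothingRatio_nonneg (ι := ι)
    positivity
  have hq : 1 / (8 * Fintype.card ι) ≤ q := by
    rw [div_le_div_iff₀ (by positivity) (by positivity)]
    linear_combination 8 * Fintype.card ι * half_le_measureReal_cell_zero (F := F) (ι := ι) hN
  have hq0 : 0 < q := lt_of_lt_of_le (by positivity) hq
  calc _ ≤ c / √(lam * q * (n + 1)) :=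
        norm_convOp_pow_boxIndicator_sub_le hlam hV hq0 smoothingRatio_nonneg
          isTailScale_cellScale K.integrable_abs_law n a b
    _ ≤ c / √(lam * (1 / (8 * Fintype.card ι)) * n) := by
        gcongr
        linarith
    _ = _ := by
        rw [Real.sqrt_mul (by positivity), Real.sqrt_div (by positivity), mul_one_div,
          Real.sqrt_div hlam.le]
        field_simp

lemma norm_convOp_pow_sub_convOp_cpois_one_smoothedBox_le {V : Measure (ι → ℝ)}
    [IsProbabilityMeasure V] (hV : ENNReal.ofReal lam • F ≤ V) (r : ℕ) {a b : ι → ℝ}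
    (hab : a ≤ b) :
    ‖(convOp V ^ (4 * r)) ((convOp F - convOp (cpois 1 F))
      (K.smoothedBox (cellScale F (0 : ι → Fin (r + 2))) a b))‖ ≤
      Real.exp 2 * (K.secondDiffConst ι lam / (lam * (r + 1) * √(lam * (r + 1)))) := by
  have hcomm : Commute (convOp V ^ (4 * r)) (convOp F - convOp (cpois 1 F)) :=
    ((commute_convOp V F).sub_right (commute_convOp V _)).pow_left _
  rw [← mul_apply_eq_comp, hcomm.eq, mul_apply_eq_comp]
  refine (norm_convOp_sub_convOp_cpois_one_apply_le F _).trans ?_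
  gcongr
  exact norm_convOp_sub_one_sq_smoothedBox_le hlam hV K r hab

end

section
variable {ι : Type*} [Fintype ι] [Nonempty ι] {F : Measure (ι → ℝ)}
  [IsProbabilityMeasure F] [F.IsNegInvariant] (K : SmoothingKernel)

lemma norm_convOp_pow_sub_convOp_cpois_smoothedBox_le {r n : ℕ} (hr : 8 * r < n) {a b : ι → ℝ}
    (hab : a ≤ b) :
    ‖(convOp F ^ n - convOp (cpois n F)) (K.smoothedBox (cellScale F (0 : ι → Fin (r + 2))) a b)‖ ≤
      n * (Real.exp 2 * (K.secondDiffConst ι (Real.exp (-1)) /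
        (Real.exp (-1) * (r + 1) * √(Real.exp (-1) * (r + 1))))) := by
  rw [convOp_cpois_natCast]
  refine norm_pow_apply_sub_pow_apply_le (commute_convOp F _) _ fun i j hij => ?_
  -- One of the two exponents is at least `4 * r`.
  rcases le_or_gt (4 * r) i with hi | hi
  · exact (norm_convOp_pow_convOp_pow_apply_le F _ hi j _).trans
      (norm_convOp_pow_sub_convOp_cpois_one_smoothedBox_le (Real.exp_pos _) K
        (ofReal_smul_le_self F (by simp)) r hab)
  · have hcomm := DFunLike.congr_fun ((commute_convOp F (cpois 1 F)).pow_pow i j).eq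
      ((convOp F - convOp (cpois 1 F)) (K.smoothedBox (cellScale F (0 : ι → Fin (r + 2))) a b))
    simp only [mul_apply_eq_comp] at hcomm
    rw [hcomm]
    exact (norm_convOp_pow_convOp_pow_apply_le _ F (by omega) i _).trans
      (norm_convOp_pow_sub_convOp_cpois_one_smoothedBox_le (Real.exp_pos _) K
        (exp_neg_one_smul_le_cpois_one F) r hab)

/-- The constant in the comparison of `convPow F n` with `cpois n F` on boxes. -/
def SmoothingKernel.boxConst (K : SmoothingKernel) (ι : Type*) [Fintype ι] : ℝ :=
  2 * (Fintype.card ι * (4 * (smoothingRatio ι * ∫ r, |r| ∂K.law + 2)) *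
      √(8 * Fintype.card ι / Real.exp (-1))) +
    Real.exp 2 * K.secondDiffConst ι (Real.exp (-1)) *
      (8 / Real.exp (-1) * √(8 / Real.exp (-1)))

lemma abs_convPow_sub_cpois_Icc_le_boxConst (F : Measure (ι → ℝ)) [IsProbabilityMeasure F]
    [F.IsNegInvariant] {n : ℕ} (hn : 0 < n) {a b : ι → ℝ} (hab : a ≤ b) :
    |(convPow F n).real (Set.Icc a b) - (cpois n F).real (Set.Icc a b)| ≤ K.boxConst ι / √n := by
  set r := (n - 1) / 8
  set E := cpois 1 F
  set f := boxIndicator a b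
  set φ := K.smoothedBox (cellScale F (0 : ι → Fin (r + 2))) a b
  have hF := norm_convOp_pow_boxIndicator_sub_smoothedBox_le (Real.exp_pos (-1)) K
    (ofReal_smul_le_self F (by simp)) r.succ_pos hn a b
  have hcp := norm_convOp_pow_boxIndicator_sub_smoothedBox_le (Real.exp_pos (-1)) K
    (exp_neg_one_smul_le_cpois_one F) r.succ_pos hn a b
  have hφ : ‖(convOp F ^ n - convOp (cpois n F)) φ‖ ≤ Real.exp 2 *
      K.secondDiffConst ι (Real.exp (-1)) * (8 / Real.exp (-1) * √(8 / Real.exp (-1))) / √n := by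
    refine (norm_convOp_pow_sub_convOp_cpois_smoothedBox_le K (by omega) hab).trans ?_
    rw [← mul_div_assoc]
    exact mul_div_mul_sqrt_le (Real.exp_pos _)
      (mul_nonneg (Real.exp_pos _).le (K.secondDiffConst_nonneg _)) hn (by omega)
  have hdecomp : (convOp F ^ n) f - (convOp E ^ n) f = (convOp F ^ n) (f - φ) -
      (convOp E ^ n) (f - φ) + (convOp F ^ n - convOp (cpois n F)) φ := by
    rw [convOp_cpois_natCast, map_sub, map_sub, sub_apply]
    abel
  have heval : (convPow F n).real (Set.Icc a b) - (cpois n F).real (Set.Icc a b) =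
      ((convOp F ^ n) f - (convOp E ^ n) f) 0 := by
    rw [← convOp_boxIndicator_apply_zero, ← convOp_boxIndicator_apply_zero, convOp_convPow,
      convOp_cpois_natCast]
    rfl
  rw [heval, hdecomp]
  refine BddMeas.abs_apply_le (((norm_add_le _ _).trans
    (add_le_add ((norm_sub_le _ _).trans (add_le_add hF hcp)) hφ)).trans_eq ?_) 0
  rw [SmoothingKernel.boxConst]
  ring

end

theorem exists_abs_convPow_sub_cpois_Icc_le (ι : Type*) [Finite ι] :
    ∃ C : ℝ, ∀ (F : Measure (ι → ℝ)) [IsProbabilityMeasure F] [F.IsNegInvariant] (n : ℕ),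
      0 < n → ∀ a b : ι → ℝ,
        |(convPow F n).real (Set.Icc a b) - (cpois n F).real (Set.Icc a b)| ≤ C / √n := by
  have := Fintype.ofFinite ι
  refine ⟨|sincKernel.boxConst ι|, fun F _ _ n hn a b => ?_⟩
  have hbound : 0 ≤ |sincKernel.boxConst ι| / √n := by positivity
  by_cases hab : a ≤ b
  · cases isEmpty_or_nonempty ι
    · rw [(Set.nonempty_Icc.2 hab).eq_univ]
      simpa using hbound
    · refine (abs_convPow_sub_cpois_Icc_le_boxConst sincKernel F hn hab).trans ?_
      gcongr
      exact le_abs_self _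
  · simpa [Set.Icc_eq_empty hab] using hbound

/-! ### From boxes to polyhedra -/

lemma exists_preimage_coe_Icc_inter_Icc_eq (a b : EReal) (c d : ℝ) :
    ∃ a' b' : ℝ, (fun x : ℝ => (x : EReal)) ⁻¹' Set.Icc a b ∩ Set.Icc c d = Set.Icc a' b' := by
  rcases ((fun x : ℝ => (x : EReal)) ⁻¹' Set.Icc a b ∩ Set.Icc c d).eq_empty_or_nonempty with h | h
  · exact ⟨1, 0, by rw [h, Set.Icc_eq_empty (by norm_num)]⟩
  · have hconn : Set.OrdConnected ((fun x : ℝ => (x : EReal)) ⁻¹' Set.Icc a b ∩ Set.Icc c d) :=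
      (Set.ordConnected_Icc.preimage_mono EReal.coe_strictMono.monotone).inter Set.ordConnected_Icc
    have hcomp := isCompact_Icc (a := c) (b := d) |>.inter_left
      ((isClosed_Icc (a := a) (b := b)).preimage continuous_coe_real_ereal)
    exact ⟨_, _, eq_Icc_of_connected_compact ⟨h, hconn.isPreconnected⟩ hcomp⟩

/-- A box whose sides may be unbounded or empty. -/
def extendedBox {ι : Type*} (a b : ι → EReal) : Set (ι → ℝ) :=
  {y | ∀ j, a j ≤ (y j : EReal) ∧ (y j : EReal) ≤ b j}

lemma measurableSet_extendedBox {ι : Type*} [Countable ι] (a b : ι → EReal) :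
    MeasurableSet (extendedBox a b) := by
  rw [extendedBox, Set.ofPred_forall]
  exact .iInter fun j => measurableSet_Icc.preimage
    (measurable_coe_real_ereal.comp (measurable_pi_apply j))

lemma exists_extendedBox_inter_Icc_eq {ι : Type*} (a b : ι → EReal) (c d : ι → ℝ) :
    ∃ a' b' : ι → ℝ, extendedBox a b ∩ Set.Icc c d = Set.Icc a' b' := by
  choose a' b' h using fun j => exists_preimage_coe_Icc_inter_Icc_eq (a j) (b j) (c j) (d j)
  refine ⟨a', b', ?_⟩
  simp only [← Set.pi_univ_Icc, ← h]
  ext y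
  simp only [extendedBox, Set.mem_inter_iff, Set.mem_ofPred_eq, Set.mem_pi, Set.mem_univ,
    true_implies, Set.mem_preimage, Set.mem_Icc, forall_and]

lemma tendsto_measureReal_inter_Icc {ι : Type*} [Finite ι] (μ : Measure (ι → ℝ))
    [IsFiniteMeasure μ] (S : Set (ι → ℝ)) :
    Filter.Tendsto (fun N : ℕ => μ.real (S ∩ Set.Icc (fun _ => -(N : ℝ)) fun _ => (N : ℝ)))
      Filter.atTop (nhds (μ.real S)) := by
  have hmono : Monotone fun N : ℕ => S ∩ Set.Icc (fun _ : ι => -(N : ℝ)) fun _ => (N : ℝ) :=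
    fun N N' h => Set.inter_subset_inter_right S (Set.Icc_subset_Icc
      (fun _ => neg_le_neg (Nat.cast_le.2 h)) fun _ => Nat.cast_le.2 h)
  have hcover : ⋃ N : ℕ, Set.Icc (fun _ : ι => -(N : ℝ)) (fun _ => (N : ℝ)) = Set.univ := by
    refine Set.eq_univ_of_forall fun y => Set.mem_iUnion.2 ?_
    obtain ⟨M, hM⟩ := (Set.finite_range fun j => |y j|).bddAbove
    obtain ⟨N, hN⟩ := exists_nat_ge M
    have hyN (j : ι) : |y j| ≤ N := (hM (Set.mem_range_self j)).trans hN
    exact ⟨N, fun j => (abs_le.1 (hyN j)).1, fun j => (abs_le.1 (hyN j)).2⟩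
  have hlim := tendsto_measure_iUnion_atTop (μ := μ) hmono
  rw [← Set.inter_iUnion, hcover, Set.inter_univ] at hlim
  exact (ENNReal.tendsto_toReal (measure_ne_top μ S)).comp hlim

lemma abs_measureReal_extendedBox_sub_le {ι : Type*} [Finite ι] {μ ν : Measure (ι → ℝ)}
    [IsFiniteMeasure μ] [IsFiniteMeasure ν] {ε : ℝ}
    (h : ∀ a b : ι → ℝ, |μ.real (Set.Icc a b) - ν.real (Set.Icc a b)| ≤ ε) (a b : ι → EReal) :
    |μ.real (extendedBox a b) - ν.real (extendedBox a b)| ≤ ε := by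
  refine le_of_tendsto ((tendsto_measureReal_inter_Icc μ (extendedBox a b)).sub
    (tendsto_measureReal_inter_Icc ν (extendedBox a b))).abs (.of_forall fun N => ?_)
  obtain ⟨a', b', hbox⟩ := exists_extendedBox_inter_Icc_eq a b (fun _ => -(N : ℝ)) fun _ => (N : ℝ)
  rw [hbox]
  exact h a' b'

section
variable {E : Type*} [NormedAddCommGroup E] [InnerProductSpace ℝ E]

/-- The map whose `j`-th coordinate is the inner product with `t j`. -/
def innerPi {ι : Type*} (t : ι → E) : E →L[ℝ] ι → ℝ :=
  ContinuousLinearMap.pi fun j => innerSL ℝ (t j)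

lemma preimage_innerPi_extendedBox {ι : Type*} (t : ι → E) (a b : ι → EReal) :
    innerPi t ⁻¹' extendedBox a b =
      {x | ∀ j, a j ≤ ((⟪x, t j⟫ : ℝ) : EReal) ∧ ((⟪x, t j⟫ : ℝ) : EReal) ≤ b j} := by
  refine Set.ext fun x => forall_congr' fun j => ?_
  rw [real_inner_comm]
  rfl

end

lemma IsSymmMeasure.isNegInvariant {d : ℕ} {F : Measure (Euc d)} (hF : IsSymmMeasure F) :
    F.IsNegInvariant :=
  ⟨hF⟩

lemma rhoPoly_le {d m : ℕ} {G H : Measure (Euc d)} {ε : ℝ} (hε : 0 ≤ ε)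
    (h : ∀ (t : Fin m → Euc d) (a b : Fin m → EReal),
      |G.real (innerPi t ⁻¹' extendedBox a b) - H.real (innerPi t ⁻¹' extendedBox a b)| ≤ ε) :
    rhoPoly m G H ≤ ε := by
  refine Real.iSup_le (fun X => Real.iSup_le ?_ hε) hε
  rintro ⟨t, a, b, rfl⟩
  simpa only [preimage_innerPi_extendedBox, measureReal_def] using h t a b

theorem stmt9_general (ι : Type*) [Finite ι] :
    ∃ C : ℝ, 0 < C ∧ ∀ {α : Type*} [MeasurableSpace α] [AddCommGroup α] [MeasurableAdd₂ α]
      [MeasurableNeg α] (F : Measure α) [IsProbabilityMeasure F] [F.IsNegInvariant] (n : ℕ), 0 < n →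
      ∀ L : α →+ (ι → ℝ), Measurable L → ∀ a b : ι → EReal,
        |(convPow F n).real (L ⁻¹' extendedBox a b) - (cpois n F).real (L ⁻¹' extendedBox a b)| ≤
          C / √n := by
  obtain ⟨C, hC⟩ := exists_abs_convPow_sub_cpois_Icc_le ι
  refine ⟨max C 1, lt_max_of_lt_right one_pos, fun F _ _ n hn L hL a b => ?_⟩
  -- Convolution powers commute with homomorphisms, so the bound does not see the group `α`.
  have := isNegInvariant_map F hL
  have := Measure.isProbabilityMeasure_map (μ := F) hL.aemeasurable
  rw [← map_measureReal_apply hL (measurableSet_extendedBox a b),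
    ← map_measureReal_apply hL (measurableSet_extendedBox a b), map_convPow L hL, map_cpois L hL]
  refine abs_measureReal_extendedBox_sub_le (fun c d => (hC (F.map L) n hn c d).trans ?_) a b
  gcongr
  exact le_max_left C 1

end

theorem stmt9 :
    ∃ C : ℕ → ℝ, (∀ m, 0 < C m) ∧
      ∀ (d m n : ℕ), 0 < d → 0 < m → 0 < n →
        ∀ F : Measure (Euc d), IsProbabilityMeasure F → IsSymmMeasure F →
          rhoPoly m (convPow F n) (cpois n F) ≤ C m / Real.sqrt n := by
  choose C hC h using fun m => stmt9_general (Fin m)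
  refine ⟨C, hC, fun d m n _ _ hn F _ hF => ?_⟩
  have := hF.isNegInvariant
  have hpos : 0 ≤ C m / √n := div_nonneg (hC m).le (Real.sqrt_nonneg _)
  exact rhoPoly_le hpos fun t a b =>
    h m F n hn (innerPi t : Euc d →+ (Fin m → ℝ)) (innerPi t).continuous.measurable a b
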